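/- Let Ω be an arbitrary bounded open convex set in ℝ² containing the origin in its interior, and let ε > 0. For ϑ ∈ [−π,π] let A_ϑ be the rotation of ℝ² by the angle ϑ and A_ϑΩ = {A_ϑ x : x ∈ Ω}. Then there exists a measurable function 𝒞_{ε,Ω} : [−π,π] → [0,∞] belonging to weak L², i.e. sup_{s>0} s²·meas{ϑ ∈ [−π,π] : 𝒞_{ε,Ω}(ϑ) > s} < ∞ (in particular 𝒞_{ε,Ω}(ϑ) < ∞ for almost every ϑ), such that for all ϑ, all R ≥ 2, and all h with 1 ≤ h ≤ R one has 𝒢_{A_ϑΩ}(R,h) ≤ 𝒞_{ε,Ω}(ϑ) · R^{1/2} (log R)^{1+ε}. -/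

import Mathlib

/-!
The lattice rest is analysed through its Fourier series, and the rotation averages out the
directions in which the boundary of `Ω` is flat.

*Fourier side.* The count of lattice points in `tD` is replaced by its average over translations in
a square of side `δ ≍ R^{-1/2}`; enclosing `tD` between dilates costs a dilation by `t ± η` with
`η ≍ R^{-1/2}`, hence an error `O(√R)`. Parseval's identity on the torus expands the smoothed rest
in a series over `k ≠ 0` with terms `κ_δ(k) t² ∫_D e^{-2πi t k·x} dx`. In coordinates adapted to `k`
the integral is one-dimensional: the chord length function of a planar convex set, cut at a longest
chord, is the sum of two monotone pieces, each attached to one of the two supporting lines with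
normals `±k`. Comparing a convex profile with its translate by half a period bounds the amplitude of
each piece by `1/λ` times the longest chord within depth `O(1/λ)` of the supporting line, and its
derivative in `λ` by `O(λ^{-2})`. That chord is in turn controlled by the second differences of the
support function `H` (`height`), so that the amplitude at frequency `λ = 2πt|k|` is
`O((N(arg k))^{1/2} λ^{-3/2})`, where `N` (`curvMajorant`) is essentially the maximal second
difference quotient of `H`.

*Mean squares.* Each term oscillates in `t` with frequency `ρ*(k)`, the support function at `k`.
On an interval of length one, frequencies with different integer parts are almost orthogonal, and a
unit shell of `ρ*` around `k` contains `O(|k|)` lattice points. The mean square of the smoothed rest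
is therefore at most a constant times `R ∑ |κ_δ(k)|² |k|^{-2} N(±k)`, which the decay of `κ_δ`
beyond `|k| ≍ R^{1/2}` bounds by `R (log R)^p ∑ |k|^{-2} (1 + log |k|)^{-p} N(±k)`. The last sum
(`curvSum`) no longer depends on `R` or on the length of the interval.

*Rotations.* Rotating `Ω` by `ϑ` translates the argument of `N` by `-ϑ`. Adding a quadratic term
makes `H` convex, so `N` is dominated by the Hardy–Littlewood maximal function of a finite measure
and is of weak type `L¹` in the angle. By the theorem of Stein and Weiss (`WeakL1Bound.tsum`) the
weighted sum is of weak type `L¹` as soon as `∑ w_k log (1 / w_k) < ∞`; for the weights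
`|k|^{-2} (1 + log |k|)^{-p}` this means `p > 2`. With `p = 2 + 2ε` the square root of the sum is
the required function of weak type `L²`.
-/

open MeasureTheory Set
open scoped Pointwise RealInnerProductSpace NNReal ENNReal

noncomputable section

abbrev E2 := EuclideanSpace ℝ (Fin 2)

/-- The embedding of an integer vector into the Euclidean plane. -/
def ek (k : Fin 2 → ℤ) : E2 := (WithLp.equiv 2 (Fin 2 → ℝ)).symm fun i => (k i : ℝ)

/-- Number of lattice points in a set. -/
def latticeCount (S : Set E2) : ℕ := Nat.card {k : Fin 2 → ℤ | ek k ∈ S}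

/-- The lattice rest `E_Ω(t) = card(tΩ ∩ ℤ²) − t²·area(Ω)`. -/
def latticeRest (Ω : Set E2) (t : ℝ) : ℝ :=
  (latticeCount (t • Ω) : ℝ) - t ^ 2 * (volume Ω).toReal

/-- The mean square discrepancy `𝒢_Ω(R,h) = ((1/h)∫_R^{R+h} |E_Ω(t)|² dt)^{1/2}`. -/
def meanSquare (Ω : Set E2) (R h : ℝ) : ℝ :=
  Real.sqrt ((1 / h) * ∫ t in R..(R + h), (latticeRest Ω t) ^ 2)

/-- The support function `ρ*(ξ) = sup {⟨x,ξ⟩ : x ∈ Ω}`. -/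
def suppFn (Ω : Set E2) (ξ : E2) : ℝ := sSup ((fun x => ⟪x, ξ⟫) '' Ω)

/-- `μ(θ,δ)`, the diameter of the cap `𝒞(θ,δ) = {x ∈ ∂Ω : ⟨x,θ⟩ ≥ ρ*(θ) − δ}`. -/
def capDiam (Ω : Set E2) (θ : E2) (δ : ℝ) : ℝ :=
  Metric.diam {x ∈ frontier Ω | suppFn Ω θ - δ ≤ ⟪x, θ⟫}

/-- Curvature bounded below in the generalized sense:
`sup_{θ∈S¹} sup_{δ>0} δ^{-1/2} μ(θ,δ) < ∞`. -/
def CurvBddBelow (Ω : Set E2) : Prop :=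
  ∃ K : ℝ, ∀ θ : E2, ‖θ‖ = 1 → ∀ δ : ℝ, 0 < δ → capDiam Ω θ δ ≤ K * Real.sqrt δ

/-- Rotation of the plane by the angle `ϑ`. -/
def rot (ϑ : ℝ) (x : E2) : E2 :=
  (WithLp.equiv 2 (Fin 2 → ℝ)).symm
    ![Real.cos ϑ * x 0 - Real.sin ϑ * x 1, Real.sin ϑ * x 0 + Real.cos ϑ * x 1]

/-! ### Oscillatory integrals of convex profiles -/

section HalfLine

variable {E : Type*} [NormedAddCommGroup E] {f : ℝ → E} {a h : ℝ}

lemma integrableOn_Ioi_comp_add_right (hf : IntegrableOn f (Ioi (a + h))) :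
    IntegrableOn (fun u => f (u + h)) (Ioi a) := by
  have := (measurePreserving_add_right volume h).integrableOn_comp_preimage
    (measurableEmbedding_addRight h) (f := f) (s := Ioi (a + h))
  simpa [Function.comp_def] using this.2 hf

lemma integral_Ioi_comp_add_right [NormedSpace ℝ E] :
    ∫ u in Ioi a, f (u + h) = ∫ u in Ioi (a + h), f u := by
  have := (measurePreserving_add_right volume h).setIntegral_preimage_emb
    (measurableEmbedding_addRight h) f (Ioi (a + h))
  simpa using this

lemma integral_Ioi_sub_comp_add_right [NormedSpace ℝ E] (hh : 0 ≤ h)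
    (hf : IntegrableOn f (Ioi a)) :
    ∫ u in Ioi a, (f u - f (u + h)) = ∫ u in Ioc a (a + h), f u := by
  have hah : a ≤ a + h := by linarith
  have hf' : IntegrableOn f (Ioi (a + h)) := hf.mono_set (Ioi_subset_Ioi hah)
  rw [integral_sub hf (integrableOn_Ioi_comp_add_right hf'), integral_Ioi_comp_add_right,
    ← Ioc_union_Ioi_eq_Ioi hah, setIntegral_union Ioc_disjoint_Ioi_same measurableSet_Ioi
      (hf.mono_set Ioc_subset_Ioi_self) hf', add_sub_cancel_right]

end HalfLine

lemma setIntegral_Ioc_le_mul {f : ℝ → ℝ} {a b c : ℝ} (hab : a ≤ b)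
    (hf : IntegrableOn f (Ioc a b)) (hc : ∀ u ∈ Ioc a b, f u ≤ c) :
    ∫ u in Ioc a b, f u ≤ (b - a) * c :=
  (setIntegral_mono_on (g := fun _ => c) hf (by simp) measurableSet_Ioc hc).trans_eq
    (by simp [hab])

lemma norm_le_of_norm_two_mul_le {z : ℂ} {c : ℝ} (hz : ‖2 * z‖ ≤ 2 * c) : ‖z‖ ≤ c := by
  rw [norm_mul, Complex.norm_ofNat] at hz
  linarith

/-- The oscillating factor `e^{iλu}`. -/
def osc (l u : ℝ) : ℂ := Complex.exp (Complex.I * (l * u : ℝ))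

lemma norm_osc (l u : ℝ) : ‖osc l u‖ = 1 := by
  rw [osc, mul_comm]; exact Complex.norm_exp_ofReal_mul_I _

lemma continuous_osc (l : ℝ) : Continuous (osc l) := by unfold osc; fun_prop

lemma osc_add (l u v : ℝ) : osc l (u + v) = osc l u * osc l v := by
  simp only [osc, ← Complex.exp_add]; congr 1; push_cast; ring

lemma osc_add_left (l m u : ℝ) : osc (l + m) u = osc l u * osc m u := by
  simp only [osc, ← Complex.exp_add]; congr 1; push_cast; ring

lemma osc_neg (l u : ℝ) : osc l (-u) = starRingEnd ℂ (osc l u) := by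
  simp [osc, ← Complex.exp_conj]

lemma osc_neg_left (l u : ℝ) : osc (-l) u = starRingEnd ℂ (osc l u) := by
  simp [osc, ← Complex.exp_conj]

lemma osc_half_period {l h : ℝ} (hlh : l * h = Real.pi) : osc l h = -1 := by
  rw [osc, hlh, mul_comm, Complex.exp_pi_mul_I]

lemma hasDerivAt_osc (l u : ℝ) : HasDerivAt (osc l) (Complex.I * l * osc l u) u := by
  have h : HasDerivAt (fun v : ℝ => Complex.I * ((l * v : ℝ) : ℂ)) (Complex.I * l) u := by
    simpa using (((hasDerivAt_id u).const_mul l).ofReal_comp).const_mul Complex.I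
  exact h.cexp.congr_deriv (mul_comm _ _)

lemma hasDerivAt_osc_left (l u : ℝ) :
    HasDerivAt (fun l => osc l u) (Complex.I * u * osc l u) l := by
  have hcomm : (fun l => osc l u) = osc u := by funext l; simp only [osc, mul_comm]
  rw [hcomm, osc, mul_comm l u]
  exact hasDerivAt_osc u l

lemma integrableOn_mul_osc {f : ℝ → ℝ} {s : Set ℝ} (l : ℝ) (hf : IntegrableOn f s) :
    IntegrableOn (fun u => (f u : ℂ) * osc l u) s :=
  Integrable.mul_bdd (c := 1) (Integrable.ofReal hf) (continuous_osc l).aestronglyMeasurable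
    (Filter.Eventually.of_forall fun u => (norm_osc l u).le)

lemma norm_setIntegral_mul_osc_le {f : ℝ → ℝ} {s : Set ℝ} (hs : MeasurableSet s) (l : ℝ)
    (h0 : ∀ u ∈ s, 0 ≤ f u) :
    ‖∫ u in s, (f u : ℂ) * osc l u‖ ≤ ∫ u in s, f u := by
  refine (norm_integral_le_integral_norm _).trans_eq (setIntegral_congr_fun hs fun u hu => ?_)
  simp [norm_osc, abs_of_nonneg (h0 u hu)]

lemma integral_osc {l : ℝ} (hl : l ≠ 0) (a b : ℝ) :
    ∫ u in a..b, osc l u = (osc l b - osc l a) / (Complex.I * l) := by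
  have hc : Complex.I * (l : ℂ) ≠ 0 := by simp [hl]
  have hexp : ∀ u : ℝ, osc l u = Complex.exp (Complex.I * l * u) := fun u => by
    rw [osc]; push_cast; ring_nf
  simp only [hexp, integral_exp_mul_complex hc]

section HalfPeriod

variable {f : ℝ → ℝ} {l h : ℝ}

-- Translating by the half period `h = π/λ` flips the sign of `e^{iλu}`, which trades a function
-- for its first difference.
lemma two_mul_integral_mul_osc (hh : 0 < h) (hlh : l * h = Real.pi)
    (hf : IntegrableOn f (Ioi 0)) :
    2 * ∫ u in Ioi 0, (f u : ℂ) * osc l u =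
      (∫ u in Ioc 0 h, (f u : ℂ) * osc l u) +
        ∫ u in Ioi 0, ((f u - f (u + h) : ℝ) : ℂ) * osc l u := by
  have hg := integrableOn_mul_osc l hf
  have hg' : IntegrableOn (fun u => (f (u + h) : ℂ) * osc l (u + h)) (Ioi 0) :=
    integrableOn_Ioi_comp_add_right (f := fun u => (f u : ℂ) * osc l u)
      (hg.mono_set (Ioi_subset_Ioi (by linarith)))
  have hd : IntegrableOn (fun u => (f u : ℂ) * osc l u - (f (u + h) : ℂ) * osc l (u + h))
      (Ioi 0) := hg.sub hg'
  have hshift := integral_Ioi_sub_comp_add_right hh.le hg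
  have hpt : ∀ u, ((f u - f (u + h) : ℝ) : ℂ) * osc l u =
      2 * ((f u : ℂ) * osc l u) -
        ((f u : ℂ) * osc l u - (f (u + h) : ℂ) * osc l (u + h)) := fun u => by
    rw [osc_add, osc_half_period hlh]; push_cast; ring
  rw [zero_add] at hshift
  simp only [hpt]
  rw [integral_sub (hg.const_mul 2) hd, hshift, integral_const_mul]
  ring

lemma norm_integral_mul_osc_le_of_antitoneOn (hh : 0 < h) (hlh : l * h = Real.pi)
    (hf : IntegrableOn f (Ioi 0)) (h0 : ∀ u > 0, 0 ≤ f u) (ha : AntitoneOn f (Ioi 0)) :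
    ‖∫ u in Ioi 0, (f u : ℂ) * osc l u‖ ≤ ∫ u in Ioc 0 h, f u := by
  have hfirst : ‖∫ u in Ioc 0 h, (f u : ℂ) * osc l u‖ ≤ ∫ u in Ioc 0 h, f u :=
    norm_setIntegral_mul_osc_le measurableSet_Ioc l fun u hu => h0 u hu.1
  have hdiff : ‖∫ u in Ioi 0, ((f u - f (u + h) : ℝ) : ℂ) * osc l u‖ ≤ ∫ u in Ioc 0 h, f u := by
    refine (norm_setIntegral_mul_osc_le measurableSet_Ioi l fun u (hu : 0 < u) => ?_).trans_eq
      ((integral_Ioi_sub_comp_add_right hh.le hf).trans (by rw [zero_add]))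
    exact sub_nonneg.2 (ha hu (add_pos hu hh) (by linarith))
  refine norm_le_of_norm_two_mul_le ?_
  rw [two_mul_integral_mul_osc hh hlh hf, two_mul (∫ u in Ioc 0 h, f u)]
  exact (norm_add_le _ _).trans (add_le_add hfirst hdiff)

lemma norm_integral_diff_id_mul_osc_le (hh : 0 < h) (hf : IntegrableOn f (Ioi 0))
    (hf' : IntegrableOn (fun u => u * f u) (Ioi 0)) (h0 : ∀ u > 0, 0 ≤ f u)
    (ha : AntitoneOn f (Ioi 0)) :
    ‖∫ u in Ioi 0, ((u * f u - (u + h) * f (u + h) : ℝ) : ℂ) * osc l u‖ ≤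
      (∫ u in Ioc 0 h, u * f u) + 2 * h * ∫ u in Ioi 0, f u := by
  have hsub : Ioi (0 + h) ⊆ Ioi (0 : ℝ) := Ioi_subset_Ioi (by linarith)
  have hs : IntegrableOn (fun u => f (u + h)) (Ioi 0) :=
    integrableOn_Ioi_comp_add_right (hf.mono_set hsub)
  have hd : IntegrableOn (fun u => u * f u - (u + h) * f (u + h)) (Ioi 0) :=
    hf'.sub (integrableOn_Ioi_comp_add_right (f := fun u => u * f u) (hf'.mono_set hsub))
  have hpt : ∀ u ∈ Ioi (0 : ℝ), ‖((u * f u - (u + h) * f (u + h) : ℝ) : ℂ) * osc l u‖ ≤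
      (u * f u - (u + h) * f (u + h)) + 2 * h * f (u + h) := fun u (hu : 0 < u) => by
    have hle : f (u + h) ≤ f u := ha hu (add_pos hu hh) (by linarith)
    have hnn := h0 (u + h) (add_pos hu hh)
    rw [norm_mul, norm_osc, mul_one, Complex.norm_real, Real.norm_eq_abs, abs_le]
    constructor <;> nlinarith
  have htail : ∫ u in Ioi 0, f (u + h) ≤ ∫ u in Ioi 0, f u := by
    rw [integral_Ioi_comp_add_right]
    exact setIntegral_mono_set hf
      ((ae_restrict_mem measurableSet_Ioi).mono fun u hu => h0 u hu) hsub.eventuallyLE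
  calc ‖∫ u in Ioi 0, ((u * f u - (u + h) * f (u + h) : ℝ) : ℂ) * osc l u‖
      ≤ ∫ u in Ioi 0, ((u * f u - (u + h) * f (u + h)) + 2 * h * f (u + h)) :=
        (norm_integral_le_integral_norm _).trans (setIntegral_mono_on
          (integrableOn_mul_osc l hd).norm (hd.add (hs.const_mul (2 * h))) measurableSet_Ioi hpt)
    _ = (∫ u in Ioc 0 h, u * f u) + 2 * h * ∫ u in Ioi 0, f (u + h) := by
        rw [integral_add hd (hs.const_mul (2 * h)),
          integral_Ioi_sub_comp_add_right (f := fun u => u * f u) hh.le hf', integral_const_mul,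
          zero_add]
    _ ≤ _ := by gcongr

lemma norm_integral_id_mul_osc_le_of_antitoneOn (hh : 0 < h) (hlh : l * h = Real.pi)
    (hf : IntegrableOn f (Ioi 0)) (hf' : IntegrableOn (fun u => u * f u) (Ioi 0))
    (h0 : ∀ u > 0, 0 ≤ f u) (ha : AntitoneOn f (Ioi 0)) :
    ‖∫ u in Ioi 0, ((u * f u : ℝ) : ℂ) * osc l u‖ ≤ 2 * h * ∫ u in Ioi 0, f u := by
  have hlocal : ∫ u in Ioc 0 h, u * f u ≤ h * ∫ u in Ioi 0, f u := by
    rw [← integral_const_mul]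
    refine (setIntegral_mono_on (hf'.mono_set Ioc_subset_Ioi_self)
      (IntegrableOn.mono_set (hf.const_mul h) Ioc_subset_Ioi_self) measurableSet_Ioc
      fun u hu => mul_le_mul_of_nonneg_right hu.2 (h0 u hu.1)).trans ?_
    exact setIntegral_mono_set (hf.const_mul h) ((ae_restrict_mem measurableSet_Ioi).mono
      fun u hu => mul_nonneg hh.le (h0 u hu)) Ioc_subset_Ioi_self.eventuallyLE
  have hfirst : ‖∫ u in Ioc 0 h, ((u * f u : ℝ) : ℂ) * osc l u‖ ≤ ∫ u in Ioc 0 h, u * f u :=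
    norm_setIntegral_mul_osc_le measurableSet_Ioc l fun u hu => mul_nonneg hu.1.le (h0 u hu.1)
  have hdiff := norm_integral_diff_id_mul_osc_le (l := l) hh hf hf' h0 ha
  refine norm_le_of_norm_two_mul_le ?_
  rw [two_mul_integral_mul_osc hh hlh hf']
  exact (norm_add_le _ _).trans (by linarith)

end HalfPeriod

lemma antitoneOn_sub_comp_add_of_convexOn {f : ℝ → ℝ} {a h : ℝ} (hf : ConvexOn ℝ (Ioi a) f)
    (hh : 0 < h) : AntitoneOn (fun u => f u - f (u + h)) (Ioi a) := by
  intro u (hu : a < u) v (hv : a < v) huv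
  rcases eq_or_lt_of_le huv with rfl | huv
  · exact le_rfl
  -- Both `v` and `u + h` are convex combinations of `u` and `v + h`.
  set τ := h / (v + h - u) with hτ
  have hd : 0 < v + h - u := by linarith
  have hτ0 : 0 ≤ τ := by positivity
  have hτ1 : 0 ≤ 1 - τ := sub_nonneg.2 (by rw [hτ, div_le_one hd]; linarith)
  have hmul : τ * (v + h - u) = h := by rw [hτ]; field_simp
  have hvh : v + h ∈ Ioi a := show a < v + h by linarith
  have hv' := hf.2 (mem_Ioi.2 hu) hvh hτ0 hτ1 (by ring)
  have hu' := hf.2 (mem_Ioi.2 hu) hvh hτ1 hτ0 (by ring)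
  simp only [smul_eq_mul] at hv' hu'
  rw [show τ * u + (1 - τ) * (v + h) = v by linear_combination -hmul] at hv'
  rw [show (1 - τ) * u + τ * (v + h) = u + h by linear_combination hmul] at hu'
  change f v - f (v + h) ≤ f u - f (u + h)
  linarith

/-- `C` is a bounded, nonincreasing, convex profile on `(0,∞)` which vanishes beyond `w`. -/
structure Profile (C : ℝ → ℝ) (M w : ℝ) : Prop where
  convexOn : ConvexOn ℝ (Ioi 0) C
  antitoneOn : AntitoneOn C (Ioi 0)
  nonneg : ∀ u > 0, 0 ≤ C u
  le_bound : ∀ u > 0, C u ≤ M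
  eq_zero : ∀ u, w ≤ u → C u = 0
  width_pos : 0 < w

namespace Profile

variable {C : ℝ → ℝ} {M w h l : ℝ}

lemma bound_nonneg (p : Profile C M w) : 0 ≤ M := (p.nonneg 1 one_pos).trans (p.le_bound 1 one_pos)

lemma aestronglyMeasurable (p : Profile C M w) :
    AEStronglyMeasurable C (volume.restrict (Ioi 0)) :=
  (aemeasurable_restrict_of_antitoneOn measurableSet_Ioi p.antitoneOn).aestronglyMeasurable

lemma integrableOn_of_integrableOn_Ioo {f : ℝ → ℝ} (hw : 0 < w) (hf : IntegrableOn f (Ioo 0 w))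
    (hz : ∀ u, w ≤ u → f u = 0) : IntegrableOn f (Ioi 0) := by
  rw [← Ioo_union_Ici_eq_Ioi hw]
  exact hf.union ((integrableOn_zero (ε' := ℝ)).congr_fun (fun u hu => (hz u hu).symm)
    measurableSet_Ici)

lemma integrableOn (p : Profile C M w) : IntegrableOn C (Ioi 0) := by
  refine integrableOn_of_integrableOn_Ioo p.width_pos
    ⟨p.aestronglyMeasurable.mono_measure (Measure.restrict_mono Ioo_subset_Ioi_self le_rfl),
      HasFiniteIntegral.restrict_of_bounded (C := M) (by simp) ?_⟩ p.eq_zero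
  filter_upwards [ae_restrict_mem measurableSet_Ioo] with u hu
  rw [Real.norm_of_nonneg (p.nonneg u hu.1)]
  exact p.le_bound u hu.1

lemma integrableOn_id_mul {f : ℝ → ℝ} (hw : 0 < w) (hf : IntegrableOn f (Ioi 0))
    (hz : ∀ u, w ≤ u → f u = 0) : IntegrableOn (fun u => u * f u) (Ioi 0) := by
  refine integrableOn_of_integrableOn_Ioo hw (Integrable.bdd_mul (c := w)
    (hf.mono_set Ioo_subset_Ioi_self) measurable_id.aestronglyMeasurable ?_)
    fun u hu => by rw [hz u hu, mul_zero]
  filter_upwards [ae_restrict_mem measurableSet_Ioo] with u hu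
  exact (Real.norm_of_nonneg hu.1.le).trans_le hu.2.le

lemma integrableOn_mul (p : Profile C M w) : IntegrableOn (fun u => u * C u) (Ioi 0) :=
  integrableOn_id_mul p.width_pos p.integrableOn p.eq_zero

lemma integrableOn_shift (p : Profile C M w) (hh : 0 < h) :
    IntegrableOn (fun u => C (u + h)) (Ioi 0) :=
  integrableOn_Ioi_comp_add_right (p.integrableOn.mono_set (Ioi_subset_Ioi (by linarith)))

lemma diff_nonneg (p : Profile C M w) (hh : 0 < h) {u : ℝ} (hu : 0 < u) :
    0 ≤ C u - C (u + h) :=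
  sub_nonneg.2 (p.antitoneOn hu (add_pos hu hh) (by linarith))

lemma integrableOn_diff (p : Profile C M w) (hh : 0 < h) :
    IntegrableOn (fun u => C u - C (u + h)) (Ioi 0) :=
  p.integrableOn.sub (p.integrableOn_shift hh)

lemma integrableOn_mul_diff (p : Profile C M w) (hh : 0 < h) :
    IntegrableOn (fun u => u * (C u - C (u + h))) (Ioi 0) :=
  integrableOn_id_mul p.width_pos (p.integrableOn_diff hh) fun u hu => by
    rw [p.eq_zero u hu, p.eq_zero (u + h) (by linarith), sub_zero]

lemma integral_diff_le (p : Profile C M w) (hh : 0 < h) :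
    ∫ u in Ioi 0, (C u - C (u + h)) ≤ h * M := by
  rw [integral_Ioi_sub_comp_add_right hh.le p.integrableOn, zero_add]
  simpa using setIntegral_Ioc_le_mul hh.le (p.integrableOn.mono_set Ioc_subset_Ioi_self)
    fun u hu => p.le_bound u hu.1

/-- The amplitude `iM/λ - ∫₀^∞ C(u) e^{iλu} du` attached to a profile `C` with bound `M`: up to a
phase it is the contribution of one end of the interval to `∫ (M - C(u)) e^{iλu} du`. -/
def amp (C : ℝ → ℝ) (M l : ℝ) : ℂ :=
  Complex.I * M / l - ∫ u in Ioi 0, (C u : ℂ) * osc l u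

lemma two_mul_amp (p : Profile C M w) (hh : 0 < h) (hlh : l * h = Real.pi) :
    2 * amp C M l = (∫ u in Ioc 0 h, ((M - C u : ℝ) : ℂ) * osc l u) -
      ∫ u in Ioi 0, ((C u - C (u + h) : ℝ) : ℂ) * osc l u := by
  have hl : l ≠ 0 := left_ne_zero_of_mul_eq_one (b := h / Real.pi) (by
    rw [mul_div_assoc', hlh, div_self Real.pi_ne_zero])
  have hconst : ∫ u in Ioc 0 h, (M : ℂ) * osc l u = 2 * (Complex.I * M / l) := by
    rw [integral_const_mul, ← intervalIntegral.integral_of_le hh.le, integral_osc hl,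
      osc_half_period hlh, osc]
    have hl' : (l : ℂ) ≠ 0 := by exact_mod_cast hl
    field_simp
    simp
    ring
  have hsub : ∀ u, ((M - C u : ℝ) : ℂ) * osc l u = (M : ℂ) * osc l u - (C u : ℂ) * osc l u :=
    fun u => by push_cast; ring
  simp only [hsub]
  rw [integral_sub (integrableOn_mul_osc (f := fun _ => M) l (by simp))
    (integrableOn_mul_osc l (p.integrableOn.mono_set Ioc_subset_Ioi_self)), hconst, amp, mul_sub,
    two_mul_integral_mul_osc hh hlh p.integrableOn]
  ring

lemma norm_amp_le (p : Profile C M w) (hh : 0 < h) (hlh : l * h = Real.pi) :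
    ‖amp C M l‖ ≤ h * (M - C (2 * h)) := by
  have hle : ∀ u > 0, u ≤ 2 * h → C (2 * h) ≤ C u := fun u hu hu2 =>
    p.antitoneOn hu (show 0 < 2 * h by linarith) hu2
  have hfirst : ‖∫ u in Ioc 0 h, ((M - C u : ℝ) : ℂ) * osc l u‖ ≤ h * (M - C (2 * h)) := by
    refine (norm_setIntegral_mul_osc_le measurableSet_Ioc l fun u hu =>
      sub_nonneg.2 (p.le_bound u hu.1)).trans ?_
    have hint : IntegrableOn (fun u => M - C u) (Ioc 0 h) :=
      Integrable.sub (by simp) (p.integrableOn.mono_set Ioc_subset_Ioi_self)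
    simpa using setIntegral_Ioc_le_mul hh.le hint fun u hu =>
      sub_le_sub_left (hle u hu.1 (by linarith [hu.2])) M
  have hdiff : ‖∫ u in Ioi 0, ((C u - C (u + h) : ℝ) : ℂ) * osc l u‖ ≤
      h * (M - C (2 * h)) := by
    refine (norm_integral_mul_osc_le_of_antitoneOn hh hlh (p.integrableOn_diff hh)
      (fun u hu => p.diff_nonneg hh hu)
      (antitoneOn_sub_comp_add_of_convexOn p.convexOn hh)).trans ?_
    simpa using setIntegral_Ioc_le_mul hh.le
      ((p.integrableOn_diff hh).mono_set Ioc_subset_Ioi_self) fun u hu =>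
        sub_le_sub (p.le_bound u hu.1) (hle (u + h) (add_pos hu.1 hh) (by linarith [hu.2]))
  refine norm_le_of_norm_two_mul_le ?_
  rw [p.two_mul_amp hh hlh, two_mul (h * _)]
  exact (norm_sub_le _ _).trans (add_le_add hfirst hdiff)

lemma norm_integral_shift_mul_osc_le (p : Profile C M w) (hh : 0 < h) (hlh : l * h = Real.pi) :
    ‖∫ u in Ioi 0, (C (u + h) : ℂ) * osc l u‖ ≤ h * M := by
  refine (norm_integral_mul_osc_le_of_antitoneOn hh hlh (p.integrableOn_shift hh)
    (fun u hu => p.nonneg _ (add_pos hu hh)) fun u hu v hv huv => ?_).trans ?_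
  · exact p.antitoneOn (add_pos hu hh) (add_pos hv hh) (by linarith)
  · simpa using setIntegral_Ioc_le_mul hh.le
      ((p.integrableOn_shift hh).mono_set Ioc_subset_Ioi_self) fun u hu =>
        p.le_bound _ (add_pos hu.1 hh)

lemma norm_integral_mul_diff_mul_osc_le (p : Profile C M w) (hh : 0 < h)
    (hlh : l * h = Real.pi) :
    ‖∫ u in Ioi 0, ((u * (C u - C (u + h)) : ℝ) : ℂ) * osc l u‖ ≤ 2 * (h ^ 2 * M) := by
  refine (norm_integral_id_mul_osc_le_of_antitoneOn hh hlh (p.integrableOn_diff hh)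
    (p.integrableOn_mul_diff hh) (fun u hu => p.diff_nonneg hh hu)
    (antitoneOn_sub_comp_add_of_convexOn p.convexOn hh)).trans ?_
  nlinarith [p.integral_diff_le hh]

lemma norm_integral_mul_osc_le (p : Profile C M w) (hh : 0 < h) (hlh : l * h = Real.pi) :
    ‖∫ u in Ioi 0, ((u * C u : ℝ) : ℂ) * osc l u‖ ≤ 2 * h ^ 2 * M := by
  have hfirst : ‖∫ u in Ioc 0 h, ((u * C u : ℝ) : ℂ) * osc l u‖ ≤ h ^ 2 * M := by
    refine (norm_setIntegral_mul_osc_le measurableSet_Ioc l fun u hu =>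
      mul_nonneg hu.1.le (p.nonneg u hu.1)).trans ?_
    refine (setIntegral_Ioc_le_mul hh.le (p.integrableOn_mul.mono_set Ioc_subset_Ioi_self)
      fun u hu => mul_le_mul hu.2 (p.le_bound u hu.1) (p.nonneg u hu.1) hh.le).trans_eq ?_
    ring
  have hsplit : ∫ u in Ioi 0, ((u * C u - (u + h) * C (u + h) : ℝ) : ℂ) * osc l u =
      (∫ u in Ioi 0, ((u * (C u - C (u + h)) : ℝ) : ℂ) * osc l u) -
        h * ∫ u in Ioi 0, (C (u + h) : ℂ) * osc l u := by
    rw [← integral_const_mul, ← integral_sub (integrableOn_mul_osc l (p.integrableOn_mul_diff hh))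
      ((integrableOn_mul_osc l (p.integrableOn_shift hh)).const_mul _)]
    congr 1 with u
    push_cast; ring
  refine norm_le_of_norm_two_mul_le ?_
  calc ‖2 * ∫ u in Ioi 0, ((u * C u : ℝ) : ℂ) * osc l u‖
      ≤ h ^ 2 * M + (2 * (h ^ 2 * M) + h * (h * M)) := by
        rw [two_mul_integral_mul_osc hh hlh p.integrableOn_mul, hsplit]
        refine (norm_add_le _ _).trans (add_le_add hfirst ((norm_sub_le _ _).trans
          (add_le_add (p.norm_integral_mul_diff_mul_osc_le hh hlh) ?_)))
        rw [norm_mul, Complex.norm_real, Real.norm_of_nonneg hh.le]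
        exact mul_le_mul_of_nonneg_left (p.norm_integral_shift_mul_osc_le hh hlh) hh.le
    _ = 2 * (2 * h ^ 2 * M) := by ring

/-- The derivative of `amp C M` at `l`. -/
def ampDeriv (C : ℝ → ℝ) (M l : ℝ) : ℂ :=
  -(Complex.I * M / l ^ 2) - Complex.I * ∫ u in Ioi 0, ((u * C u : ℝ) : ℂ) * osc l u

lemma hasDerivAt_amp (p : Profile C M w) (hl : l ≠ 0) :
    HasDerivAt (amp C M) (ampDeriv C M l) l := by
  have hpole : HasDerivAt (fun l : ℝ => Complex.I * M / (l : ℂ)) (-(Complex.I * M / l ^ 2)) l := by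
    have hl' : (l : ℂ) ≠ 0 := by exact_mod_cast hl
    have := ((hasDerivAt_inv hl').comp_ofReal).const_mul (Complex.I * M)
    simpa [div_eq_mul_inv] using this
  have hpt (u m : ℝ) : HasDerivAt (fun l : ℝ => (C u : ℂ) * osc l u)
      (Complex.I * (((u * C u : ℝ) : ℂ) * osc m u)) m :=
    ((hasDerivAt_osc_left m u).const_mul (C u : ℂ)).congr_deriv (by push_cast; ring)
  have hint := (hasDerivAt_integral_of_dominated_loc_of_deriv_le (𝕜 := ℝ)
    (μ := volume.restrict (Ioi 0)) (F := fun l u => (C u : ℂ) * osc l u)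
    (F' := fun l u => Complex.I * (((u * C u : ℝ) : ℂ) * osc l u)) (x₀ := l)
    (s := univ) (bound := fun u => ‖u * C u‖) Filter.univ_mem
    (Filter.Eventually.of_forall fun l =>
      (integrableOn_mul_osc l p.integrableOn).aestronglyMeasurable)
    (integrableOn_mul_osc l p.integrableOn)
    ((integrableOn_mul_osc l p.integrableOn_mul).const_mul _).aestronglyMeasurable
    (Filter.Eventually.of_forall fun u l _ => by
      simp only [norm_mul, norm_osc, Complex.norm_I, Complex.norm_real, one_mul, mul_one, le_rfl])
    p.integrableOn_mul.norm
    (Filter.Eventually.of_forall fun u m _ => hpt u m)).2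
  rw [integral_const_mul] at hint
  exact hpole.sub hint

lemma norm_ampDeriv_le (p : Profile C M w) (hl : 0 < l) : ‖ampDeriv C M l‖ ≤ 24 * M / l ^ 2 := by
  have hM := p.bound_nonneg
  have hmoment := p.norm_integral_mul_osc_le (h := Real.pi / l) (l := l) (by positivity)
    (by field_simp)
  have hpi : 1 + 2 * Real.pi ^ 2 ≤ 24 := by nlinarith [Real.pi_lt_d2, Real.pi_pos]
  calc ‖ampDeriv C M l‖
      ≤ ‖-(Complex.I * M / l ^ 2)‖ +
          ‖Complex.I * ∫ u in Ioi 0, ((u * C u : ℝ) : ℂ) * osc l u‖ := norm_sub_le _ _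
    _ ≤ M / l ^ 2 + 2 * (Real.pi / l) ^ 2 * M := by
        rw [norm_mul, Complex.norm_I, one_mul]
        exact add_le_add (by simp [abs_of_nonneg hM]) hmoment
    _ = (1 + 2 * Real.pi ^ 2) * M / l ^ 2 := by field_simp
    _ ≤ 24 * M / l ^ 2 := by gcongr

end Profile

/-! ### Chords of planar convex sets -/

/-- Lengths of the vertical chords of `W` over abscissas in `S`. The signed lengths are allowed as
well; they change neither the supremum nor the emptiness of the set. -/
def chords (W : Set (ℝ × ℝ)) (S : Set ℝ) : Set ℝ :=
  {L | ∃ s ∈ S, ∃ y y', (s, y) ∈ W ∧ (s, y') ∈ W ∧ L = y' - y}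

/-- Supremum of the chord lengths over abscissas in `S`, with the value `0` if there are none. -/
def chordSup (W : Set (ℝ × ℝ)) (S : Set ℝ) : ℝ := sSup (chords W S)

/-- The deficit `M - B(u)`, where `B(u)` is the largest chord over `[a-u, ∞)` and `M` the largest
chord overall. -/
def deficit (W : Set (ℝ × ℝ)) (a u : ℝ) : ℝ := chordSup W univ - chordSup W (Ici (a - u))

/-- Reflection of a planar set in the vertical axis. -/
def reflect (W : Set (ℝ × ℝ)) : Set (ℝ × ℝ) := {p | (-p.1, p.2) ∈ W}

section Chords

variable {W : Set (ℝ × ℝ)} {S T : Set ℝ}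

lemma chords_mono (h : S ⊆ T) : chords W S ⊆ chords W T := fun _ ⟨s, hs, r⟩ => ⟨s, h hs, r⟩

lemma mem_chords_iff {L : ℝ} : L ∈ chords W S ↔ ∃ s ∈ S, L ∈ chords W {s} := by
  simp only [chords, mem_ofPred_eq, mem_singleton_iff, exists_eq_left]

lemma combo_mem_chords (hW : Convex ℝ W) {x y s t L L' : ℝ} (hx : 0 ≤ x) (hy : 0 ≤ y)
    (hxy : x + y = 1) (hL : L ∈ chords W {s}) (hL' : L' ∈ chords W {t}) :
    x * L + y * L' ∈ chords W {x * s + y * t} := by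
  obtain ⟨_, rfl, p, p', hp, hp', rfl⟩ := hL
  obtain ⟨_, rfl, q, q', hq, hq', rfl⟩ := hL'
  exact ⟨_, rfl, x * p + y * q, x * p' + y * q', by simpa using hW hp hq hx hy hxy,
    by simpa using hW hp' hq' hx hy hxy, by ring⟩

lemma chordSup_nonneg (hK : BddAbove (chords W univ)) : 0 ≤ chordSup W S := by
  rcases (chords W S).eq_empty_or_nonempty with h | ⟨L, s, hs, y, y', hy, -, rfl⟩
  · simp [chordSup, h]
  · exact le_csSup (hK.mono (chords_mono (subset_univ _))) ⟨s, hs, y, y, hy, hy, by simp⟩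

lemma chordSup_le {c : ℝ} (hc : 0 ≤ c) (h : ∀ L ∈ chords W S, L ≤ c) : chordSup W S ≤ c :=
  Real.sSup_le h hc

lemma le_chordSup (hK : BddAbove (chords W univ)) {L : ℝ} (hL : L ∈ chords W S) :
    L ≤ chordSup W S :=
  le_csSup (hK.mono (chords_mono (subset_univ _))) hL

lemma chordSup_mono (hK : BddAbove (chords W univ)) (h : S ⊆ T) : chordSup W S ≤ chordSup W T :=
  chordSup_le (chordSup_nonneg hK) fun _ hL => le_chordSup hK (chords_mono h hL)

lemma exists_lt_of_lt_chordSup {c : ℝ} (hc : 0 ≤ c) (h : c < chordSup W S) :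
    ∃ L ∈ chords W S, c < L := by
  by_contra! hle
  exact (chordSup_le hc hle).not_gt h

lemma chordSup_singleton_eq_zero {s : ℝ} (hs : ∀ p ∈ W, p.1 ≠ s) : chordSup W {s} = 0 := by
  have hempty : chords W {s} = ∅ := by
    rw [eq_empty_iff_forall_notMem]
    rintro L ⟨s', hs', y, y', hy, -⟩
    exact hs _ hy hs'
  rw [chordSup, hempty, Real.sSup_empty]

-- Brunn's theorem in the plane: chord lengths are concave in the abscissa.
lemma combo_chordSup_le (hW : Convex ℝ W) (hK : BddAbove (chords W univ)) {x y : ℝ} (hx : 0 ≤ x)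
    (hy : 0 ≤ y) (hxy : x + y = 1) (hS : (chords W S).Nonempty) (hT : (chords W T).Nonempty) :
    x * chordSup W S + y * chordSup W T ≤ chordSup W (x • S + y • T) := by
  have hbdd : ∀ U, BddAbove (chords W U) := fun U => hK.mono (chords_mono (subset_univ _))
  rw [chordSup, chordSup, ← smul_eq_mul, ← smul_eq_mul, ← Real.sSup_smul_of_nonneg hx,
    ← Real.sSup_smul_of_nonneg hy, ← csSup_add hS.smul_set
    ((hbdd S).smul_of_nonneg hx) hT.smul_set ((hbdd T).smul_of_nonneg hy)]
  refine csSup_le (hS.smul_set.add hT.smul_set) ?_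
  rintro _ ⟨_, ⟨L, hL, rfl⟩, _, ⟨L', hL', rfl⟩, rfl⟩
  obtain ⟨s, hs, hL⟩ := mem_chords_iff.1 hL
  obtain ⟨t, ht, hL'⟩ := mem_chords_iff.1 hL'
  exact le_chordSup hK (mem_chords_iff.2 ⟨_, add_mem_add (smul_mem_smul_set hs)
    (smul_mem_smul_set ht), combo_mem_chords hW hx hy hxy hL hL'⟩)

lemma convexOn_deficit (hW : Convex ℝ W) (hK : BddAbove (chords W univ)) {a : ℝ}
    (ha : IsLUB (Prod.fst '' W) a) : ConvexOn ℝ (Ioi 0) (deficit W a) := by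
  have hne : ∀ u : ℝ, 0 < u → (chords W (Ici (a - u))).Nonempty := fun u hu => by
    obtain ⟨_, ⟨p, hp, rfl⟩, hap, -⟩ := ha.exists_between (sub_lt_self a hu)
    exact ⟨_, p.1, hap.le, p.2, p.2, hp, hp, rfl⟩
  refine ⟨convex_Ioi 0, fun u hu v hv x y hx hy hxy => ?_⟩
  have hsub : x • Ici (a - u) + y • Ici (a - v) ⊆ Ici (a - (x * u + y * v)) := by
    rintro _ ⟨_, ⟨s, hs, rfl⟩, _, ⟨t, ht, rfl⟩, rfl⟩
    have hs' := mul_le_mul_of_nonneg_left (mem_Ici.1 hs) hx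
    have ht' := mul_le_mul_of_nonneg_left (mem_Ici.1 ht) hy
    simp only [smul_eq_mul, mem_Ici]
    linear_combination hs' + ht' - a * hxy
  have hbrunn := (combo_chordSup_le hW hK hx hy hxy (hne u hu) (hne v hv)).trans
    (chordSup_mono hK hsub)
  simp only [deficit, smul_eq_mul]
  linear_combination hbrunn - chordSup W univ * hxy

lemma profile_deficit (hW : Convex ℝ W) (hK : BddAbove (chords W univ)) {a b : ℝ}
    (ha : IsLUB (Prod.fst '' W) a) (hb : ∀ p ∈ W, -b < p.1) :
    Profile (deficit W a) (chordSup W univ) (a + b) where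
  convexOn := convexOn_deficit hW hK ha
  antitoneOn _ _ _ _ huv :=
    sub_le_sub_left (chordSup_mono hK (Ici_subset_Ici.2 (by linarith))) _
  nonneg u _ := sub_nonneg.2 (chordSup_mono hK (subset_univ _))
  le_bound u _ := sub_le_self _ (chordSup_nonneg hK)
  eq_zero u hu := by
    refine sub_eq_zero.2 (le_antisymm (chordSup_le (chordSup_nonneg hK) ?_)
      (chordSup_mono hK (subset_univ _)))
    rintro L ⟨s, -, y, y', hy, hy', rfl⟩
    have hs : a - u ≤ s := by linarith [hb _ hy]
    exact le_chordSup hK ⟨s, hs, y, y', hy, hy', rfl⟩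
  width_pos := by
    obtain ⟨_, p, hp, rfl⟩ := ha.nonempty
    linarith [hb p hp, ha.1 (mem_image_of_mem _ hp)]

lemma chords_reflect (S : Set ℝ) : chords (reflect W) S = chords W (-S) := by
  ext L
  constructor
  · rintro ⟨s, hs, y, y', hy, hy', rfl⟩
    exact ⟨-s, by simpa using hs, y, y', hy, hy', rfl⟩
  · rintro ⟨s, hs, y, y', hy, hy', rfl⟩
    exact ⟨-s, hs, y, y', by simpa [reflect] using hy, by simpa [reflect] using hy', rfl⟩

lemma chordSup_reflect (S : Set ℝ) : chordSup (reflect W) S = chordSup W (-S) := by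
  rw [chordSup, chords_reflect, chordSup]

lemma chordSup_reflect_univ : chordSup (reflect W) univ = chordSup W univ := by
  rw [chordSup_reflect, neg_univ]

lemma convex_reflect (hW : Convex ℝ W) : Convex ℝ (reflect W) :=
  hW.linear_preimage ((-LinearMap.fst ℝ ℝ ℝ).prod (LinearMap.snd ℝ ℝ ℝ))

lemma chordSup_univ_eq_max (hK : BddAbove (chords W univ)) (s : ℝ) :
    chordSup W univ = max (chordSup W (Ici s)) (chordSup W (Iic s)) := by
  refine le_antisymm (chordSup_le (le_max_of_le_left (chordSup_nonneg hK)) ?_)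
    (max_le (chordSup_mono hK (subset_univ _)) (chordSup_mono hK (subset_univ _)))
  rintro L ⟨s', -, h⟩
  rcases le_total s s' with h' | h'
  · exact le_max_of_le_left (le_chordSup hK ⟨s', h', h⟩)
  · exact le_max_of_le_right (le_chordSup hK ⟨s', h', h⟩)

lemma chordSup_singleton_eq_min (hW : Convex ℝ W) (hK : BddAbove (chords W univ)) (s : ℝ) :
    chordSup W {s} = min (chordSup W (Ici s)) (chordSup W (Iic s)) := by
  refine le_antisymm (le_min (chordSup_mono hK (by simp)) (chordSup_mono hK (by simp)))
    (le_of_forall_lt fun c hc => ?_)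
  rcases lt_or_ge c 0 with hc0 | hc0
  · exact hc0.trans_le (chordSup_nonneg hK)
  obtain ⟨L, hL, hcL⟩ := exists_lt_of_lt_chordSup hc0 (lt_min_iff.1 hc).1
  obtain ⟨L', hL', hcL'⟩ := exists_lt_of_lt_chordSup hc0 (lt_min_iff.1 hc).2
  obtain ⟨t, ht, hLt⟩ := mem_chords_iff.1 hL
  obtain ⟨t', ht', hLt'⟩ := mem_chords_iff.1 hL'
  have hs : s ∈ segment ℝ t' t := by
    rw [segment_eq_Icc (le_trans ht' ht)]; exact ⟨ht', ht⟩
  obtain ⟨x, y, hx, hy, hxy, rfl⟩ := hs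
  refine lt_of_lt_of_le ?_ (le_chordSup hK (combo_mem_chords hW hx hy hxy hLt' hLt))
  simpa using convex_Ioi c hcL' hcL hx hy hxy

lemma chordSup_Ici_add_chordSup_Iic (hW : Convex ℝ W) (hK : BddAbove (chords W univ)) (s : ℝ) :
    chordSup W (Ici s) + chordSup W (Iic s) = chordSup W univ + chordSup W {s} := by
  rw [chordSup_univ_eq_max hK s, chordSup_singleton_eq_min hW hK, max_add_min]

lemma volume_prodMk_preimage (hW : Convex ℝ W) (hK : BddAbove (chords W univ)) (s : ℝ) :
    (volume (Prod.mk s ⁻¹' W)).toReal = chordSup W {s} := by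
  have hle : volume (Prod.mk s ⁻¹' W) ≤ ENNReal.ofReal (chordSup W {s}) := by
    refine (Real.volume_le_diam _).trans (Metric.ediam_le fun y hy y' hy' => ?_)
    rw [edist_dist, Real.dist_eq]
    refine ENNReal.ofReal_le_ofReal (abs_le'.2 ⟨le_chordSup hK ⟨s, rfl, y', y, hy', hy, rfl⟩, ?_⟩)
    rw [neg_sub]
    exact le_chordSup hK ⟨s, rfl, y, y', hy, hy', rfl⟩
  refine le_antisymm (ENNReal.toReal_le_of_le_ofReal (chordSup_nonneg hK) hle)
    (chordSup_le ENNReal.toReal_nonneg ?_)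
  rintro _ ⟨s, rfl, y, y', hy, hy', rfl⟩
  rcases le_total y' y with h | h
  · exact (sub_nonpos.2 h).trans ENNReal.toReal_nonneg
  have hconv : Convex ℝ (Prod.mk s ⁻¹' W) := fun p hp q hq x z hx hz hxz => by
    have := hW hp hq hx hz hxz
    rwa [Prod.smul_mk, Prod.smul_mk, Prod.mk_add_mk, ← add_smul, hxz, one_smul] at this
  have hvol := measure_mono (μ := volume) (hconv.ordConnected.out hy hy')
  rw [Real.volume_Icc] at hvol
  rw [← ENNReal.toReal_ofReal (sub_nonneg.2 h)]
  exact ENNReal.toReal_mono (hle.trans_lt ENNReal.ofReal_lt_top).ne hvol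

/-! ### The Fourier transform of a planar convex set -/

section Fourier

variable {a b l : ℝ}

lemma integral_osc_fst (hW : Convex ℝ W) (hWm : MeasurableSet W) (hfin : volume W ≠ ∞)
    (hK : BddAbove (chords W univ)) :
    ∫ p in W, osc l p.1 = ∫ s, (chordSup W {s} : ℂ) * osc l s := by
  have hint : Integrable (W.indicator fun p : ℝ × ℝ => osc l p.1) (volume.prod volume) := by
    rw [← Measure.volume_eq_prod, integrable_indicator_iff hWm]
    exact ⟨((continuous_osc _).comp continuous_fst).aestronglyMeasurable,
      HasFiniteIntegral.restrict_of_bounded (C := 1) hfin.lt_top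
        (Filter.Eventually.of_forall fun p => (norm_osc _ _).le)⟩
  rw [← integral_indicator hWm, Measure.volume_eq_prod, integral_prod _ hint]
  congr 1 with s
  have hsection : (fun y => W.indicator (fun p : ℝ × ℝ => osc l p.1) (s, y)) =
      (Prod.mk s ⁻¹' W).indicator fun _ => osc l s := rfl
  rw [hsection, integral_indicator (measurable_prodMk_left hWm), setIntegral_const,
    Measure.real, volume_prodMk_preimage hW hK, Complex.real_smul]

lemma chordSup_singleton_eq_indicator (hW : Convex ℝ W) (hK : BddAbove (chords W univ))
    (ha : IsLUB (Prod.fst '' W) a) (ha' : ∀ p ∈ W, p.1 < a)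
    (hb : IsLUB (Prod.fst '' reflect W) b) (hb' : ∀ p ∈ W, -b < p.1) (s : ℝ) :
    chordSup W {s} = (Ioo (-b) a).indicator (fun _ => chordSup W univ) s -
      (Iio a).indicator (fun s => deficit W a (a - s)) s -
      (Ioi (-b)).indicator (fun s => deficit (reflect W) b (s + b)) s := by
  have hright : deficit W a (a - s) = chordSup W univ - chordSup W (Ici s) := by simp [deficit]
  have hleft : deficit (reflect W) b (s + b) = chordSup W univ - chordSup W (Iic s) := by
    simp [deficit, chordSup_reflect]
  have hKr : BddAbove (chords (reflect W) univ) := by rwa [chords_reflect, neg_univ]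
  have hra : ∀ p ∈ reflect W, -a < p.1 := fun p hp => by linarith [ha' _ hp]
  simp only [indicator_apply, mem_Ioo, mem_Iio, mem_Ioi]
  rcases lt_or_ge s a with hsa | hsa
  · rcases lt_or_ge (-b) s with hsb | hsb
    · simp only [hsa, hsb, and_self, if_true, hright, hleft]
      linarith [chordSup_Ici_add_chordSup_Iic hW hK s]
    · rw [chordSup_singleton_eq_zero fun p hp => ((hsb.trans_lt (hb' p hp)).ne'),
        (profile_deficit hW hK ha hb').eq_zero _ (by linarith)]
      simp [hsb.not_gt]
  · rw [chordSup_singleton_eq_zero fun p hp => ((ha' p hp).trans_le hsa).ne,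
      (profile_deficit (convex_reflect hW) hKr hb hra).eq_zero _ (by linarith)]
    simp [hsa.not_gt]

lemma setIntegral_Ioo_const_mul_osc (hab : -b ≤ a) (hl : l ≠ 0) (M : ℝ) :
    ∫ s in Ioo (-b) a, (M : ℂ) * osc (-l) s =
      osc (-l) a * (Complex.I * M / l) + starRingEnd ℂ (osc (-l) b * (Complex.I * M / l)) := by
  rw [← integral_Ioc_eq_integral_Ioo, ← intervalIntegral.integral_of_le hab,
    intervalIntegral.integral_const_mul, integral_osc (neg_ne_zero.2 hl), osc_neg]
  have hl' : (l : ℂ) ≠ 0 := by exact_mod_cast hl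
  simp only [map_div₀, map_mul, Complex.conj_I, Complex.conj_ofReal, Complex.ofReal_neg]
  field_simp
  rw [Complex.I_sq]
  ring

lemma measurePreserving_const_sub (a : ℝ) : MeasurePreserving (fun s : ℝ => a - s) volume volume :=
  Measure.measurePreserving_sub_left volume a

lemma integrableOn_Iio_comp_const_sub {f : ℝ → ℝ} (hf : IntegrableOn f (Ioi 0)) :
    IntegrableOn (fun s => f (a - s)) (Iio a) := by
  have := ((measurePreserving_const_sub a).integrableOn_comp_preimage
    (Homeomorph.subLeft a).measurableEmbedding).2 hf
  simpa [Function.comp_def] using this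

lemma integral_Iio_comp_const_sub_mul_osc (f : ℝ → ℝ) :
    ∫ s in Iio a, (f (a - s) : ℂ) * osc (-l) s =
      osc (-l) a * ∫ u in Ioi 0, (f u : ℂ) * osc l u := by
  have hpt : ∀ s, (f (a - s) : ℂ) * osc (-l) s =
      osc (-l) a * ((f (a - s) : ℂ) * osc l (a - s)) := fun s => by
    have hosc : osc (-l) a * osc l (a - s) = osc (-l) s := by
      rw [show osc l (a - s) = osc (-l) (s - a) by simp [osc]; ring_nf, ← osc_add,
        add_sub_cancel]
    rw [← hosc]; ring
  have := (measurePreserving_const_sub a).setIntegral_preimage_emb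
    (Homeomorph.subLeft a).measurableEmbedding
    (fun u => osc (-l) a * ((f u : ℂ) * osc l u)) (Ioi 0)
  simp only [hpt]
  rw [← integral_const_mul, ← this]
  simp

lemma integral_Ioi_comp_add_mul_osc (f : ℝ → ℝ) :
    ∫ s in Ioi (-b), (f (s + b) : ℂ) * osc (-l) s =
      starRingEnd ℂ (osc (-l) b * ∫ u in Ioi 0, (f u : ℂ) * osc l u) := by
  have hpt : ∀ s, (f (s + b) : ℂ) * osc (-l) s =
      starRingEnd ℂ (osc (-l) b * ((f (s + b) : ℂ) * osc l (s + b))) := fun s => by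
    have hosc : starRingEnd ℂ (osc (-l) b) * osc (-l) (s + b) = osc (-l) s := by
      rw [← osc_neg, ← osc_add]; congr 1; ring
    rw [← hosc, map_mul, map_mul, Complex.conj_ofReal, osc_neg_left l (s + b)]; ring
  have := integral_Ioi_comp_add_right (a := -b) (h := b)
    (f := fun u => starRingEnd ℂ (osc (-l) b * ((f u : ℂ) * osc l u)))
  simp only [hpt]
  rw [← integral_const_mul, ← integral_conj, this, neg_add_cancel]

lemma integral_indicators_mul_osc {f g : ℝ → ℝ} (hf : IntegrableOn f (Ioi 0))
    (hg : IntegrableOn g (Ioi 0)) (hab : -b ≤ a) (hl : l ≠ 0) (M : ℝ) :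
    ∫ s, (((Ioo (-b) a).indicator (fun _ => M) s - (Iio a).indicator (fun s => f (a - s)) s -
      (Ioi (-b)).indicator (fun s => g (s + b)) s : ℝ) : ℂ) * osc (-l) s =
    osc (-l) a * Profile.amp f M l + starRingEnd ℂ (osc (-l) b * Profile.amp g M l) := by
  have hcast : ∀ (S : Set ℝ) (k : ℝ → ℝ) (s : ℝ), ((S.indicator k s : ℝ) : ℂ) * osc (-l) s =
      S.indicator (fun s => (k s : ℂ) * osc (-l) s) s := fun S k s => by
    by_cases hs : s ∈ S <;> simp [hs]
  have hM : IntegrableOn (fun _ => M) (Ioo (-b) a) := by simp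
  have hg' : IntegrableOn (fun s => g (s + b)) (Ioi (-b)) :=
    integrableOn_Ioi_comp_add_right (by rwa [neg_add_cancel])
  have iM := (integrable_indicator_iff measurableSet_Ioo).2 (integrableOn_mul_osc (-l) hM)
  have iA := (integrable_indicator_iff measurableSet_Iio).2
    (integrableOn_mul_osc (-l) (integrableOn_Iio_comp_const_sub (a := a) hf))
  have iB := (integrable_indicator_iff measurableSet_Ioi).2 (integrableOn_mul_osc (-l) hg')
  have iMA : Integrable fun s => (Ioo (-b) a).indicator (fun s => (M : ℂ) * osc (-l) s) s -
      (Iio a).indicator (fun s => (f (a - s) : ℂ) * osc (-l) s) s := iM.sub iA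
  simp only [Complex.ofReal_sub, sub_mul, hcast]
  rw [integral_sub iMA iB, integral_sub iM iA, integral_indicator measurableSet_Ioo,
    integral_indicator measurableSet_Iio, integral_indicator measurableSet_Ioi,
    setIntegral_Ioo_const_mul_osc hab hl, integral_Iio_comp_const_sub_mul_osc,
    integral_Ioi_comp_add_mul_osc, Profile.amp, Profile.amp]
  simp only [mul_sub, map_sub]
  ring

lemma integral_osc_fst_eq_amp_add_conj_amp (hW : Convex ℝ W) (hWm : MeasurableSet W)
    (hfin : volume W ≠ ∞) (hK : BddAbove (chords W univ))
    (ha : IsLUB (Prod.fst '' W) a) (ha' : ∀ p ∈ W, p.1 < a)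
    (hb : IsLUB (Prod.fst '' reflect W) b) (hb' : ∀ p ∈ W, -b < p.1) (hl : l ≠ 0) :
    ∫ p in W, osc (-l) p.1 =
      osc (-l) a * Profile.amp (deficit W a) (chordSup W univ) l +
      starRingEnd ℂ (osc (-l) b *
        Profile.amp (deficit (reflect W) b) (chordSup (reflect W) univ) l) := by
  have hKr : BddAbove (chords (reflect W) univ) := by rwa [chords_reflect, neg_univ]
  have hra : ∀ p ∈ reflect W, -a < p.1 := fun p hp => by linarith [ha' _ hp]
  have hright := profile_deficit hW hK ha hb'
  have hleft := profile_deficit (convex_reflect hW) hKr hb hra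
  simp only [integral_osc_fst hW hWm hfin hK, chordSup_reflect_univ,
    chordSup_singleton_eq_indicator hW hK ha ha' hb hb']
  exact integral_indicators_mul_osc hright.integrableOn hleft.integrableOn
    (by linarith [hright.width_pos]) hl _

end Fourier

end Chords

/-! ### Rotated frames and the support function of a planar domain -/

/-- An open convex planar domain squeezed between the discs of radii `r` and `R` about `0`. -/
structure IsConvexDomain (D : Set E2) (r R : ℝ) : Prop where
  convex : Convex ℝ D
  isOpen : IsOpen D
  pos : 0 < r
  ball_subset : Metric.ball 0 r ⊆ D
  norm_le : ∀ x ∈ D, ‖x‖ ≤ R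

/-- The point with coordinates `p` in the orthonormal frame rotated by the angle `φ`. -/
def frame (φ : ℝ) (p : ℝ × ℝ) : E2 :=
  !₂[Real.cos φ * p.1 - Real.sin φ * p.2, Real.sin φ * p.1 + Real.cos φ * p.2]

/-- The domain `D` in the coordinates of the frame rotated by `φ`. -/
def turned (D : Set E2) (φ : ℝ) : Set (ℝ × ℝ) := frame φ ⁻¹' D

/-- The support function of `D` as a function of the angle `φ` of the normal direction. -/
def height (D : Set E2) (φ : ℝ) : ℝ := sSup (Prod.fst '' turned D φ)

/-- The symmetric second difference of `H` at `φ` with step `α`. -/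
def secondDiff (H : ℝ → ℝ) (φ α : ℝ) : ℝ := H (φ + α) + H (φ - α) - 2 * H φ

section Frame

variable {D : Set E2} {φ : ℝ} {p : ℝ × ℝ}

lemma frame_zero (φ : ℝ) (p : ℝ × ℝ) : frame φ p 0 = Real.cos φ * p.1 - Real.sin φ * p.2 := rfl

lemma frame_one (φ : ℝ) (p : ℝ × ℝ) : frame φ p 1 = Real.sin φ * p.1 + Real.cos φ * p.2 := rfl

lemma norm_frame_sq (φ : ℝ) (p : ℝ × ℝ) : ‖frame φ p‖ ^ 2 = p.1 ^ 2 + p.2 ^ 2 := by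
  rw [EuclideanSpace.norm_sq_eq, Fin.sum_univ_two, frame_zero, frame_one, Real.norm_eq_abs,
    Real.norm_eq_abs, sq_abs, sq_abs]
  linear_combination (p.1 ^ 2 + p.2 ^ 2) * Real.sin_sq_add_cos_sq φ

lemma abs_fst_le_norm_frame (φ : ℝ) (p : ℝ × ℝ) : |p.1| ≤ ‖frame φ p‖ :=
  abs_le_of_sq_le_sq (by linarith [norm_frame_sq φ p, sq_nonneg p.2]) (norm_nonneg _)

lemma abs_snd_le_norm_frame (φ : ℝ) (p : ℝ × ℝ) : |p.2| ≤ ‖frame φ p‖ :=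
  abs_le_of_sq_le_sq (by linarith [norm_frame_sq φ p, sq_nonneg p.1]) (norm_nonneg _)

lemma frame_eq_frame_add (φ α : ℝ) (p : ℝ × ℝ) :
    frame φ p = frame (φ + α) (Real.cos α * p.1 + Real.sin α * p.2,
      Real.cos α * p.2 - Real.sin α * p.1) := by
  have h := Real.sin_sq_add_cos_sq α
  ext i
  fin_cases i
  · simp only [Fin.zero_eta, frame_zero, Real.cos_add, Real.sin_add]
    linear_combination -(Real.cos φ * p.1 - Real.sin φ * p.2) * h
  · simp only [Fin.mk_one, frame_one, Real.cos_add, Real.sin_add]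
    linear_combination -(Real.sin φ * p.1 + Real.cos φ * p.2) * h

lemma continuous_frame (φ : ℝ) : Continuous (frame φ) := by
  unfold frame
  fun_prop

lemma frame_smul_add_smul (φ x y : ℝ) (p q : ℝ × ℝ) :
    frame φ (x • p + y • q) = x • frame φ p + y • frame φ q := by
  ext i
  fin_cases i <;> simp [frame] <;> ring

lemma frame_add_pi (φ : ℝ) (p : ℝ × ℝ) : frame (φ + Real.pi) p = frame φ (-p) := by
  ext i
  fin_cases i <;> simp [frame, sub_eq_add_neg]

lemma mem_turned_add_pi : p ∈ turned D (φ + Real.pi) ↔ -p ∈ turned D φ := by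
  rw [turned, turned, mem_preimage, mem_preimage, frame_add_pi]

lemma fst_image_reflect_turned (D : Set E2) (φ : ℝ) :
    Prod.fst '' reflect (turned D φ) = Prod.fst '' turned D (φ + Real.pi) := by
  ext s
  constructor
  · rintro ⟨p, hp, rfl⟩
    exact ⟨(p.1, -p.2), mem_turned_add_pi.2 (by simpa [reflect] using hp), rfl⟩
  · rintro ⟨p, hp, rfl⟩
    exact ⟨(p.1, -p.2), mem_turned_add_pi.1 hp, rfl⟩

lemma chords_reflect_turned (D : Set E2) (φ : ℝ) (S : Set ℝ) :
    chords (reflect (turned D φ)) S = chords (turned D (φ + Real.pi)) S := by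
  ext L
  constructor
  · rintro ⟨s, hs, y, y', hy, hy', rfl⟩
    exact ⟨s, hs, -y', -y, mem_turned_add_pi.2 (by simpa [reflect] using hy'),
      mem_turned_add_pi.2 (by simpa [reflect] using hy), by ring⟩
  · rintro ⟨s, hs, y, y', hy, hy', rfl⟩
    exact ⟨s, hs, -y', -y, mem_turned_add_pi.1 hy', mem_turned_add_pi.1 hy, by ring⟩

lemma chordSup_reflect_turned (D : Set E2) (φ : ℝ) (S : Set ℝ) :
    chordSup (reflect (turned D φ)) S = chordSup (turned D (φ + Real.pi)) S := by
  rw [chordSup, chords_reflect_turned, chordSup]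

lemma deficit_reflect_turned (D : Set E2) (φ a : ℝ) :
    deficit (reflect (turned D φ)) a = deficit (turned D (φ + Real.pi)) a := by
  ext u
  simp only [deficit, chordSup_reflect_turned]

end Frame

lemma convexOn_cos_mul_add_sin_mul_add_sq {A B C φ : ℝ}
    (hC : ∀ ψ, Real.cos (ψ - φ) * A + Real.sin (ψ - φ) * B ≤ C) :
    ConvexOn ℝ univ fun ψ => Real.cos (ψ - φ) * A + Real.sin (ψ - φ) * B + C * ψ ^ 2 / 2 := by
  have hsub : ∀ ψ : ℝ, HasDerivAt (fun ψ : ℝ => ψ - φ) 1 ψ := fun ψ =>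
    (hasDerivAt_id ψ).sub_const φ
  have hderiv : ∀ ψ : ℝ, HasDerivAt
      (fun ψ => Real.cos (ψ - φ) * A + Real.sin (ψ - φ) * B + C * ψ ^ 2 / 2)
      (-Real.sin (ψ - φ) * A + Real.cos (ψ - φ) * B + C * ψ) ψ := fun ψ => by
    refine ((((hsub ψ).cos.mul_const A).add ((hsub ψ).sin.mul_const B)).add
      (((hasDerivAt_pow 2 ψ).const_mul C).div_const 2)).congr_deriv ?_
    push_cast
    ring
  have hderiv₂ : ∀ ψ : ℝ, HasDerivAt
      (fun ψ => -Real.sin (ψ - φ) * A + Real.cos (ψ - φ) * B + C * ψ)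
      (C - (Real.cos (ψ - φ) * A + Real.sin (ψ - φ) * B)) ψ := fun ψ => by
    refine ((((hsub ψ).sin.neg.mul_const A).add ((hsub ψ).cos.mul_const B)).add
      ((hasDerivAt_id ψ).const_mul C)).congr_deriv ?_
    ring
  refine MonotoneOn.convexOn_of_deriv convex_univ
    (fun ψ _ => (hderiv ψ).continuousAt.continuousWithinAt)
    (fun ψ _ => (hderiv ψ).differentiableAt.differentiableWithinAt) ?_
  rw [show deriv _ = _ from funext fun ψ => (hderiv ψ).deriv]
  refine (monotone_of_deriv_nonneg (fun ψ => (hderiv₂ ψ).differentiableAt) fun ψ => ?_).monotoneOn _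
  rw [(hderiv₂ ψ).deriv]
  linarith [hC ψ]

-- The choice `α = √(u / N)` balances the two terms of the hypothesis.
lemma le_five_mul_sqrt_of_mul_sin_le {L u N : ℝ} (hN : 1 ≤ N) (hu : 0 < u) (hu1 : u ≤ 1)
    (h : ∀ α ∈ Ioc (0 : ℝ) 1, L * Real.sin α ≤ N * α ^ 2 + 2 * u) : L ≤ 5 * √(u * N) := by
  rcases le_or_gt L 0 with hL | hL
  · exact hL.trans (by positivity)
  have hN0 : 0 < N := one_pos.trans_le hN
  set α := √(u / N) with hα
  have hα0 : 0 < α := Real.sqrt_pos.2 (by positivity)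
  have hα1 : α ≤ 1 := Real.sqrt_le_one.2 ((div_le_one hN0).2 (hu1.trans hN))
  have hαsq : N * α ^ 2 = u := by rw [hα, Real.sq_sqrt (by positivity)]; field_simp
  have hαmul : α * √(u * N) = u := by
    rw [hα, ← Real.sqrt_mul (by positivity), show u / N * (u * N) = u ^ 2 by field_simp,
      Real.sqrt_sq hu.le]
  have hsin : 3 / 5 * α ≤ Real.sin α := by
    refine le_trans ?_ (Real.mul_le_sin hα0.le (by linarith [Real.pi_gt_three]))
    refine mul_le_mul_of_nonneg_right ?_ hα0.le
    rw [div_le_div_iff₀ (by norm_num) Real.pi_pos]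
    linarith [Real.pi_lt_d2]
  have hmul : L * (3 / 5 * α) ≤ 3 * u :=
    (mul_le_mul_of_nonneg_left hsin hL.le).trans (by linarith [h α ⟨hα0, hα1⟩])
  refine le_of_mul_le_mul_right ?_ hα0
  linarith

namespace IsConvexDomain

variable {D : Set E2} {r R φ : ℝ} {p : ℝ × ℝ} (hD : IsConvexDomain D r R)
include hD

lemma convex_turned (φ : ℝ) : Convex ℝ (turned D φ) := fun p hp q hq x y hx hy hxy => by
  rw [turned, mem_preimage, frame_smul_add_smul]
  exact hD.convex hp hq hx hy hxy

lemma isOpen_turned (φ : ℝ) : IsOpen (turned D φ) := hD.isOpen.preimage (continuous_frame φ)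

lemma abs_fst_le (hp : p ∈ turned D φ) : |p.1| ≤ R :=
  (abs_fst_le_norm_frame φ p).trans (hD.norm_le _ hp)

lemma abs_snd_le (hp : p ∈ turned D φ) : |p.2| ≤ R :=
  (abs_snd_le_norm_frame φ p).trans (hD.norm_le _ hp)

lemma volume_turned_ne_top (φ : ℝ) : volume (turned D φ) ≠ ∞ := by
  have hsub : turned D φ ⊆ Icc (-R) R ×ˢ Icc (-R) R := fun p hp =>
    ⟨abs_le.1 (hD.abs_fst_le hp), abs_le.1 (hD.abs_snd_le hp)⟩
  exact ((isCompact_Icc.prod isCompact_Icc).measure_lt_top.trans_le' (measure_mono hsub)).ne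

lemma mem_turned_of_sq_lt (hp : p.1 ^ 2 + p.2 ^ 2 < r ^ 2) : p ∈ turned D φ := by
  refine hD.ball_subset (mem_ball_zero_iff.2 (lt_of_pow_lt_pow_left₀ 2 hD.pos.le ?_))
  rwa [norm_frame_sq]

lemma zero_mem_turned (φ : ℝ) : (0 : ℝ × ℝ) ∈ turned D φ :=
  hD.mem_turned_of_sq_lt (by simpa using pow_pos hD.pos 2)

lemma isLUB_height (φ : ℝ) : IsLUB (Prod.fst '' turned D φ) (height D φ) :=
  isLUB_csSup ⟨_, _, hD.zero_mem_turned φ, rfl⟩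
    ⟨R, forall_mem_image.2 fun _ hp => (abs_le.1 (hD.abs_fst_le hp)).2⟩

lemma fst_le_height (hp : p ∈ turned D φ) : p.1 ≤ height D φ :=
  (hD.isLUB_height φ).1 (mem_image_of_mem _ hp)

lemma fst_lt_height (hp : p ∈ turned D φ) : p.1 < height D φ := by
  have hopen : IsOpen (Prod.fst '' turned D φ) := isOpenMap_fst _ (hD.isOpen_turned φ)
  obtain ⟨_, hs, q, hq, rfl⟩ := (hopen.eventually_mem (mem_image_of_mem _ hp)).exists_gt
  exact hs.trans_le (hD.fst_le_height hq)

lemma neg_height_lt_fst (hp : p ∈ turned D φ) : -height D (φ + Real.pi) < p.1 := by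
  have hneg := hD.fst_lt_height (mem_turned_add_pi.2 (by rwa [neg_neg] : - -p ∈ turned D φ))
  rw [Prod.fst_neg] at hneg
  linarith

lemma height_le (φ : ℝ) : height D φ ≤ R :=
  (hD.isLUB_height φ).2 (forall_mem_image.2 fun _ hp => (abs_le.1 (hD.abs_fst_le hp)).2)

lemma le_height (φ : ℝ) : r ≤ height D φ := by
  refine le_of_forall_lt fun c hc => ?_
  rcases lt_or_ge c 0 with hc0 | hc0
  · exact hc0.trans (hD.fst_lt_height (hD.zero_mem_turned φ))
  · exact hD.fst_lt_height (p := (c, 0)) (hD.mem_turned_of_sq_lt (by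
      rw [zero_pow two_ne_zero, add_zero]; gcongr))

lemma height_pos (φ : ℝ) : 0 < height D φ := hD.pos.trans_le (hD.le_height φ)

lemma radius_pos : 0 < R := (hD.height_pos 0).trans_le (hD.height_le 0)

lemma cos_mul_add_sin_mul_le_height (hp : p ∈ turned D φ) (α : ℝ) :
    Real.cos α * p.1 + Real.sin α * p.2 ≤ height D (φ + α) := by
  refine hD.fst_le_height (φ := φ + α) (p := (_, Real.cos α * p.2 - Real.sin α * p.1)) ?_
  rwa [turned, mem_preimage, ← frame_eq_frame_add]

lemma chord_le {L : ℝ} (hL : L ∈ chords (turned D φ) univ) : L ≤ 2 * R := by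
  obtain ⟨s, -, y, y', hy, hy', rfl⟩ := hL
  linarith [(abs_le.1 (hD.abs_snd_le hy)).1, (abs_le.1 (hD.abs_snd_le hy')).2]

lemma bddAbove_chords (φ : ℝ) : BddAbove (chords (turned D φ) univ) :=
  ⟨2 * R, fun _ hL => hD.chord_le hL⟩

lemma chord_mul_sin_le {u α L : ℝ} (hu : 0 ≤ u) (hα0 : 0 < α) (hα1 : α ≤ 1)
    (hL : L ∈ chords (turned D φ) (Ici (height D φ - u))) :
    L * Real.sin α ≤ secondDiff (height D) φ α + R * α ^ 2 + 2 * u := by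
  obtain ⟨s, hs, y, y', hy, hy', rfl⟩ := hL
  have hright := hD.cos_mul_add_sin_mul_le_height hy' α
  have hleft := hD.cos_mul_add_sin_mul_le_height hy (-α)
  rw [Real.cos_neg, Real.sin_neg, ← sub_eq_add_neg φ α] at hleft
  have hcos : 1 - α ^ 2 / 2 ≤ Real.cos α := Real.one_sub_sq_div_two_le_cos
  have hcos0 : 0 ≤ Real.cos α := by nlinarith
  have hcos1 : Real.cos α ≤ 1 := Real.cos_le_one _
  have hmul : height D φ * (1 - Real.cos α) ≤ R * (α ^ 2 / 2) :=
    mul_le_mul (hD.height_le φ) (by linarith) (by linarith) hD.radius_pos.le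
  have hdepth := mul_le_mul_of_nonneg_right (mem_Ici.1 hs) hcos0
  have hcosu := mul_le_mul_of_nonneg_left hcos1 hu
  rw [secondDiff]
  linarith

lemma chordSup_cap_le {N u : ℝ} (hN : 1 ≤ N)
    (h : ∀ α ∈ Ioc (0 : ℝ) 1, secondDiff (height D) φ α + R * α ^ 2 ≤ N * α ^ 2)
    (hu : 0 < u) (hu1 : u ≤ 1) :
    chordSup (turned D φ) (Ici (height D φ - u)) ≤ 5 * √(u * N) :=
  chordSup_le (by positivity) fun _ hL => le_five_mul_sqrt_of_mul_sin_le hN hu hu1 fun α hα =>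
    (hD.chord_mul_sin_le hu.le hα.1 hα.2 hL).trans (by linarith [h α hα])

-- The support function is a supremum of trigonometric polynomials with second derivative at
-- least `-R`.
lemma convexOn_height_add_sq : ConvexOn ℝ univ fun φ => height D φ + R * φ ^ 2 / 2 := by
  refine ⟨convex_univ, fun φ₁ _ φ₂ _ a b ha hb hab => ?_⟩
  set φ := a • φ₁ + b • φ₂ with hφ
  simp only [smul_eq_mul]
  suffices h : height D φ ≤ a * (height D φ₁ + R * φ₁ ^ 2 / 2) +
      b * (height D φ₂ + R * φ₂ ^ 2 / 2) - R * φ ^ 2 / 2 by linarith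
  refine (hD.isLUB_height φ).2 (forall_mem_image.2 fun p hp => ?_)
  have hp_le : ∀ ψ, Real.cos (ψ - φ) * p.1 + Real.sin (ψ - φ) * p.2 ≤ height D ψ := fun ψ => by
    simpa only [add_sub_cancel] using hD.cos_mul_add_sin_mul_le_height hp (ψ - φ)
  have hconvex := (convexOn_cos_mul_add_sin_mul_add_sq
    fun ψ => (hp_le ψ).trans (hD.height_le ψ)).2 (mem_univ φ₁) (mem_univ φ₂) ha hb hab
  rw [← hφ] at hconvex
  simp only [sub_self, Real.cos_zero, Real.sin_zero, smul_eq_mul] at hconvex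
  have h₁ := mul_le_mul_of_nonneg_left (hp_le φ₁) ha
  have h₂ := mul_le_mul_of_nonneg_left (hp_le φ₂) hb
  linarith

lemma continuous_height : Continuous (height D) := by
  have h := hD.convexOn_height_add_sq.continuousOn isOpen_univ
  rw [continuousOn_univ] at h
  refine (h.sub (by fun_prop : Continuous fun φ : ℝ => R * φ ^ 2 / 2)).congr fun φ => ?_
  exact add_sub_cancel_right _ _

end IsConvexDomain

/-- The amplitude of the contribution of the supporting line with normal direction `φ` to the
Fourier transform of the indicator of `D`. -/
def capAmp (D : Set E2) (φ l : ℝ) : ℂ :=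
  Profile.amp (deficit (turned D φ) (height D φ)) (chordSup (turned D φ) univ) l

/-- The derivative of `capAmp D φ`. -/
def capAmpDeriv (D : Set E2) (φ l : ℝ) : ℂ :=
  Profile.ampDeriv (deficit (turned D φ) (height D φ)) (chordSup (turned D φ) univ) l

namespace IsConvexDomain

variable {D : Set E2} {r R φ l : ℝ} (hD : IsConvexDomain D r R)
include hD

lemma profile (φ : ℝ) :
    Profile (deficit (turned D φ) (height D φ)) (chordSup (turned D φ) univ)
      (height D φ + height D (φ + Real.pi)) :=
  profile_deficit (hD.convex_turned φ) (hD.bddAbove_chords φ) (hD.isLUB_height φ)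
    fun _ hp => hD.neg_height_lt_fst hp

lemma integral_turned_osc (φ : ℝ) (hl : l ≠ 0) :
    ∫ p in turned D φ, osc (-l) p.1 = osc (-l) (height D φ) * capAmp D φ l +
      starRingEnd ℂ (osc (-l) (height D (φ + Real.pi)) * capAmp D (φ + Real.pi) l) := by
  have hleft : IsLUB (Prod.fst '' reflect (turned D φ)) (height D (φ + Real.pi)) := by
    rw [fst_image_reflect_turned]
    exact hD.isLUB_height _
  rw [integral_osc_fst_eq_amp_add_conj_amp (hD.convex_turned φ) (hD.isOpen_turned φ).measurableSet
    (hD.volume_turned_ne_top φ) (hD.bddAbove_chords φ) (hD.isLUB_height φ)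
    (fun _ hp => hD.fst_lt_height hp) hleft (fun _ hp => hD.neg_height_lt_fst hp) hl,
    chordSup_reflect_turned, deficit_reflect_turned, capAmp, capAmp]

lemma norm_capAmp_sq_le {N : ℝ} (hN : 1 ≤ N)
    (h : ∀ α ∈ Ioc (0 : ℝ) 1, secondDiff (height D) φ α + R * α ^ 2 ≤ N * α ^ 2)
    (hl : 2 * Real.pi ≤ l) : ‖capAmp D φ l‖ ^ 2 ≤ 1600 * N / l ^ 3 := by
  have hpi := Real.pi_pos
  have hl0 : 0 < l := by linarith
  have hdepth : 2 * (Real.pi / l) ≤ 1 := by rwa [← mul_div_assoc, div_le_one hl0]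
  have hamp := (hD.profile φ).norm_amp_le (div_pos hpi hl0) (mul_div_cancel₀ _ hl0.ne')
  rw [deficit, sub_sub_cancel] at hamp
  have hcap := hamp.trans
    (mul_le_mul_of_nonneg_left (hD.chordSup_cap_le hN h (by positivity) hdepth) (by positivity))
  calc ‖capAmp D φ l‖ ^ 2 ≤ (Real.pi / l * (5 * √(2 * (Real.pi / l) * N))) ^ 2 := by
        gcongr; exact hcap
    _ = 50 * Real.pi ^ 3 * N / l ^ 3 := by
      rw [mul_pow, mul_pow, Real.sq_sqrt (by positivity)]; field_simp; ring
    _ ≤ 1600 * N / l ^ 3 := by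
      gcongr
      have hpi_cube : Real.pi ^ 3 ≤ 3.15 ^ 3 := by gcongr; exact Real.pi_lt_d2.le
      linarith

lemma hasDerivAt_capAmp (φ : ℝ) (hl : l ≠ 0) : HasDerivAt (capAmp D φ) (capAmpDeriv D φ l) l :=
  (hD.profile φ).hasDerivAt_amp hl

lemma norm_capAmpDeriv_le (φ : ℝ) (hl : 0 < l) : ‖capAmpDeriv D φ l‖ ≤ 48 * R / l ^ 2 := by
  have hchord : chordSup (turned D φ) univ ≤ 2 * R :=
    chordSup_le (by linarith [hD.radius_pos]) fun _ hL => hD.chord_le hL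
  refine ((hD.profile φ).norm_ampDeriv_le hl).trans (div_le_div_of_nonneg_right ?_ (sq_nonneg l))
  linarith

end IsConvexDomain

/-! ### Functions of weak type `L¹` -/

/-- The function `f` is of weak type `L¹`, with constant `V`. -/
def WeakL1Bound {X : Type*} [MeasurableSpace X] (μ : Measure X) (f : X → ℝ≥0∞) (V : ℝ≥0∞) : Prop :=
  ∀ t, t * μ {x | t < f x} ≤ V

/-- The sum of the dyadic thresholds `a 2 ^ i`, `i < n`, lying below `x`. -/
def dyadicSum (a : ℝ≥0∞) (n : ℕ) (x : ℝ≥0∞) : ℝ≥0∞ :=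
  ∑ i ∈ Finset.range n, {y | a * 2 ^ i < y}.indicator (fun _ => a * 2 ^ i) x

lemma min_le_add_dyadicSum (a x : ℝ≥0∞) (n : ℕ) : min x (a * 2 ^ n) ≤ a + dyadicSum a n x := by
  induction n with
  | zero => simp [dyadicSum]
  | succ n ih =>
    rw [dyadicSum, Finset.sum_range_succ, ← dyadicSum, ← add_assoc]
    refine le_trans ?_ (add_le_add_left ih _)
    by_cases h : a * 2 ^ n < x
    · rw [min_eq_right h.le, indicator_of_mem (by exact h), ← mul_two, mul_assoc, ← pow_succ]
      exact min_le_right _ _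
    · rw [min_eq_left (not_lt.1 h), indicator_of_notMem (by exact h), add_zero]
      exact min_le_left _ _

lemma measurable_dyadicSum (a : ℝ≥0∞) (n : ℕ) : Measurable (dyadicSum a n) :=
  Finset.measurable_fun_sum _ fun _ _ => measurable_const.indicator measurableSet_Ioi

namespace WeakL1Bound

variable {X Y ι : Type*} [MeasurableSpace X] [MeasurableSpace Y] {μ : Measure X} {f g : X → ℝ≥0∞}
  {V W : ℝ≥0∞}

lemma mono (hf : WeakL1Bound μ f V) (hgf : ∀ x, g x ≤ f x) : WeakL1Bound μ g V := fun t =>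
  (mul_le_mul_right (measure_mono fun x hx => lt_of_lt_of_le hx (hgf x)) t).trans (hf t)

lemma const (μ : Measure X) (c : ℝ≥0∞) : WeakL1Bound μ (fun _ => c) (c * μ univ) := fun t => by
  by_cases h : t < c
  · exact mul_le_mul' h.le (measure_mono (subset_univ _))
  · simp [h]

lemma add (hf : WeakL1Bound μ f V) (hg : WeakL1Bound μ g W) :
    WeakL1Bound μ (fun x => f x + g x) (2 * (V + W)) := fun t => by
  have hsub : {x | t < f x + g x} ⊆ {x | t / 2 < f x} ∪ {x | t / 2 < g x} := fun x hx => by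
    by_contra! h
    simp only [mem_union, mem_ofPred_eq, not_or, not_lt] at h hx
    exact absurd (hx.trans_le (add_le_add h.1 h.2)) (by rw [ENNReal.add_halves]; exact lt_irrefl t)
  calc t * μ {x | t < f x + g x}
      ≤ t * (μ {x | t / 2 < f x} + μ {x | t / 2 < g x}) :=
        mul_le_mul_right ((measure_mono hsub).trans (measure_union_le _ _)) t
    _ = 2 * (t / 2 * μ {x | t / 2 < f x} + t / 2 * μ {x | t / 2 < g x}) := by
        rw [← mul_add, ← mul_assoc, ENNReal.mul_div_cancel two_ne_zero ENNReal.ofNat_ne_top]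
    _ ≤ 2 * (V + W) := by gcongr <;> apply_assumption

lemma comp {ν : Measure Y} {F : Y → ℝ≥0∞} (hF : WeakL1Bound ν F V) {φ : X → Y} (hφ : Measurable φ)
    (hμ : μ.map φ ≤ ν) : WeakL1Bound μ (fun x => F (φ x)) V := fun t =>
  (mul_le_mul_right ((Measure.le_map_apply hφ.aemeasurable _).trans (hμ _)) t).trans (hF t)

lemma lintegral_dyadicSum_le (hf : WeakL1Bound μ f V) (hfm : Measurable f) (a : ℝ≥0∞) (n : ℕ) :
    ∫⁻ x, dyadicSum a n (f x) ∂μ ≤ n * V := by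
  have hmeas : ∀ i : ℕ, MeasurableSet {x | a * 2 ^ i < f x} := fun i =>
    measurableSet_lt measurable_const hfm
  have hcomp : ∀ i x, {y | a * 2 ^ i < y}.indicator (fun _ => a * 2 ^ i) (f x) =
      {x | a * 2 ^ i < f x}.indicator (fun _ => a * 2 ^ i) x := fun _ _ => rfl
  simp only [dyadicSum, hcomp]
  rw [lintegral_finsetSum _ fun i _ => measurable_const.indicator (hmeas i)]
  refine (Finset.sum_le_card_nsmul _ _ V fun i _ => ?_).trans_eq (by simp)
  rw [lintegral_indicator_const (hmeas i)]
  exact hf _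

section Tsum

variable [Countable ι] {w : ι → ℝ≥0∞} {n : ι → ℕ} {F : ι → X → ℝ≥0∞} {a t : ℝ≥0∞}

lemma mul_measure_iUnion_le (hF : ∀ k, WeakL1Bound μ (F k) V)
    (hat : ∀ k, t ≤ a * 2 ^ n k * w k) :
    t * μ (⋃ k, {x | a * 2 ^ n k < F k x}) ≤ V * ∑' k, w k := by
  calc t * μ (⋃ k, {x | a * 2 ^ n k < F k x})
      ≤ ∑' k, t * μ {x | a * 2 ^ n k < F k x} := by
        rw [ENNReal.tsum_mul_left]
        exact mul_le_mul_right (measure_iUnion_le _) t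
    _ ≤ ∑' k, V * w k := ENNReal.tsum_le_tsum fun k => by
        refine (mul_le_mul_left (hat k) _).trans ?_
        rw [mul_right_comm]
        exact mul_le_mul_left (hF k _) _
    _ = V * ∑' k, w k := ENNReal.tsum_mul_left

lemma mul_measure_le_tsum_dyadicSum_le (hF : ∀ k, WeakL1Bound μ (F k) V)
    (hFm : ∀ k, Measurable (F k)) :
    t * μ {x | t ≤ ∑' k, w k * dyadicSum a (n k) (F k x)} ≤ V * ∑' k, w k * n k := by
  have hmeas : ∀ k, Measurable fun x => dyadicSum a (n k) (F k x) := fun k =>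
    (measurable_dyadicSum a (n k)).comp (hFm k)
  refine (mul_meas_ge_le_lintegral (Measurable.tsum fun k => (hmeas k).const_mul (w k)) t).trans ?_
  rw [lintegral_tsum fun k => ((hmeas k).const_mul _).aemeasurable, ← ENNReal.tsum_mul_left]
  refine ENNReal.tsum_le_tsum fun k => ?_
  rw [lintegral_const_mul _ (hmeas k), mul_left_comm, mul_comm V]
  exact mul_le_mul_right ((hF k).lintegral_dyadicSum_le (hFm k) a (n k)) _

omit [MeasurableSpace X] [Countable ι] in
lemma setOf_lt_tsum_subset (ht : t ≠ ∞) (ha : a * ∑' k, w k = t / 2) :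
    {x | t < ∑' k, w k * F k x} ⊆ (⋃ k, {x | a * 2 ^ n k < F k x}) ∪
      {x | t / 2 ≤ ∑' k, w k * dyadicSum a (n k) (F k x)} := fun x hx => by
  refine or_iff_not_imp_left.2 fun hsmall => ?_
  simp only [mem_iUnion, mem_ofPred_eq, not_exists, not_lt] at hsmall hx ⊢
  have hle : ∑' k, w k * F k x ≤ t / 2 + ∑' k, w k * dyadicSum a (n k) (F k x) := by
    rw [← ha, mul_comm a, ← ENNReal.tsum_mul_right, ← ENNReal.tsum_add]
    simp only [← mul_add]
    exact ENNReal.tsum_le_tsum fun k => mul_le_mul_right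
      ((le_min le_rfl (hsmall k)).trans (min_le_add_dyadicSum a _ _)) _
  refine (ENNReal.add_le_add_iff_left (ENNReal.div_ne_top ht two_ne_zero)).1 ?_
  rw [ENNReal.add_halves]
  exact hx.le.trans hle

-- Stein and Weiss. A single term exceeds `a 2 ^ n k` only on a small set; off these sets each term
-- is dominated by its dyadic layers, whose integrals cost a factor `n k` each.
lemma tsum (hF : ∀ k, WeakL1Bound μ (F k) V) (hFm : ∀ k, Measurable (F k))
    (hw : ∑' k, w k ≠ ∞) (hn : ∀ k, 2 * ∑' j, w j ≤ 2 ^ n k * w k) :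
    WeakL1Bound μ (fun x => ∑' k, w k * F k x)
      (V * ∑' k, w k + 2 * (V * ∑' k, w k * n k)) := fun t => by
  rcases eq_or_ne (∑' k, w k) 0 with hw0 | hw0
  · simp [ENNReal.tsum_eq_zero.1 hw0]
  rcases eq_or_ne t ∞ with rfl | ht
  · simp
  set a := t / (2 * ∑' k, w k)
  have hat : a * (2 * ∑' k, w k) = t := ENNReal.div_mul_cancel
    (mul_ne_zero two_ne_zero hw0) (ENNReal.mul_ne_top ENNReal.ofNat_ne_top hw)
  have ha2 : a * ∑' k, w k = t / 2 := by
    rw [ENNReal.eq_div_iff two_ne_zero ENNReal.ofNat_ne_top, ← hat]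
    ring
  have hlarge : ∀ k, t ≤ a * 2 ^ n k * w k := fun k => by
    rw [← hat, mul_assoc]
    exact mul_le_mul_right (hn k) a
  calc t * μ {x | t < ∑' k, w k * F k x}
      ≤ t * μ (⋃ k, {x | a * 2 ^ n k < F k x}) +
          2 * (t / 2 * μ {x | t / 2 ≤ ∑' k, w k * dyadicSum a (n k) (F k x)}) := by
        rw [← mul_assoc, ENNReal.mul_div_cancel two_ne_zero ENNReal.ofNat_ne_top, ← mul_add]
        exact mul_le_mul_right ((measure_mono (setOf_lt_tsum_subset ht ha2)).trans
          (measure_union_le _ _)) t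
    _ ≤ _ := add_le_add (mul_measure_iUnion_le hF hlarge)
        (mul_le_mul_right (mul_measure_le_tsum_dyadicSum_le hF hFm) 2)

end Tsum

end WeakL1Bound

/-! ### The maximal function of second differences -/

-- The covering argument behind the weak type inequality for the Hardy–Littlewood maximal function.
lemma mul_volume_le_of_forall_exists_closedBall {μ : Measure ℝ} {A : Set ℝ} {t : ℝ≥0∞} {R : ℝ}
    (h : ∀ x ∈ A, ∃ α ∈ Ioc 0 R, t * ENNReal.ofReal α ≤ μ (Metric.closedBall x α)) :
    t * volume A ≤ 10 * μ (Metric.cthickening R A) := by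
  obtain ⟨u, huT, hdisj, hcover⟩ := Vitali.exists_disjoint_subfamily_covering_enlargement_closedBall
    {p : ℝ × ℝ | p.1 ∈ A ∧ p.2 ∈ Ioc 0 R ∧
      t * ENNReal.ofReal p.2 ≤ μ (Metric.closedBall p.1 p.2)}
    (fun p => p.1) (fun p => p.2) R (fun p hp => hp.2.1.2) 5 (by norm_num)
  have hu : u.Countable := hdisj.countable_of_nonempty_interior fun p hp =>
    ⟨p.1, Metric.ball_subset_interior_closedBall (Metric.mem_ball_self (huT hp).2.1.1)⟩
  have hA : A ⊆ ⋃ p ∈ u, Metric.closedBall p.1 (5 * p.2) := fun x hx => by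
    obtain ⟨α, hα, hle⟩ := h x hx
    obtain ⟨p, hp, hsub⟩ := hcover (x, α) ⟨hx, hα, hle⟩
    exact mem_biUnion hp (hsub (Metric.mem_closedBall_self hα.1.le))
  have hthick : ⋃ p ∈ u, Metric.closedBall p.1 p.2 ⊆ Metric.cthickening R A :=
    iUnion₂_subset fun p hp => (Metric.closedBall_subset_cthickening (huT hp).1 _).trans
      (Metric.cthickening_mono (huT hp).2.1.2 A)
  calc t * volume A
      ≤ t * ∑' p : u, volume (Metric.closedBall p.1.1 (5 * p.1.2)) :=
        mul_le_mul_right ((measure_mono hA).trans (measure_biUnion_le _ hu _)) t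
    _ = 10 * ∑' p : u, t * ENNReal.ofReal p.1.2 := by
        simp only [Real.volume_closedBall, ← mul_assoc, ENNReal.tsum_mul_left]
        norm_num [ENNReal.ofReal_mul, ENNReal.tsum_mul_left]
        ring
    _ ≤ 10 * ∑' p : u, μ (Metric.closedBall p.1.1 p.1.2) :=
        mul_le_mul_right (ENNReal.tsum_le_tsum fun p => (huT p.2).2.2) 10
    _ = 10 * μ (⋃ p ∈ u, Metric.closedBall p.1 p.2) := by
        rw [measure_biUnion hu hdisj fun _ _ => measurableSet_closedBall]
    _ ≤ 10 * μ (Metric.cthickening R A) := mul_le_mul_right (measure_mono hthick) 10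

/-- The maximal second difference quotient of `H` at `φ`, over steps in `(0, 1]`. -/
def curvMax (H : ℝ → ℝ) (φ : ℝ) : ℝ≥0∞ :=
  ⨆ α ∈ Ioc (0 : ℝ) 1, ENNReal.ofReal (secondDiff H φ α / α ^ 2)

lemma measurable_curvMax {H : ℝ → ℝ} (hH : Continuous H) : Measurable (curvMax H) := by
  refine LowerSemicontinuous.measurable (lowerSemicontinuous_biSup fun α _ => ?_)
  unfold secondDiff
  exact (ENNReal.continuous_ofReal.comp (by fun_prop)).lowerSemicontinuous

lemma curvMax_mono {H K : ℝ → ℝ} {φ : ℝ} (h : ∀ α, secondDiff H φ α ≤ secondDiff K φ α) :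
    curvMax H φ ≤ curvMax K φ :=
  iSup₂_mono fun α _ => ENNReal.ofReal_le_ofReal (div_le_div_of_nonneg_right (h α) (sq_nonneg α))

lemma secondDiff_le_curvMax_mul_sq {H : ℝ → ℝ} {φ α : ℝ} (hH : curvMax H φ ≠ ∞)
    (hα : α ∈ Ioc (0 : ℝ) 1) : secondDiff H φ α ≤ (curvMax H φ).toReal * α ^ 2 := by
  rw [← div_le_iff₀ (pow_pos hα.1 2)]
  exact (ENNReal.ofReal_le_iff_le_toReal hH).1
    (le_iSup₂ (f := fun α (_ : α ∈ Ioc (0 : ℝ) 1) =>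
      ENNReal.ofReal (secondDiff H φ α / α ^ 2)) α hα)

lemma slope_le_rightDeriv_of_convexOn_univ {f : ℝ → ℝ} (hf : ConvexOn ℝ univ f) {x y : ℝ}
    (hxy : x < y) : slope f x y ≤ derivWithin f (Ioi y) y :=
  (hf.slope_le_leftDeriv_of_mem_interior (mem_univ x) (by simp) hxy).trans
    (hf.leftDeriv_le_rightDeriv_of_mem_interior (by simp))

-- The measure is the second derivative of `f`, as the Stieltjes measure of the right derivative.
lemma exists_measure_secondDiff_div_le {f : ℝ → ℝ} (hf : ConvexOn ℝ univ f) :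
    ∃ μ : Measure ℝ, IsFiniteMeasureOnCompacts μ ∧ ∀ φ α : ℝ, 0 < α →
      ENNReal.ofReal (secondDiff f φ α / α) ≤ μ (Metric.closedBall φ α) := by
  have hmono : Monotone fun x => derivWithin f (Ioi x) x := by
    have h := hf.monotoneOn_rightDeriv
    rwa [interior_univ, monotoneOn_univ] at h
  refine ⟨hmono.stieltjesFunction.measure, inferInstance, fun φ α hα => ?_⟩
  rw [Real.closedBall_eq_Icc, StieltjesFunction.measure_Icc]
  refine ENNReal.ofReal_le_ofReal ?_
  have hright : slope f φ (φ + α) ≤ hmono.stieltjesFunction (φ + α) := by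
    refine (slope_le_rightDeriv_of_convexOn_univ hf (by linarith)).trans ?_
    rw [hmono.stieltjesFunction_eq]
    exact hmono.le_rightLim le_rfl
  have hleft : Function.leftLim hmono.stieltjesFunction (φ - α) ≤ slope f (φ - α) φ := by
    refine le_trans ?_ (hf.rightDeriv_le_slope_of_mem_interior (by simp) (mem_univ _)
      (by linarith : φ - α < φ))
    refine le_of_tendsto (hmono.stieltjesFunction.mono.tendsto_leftLim _) ?_
    filter_upwards [self_mem_nhdsWithin] with y hy
    rw [hmono.stieltjesFunction_eq]
    exact hmono.rightLim_le hy
  rw [slope_def_field, add_sub_cancel_left] at hright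
  rw [slope_def_field, sub_sub_cancel] at hleft
  refine le_trans (le_of_eq ?_) (sub_le_sub hright hleft)
  rw [secondDiff]
  ring

lemma exists_weakL1Bound_curvMax {f : ℝ → ℝ} (hf : ConvexOn ℝ univ f) {S : Set ℝ}
    (hS : MeasurableSet S) (hSb : Bornology.IsBounded S) :
    ∃ V ≠ ∞, WeakL1Bound (volume.restrict S) (curvMax f) V := by
  obtain ⟨μ, hμ, hμf⟩ := exists_measure_secondDiff_div_le hf
  refine ⟨10 * μ (Metric.cthickening 1 S), ENNReal.mul_ne_top ENNReal.ofNat_ne_top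
    (Metric.isCompact_of_isClosed_isBounded Metric.isClosed_cthickening
      hSb.cthickening).measure_lt_top.ne, fun t => ?_⟩
  rw [Measure.restrict_apply' hS]
  refine (mul_volume_le_of_forall_exists_closedBall (μ := μ) (R := 1) ?_).trans
    (mul_le_mul_right (measure_mono (Metric.cthickening_subset_of_subset 1 inter_subset_right)) 10)
  rintro φ ⟨hφ, -⟩
  rw [mem_ofPred_eq, curvMax, lt_biSup_iff] at hφ
  obtain ⟨α, hα, hlt⟩ := hφ
  refine ⟨α, hα, le_trans ?_ (hμf φ α hα.1)⟩
  calc t * ENNReal.ofReal α ≤ ENNReal.ofReal (secondDiff f φ α / α ^ 2) * ENNReal.ofReal α :=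
        mul_le_mul_left hlt.le _
    _ = ENNReal.ofReal (secondDiff f φ α / α) := by
        have hα0 := hα.1.ne'
        rw [← ENNReal.ofReal_mul' hα.1.le]
        congr 1
        field_simp

/-- The curvature majorant of a domain: the maximal second difference quotient of its support
function, made bounded below by `1 + R`. -/
def curvMajorant (D : Set E2) (R φ : ℝ) : ℝ≥0∞ := curvMax (height D) φ + ENNReal.ofReal (1 + R)

namespace IsConvexDomain

variable {D : Set E2} {r R φ : ℝ} (hD : IsConvexDomain D r R)
include hD

lemma measurable_curvMajorant : Measurable (curvMajorant D R) :=
  (measurable_curvMax hD.continuous_height).add_const _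

lemma curvMax_height_le (φ : ℝ) :
    curvMax (height D) φ ≤ curvMax (fun φ => height D φ + R * φ ^ 2 / 2) φ :=
  curvMax_mono fun α => by
    simp only [secondDiff]
    linarith [mul_nonneg hD.radius_pos.le (sq_nonneg α)]

lemma exists_weakL1Bound_curvMajorant {S : Set ℝ} (hS : MeasurableSet S)
    (hSb : Bornology.IsBounded S) :
    ∃ V ≠ ∞, WeakL1Bound (volume.restrict S) (curvMajorant D R) V := by
  obtain ⟨V, hV, hcurv⟩ := exists_weakL1Bound_curvMax hD.convexOn_height_add_sq hS hSb
  refine ⟨_, ?_, (hcurv.mono hD.curvMax_height_le).add (WeakL1Bound.const _ _)⟩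
  rw [Measure.restrict_apply_univ]
  exact ENNReal.mul_ne_top ENNReal.ofNat_ne_top (ENNReal.add_ne_top.2
    ⟨hV, ENNReal.mul_ne_top ENNReal.ofReal_ne_top hSb.measure_lt_top.ne⟩)

lemma toReal_curvMajorant (hfin : curvMajorant D R φ ≠ ∞) :
    (curvMajorant D R φ).toReal = (curvMax (height D) φ).toReal + (1 + R) := by
  rw [curvMajorant, ENNReal.toReal_add (ENNReal.add_ne_top.1 hfin).1 ENNReal.ofReal_ne_top,
    ENNReal.toReal_ofReal (by linarith [hD.radius_pos])]

lemma one_le_toReal_curvMajorant (hfin : curvMajorant D R φ ≠ ∞) :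
    1 ≤ (curvMajorant D R φ).toReal := by
  rw [hD.toReal_curvMajorant hfin]
  linarith [hD.radius_pos, ENNReal.toReal_nonneg (a := curvMax (height D) φ)]

lemma secondDiff_height_add_le (hfin : curvMajorant D R φ ≠ ∞) {α : ℝ} (hα : α ∈ Ioc (0 : ℝ) 1) :
    secondDiff (height D) φ α + R * α ^ 2 ≤ (curvMajorant D R φ).toReal * α ^ 2 := by
  rw [hD.toReal_curvMajorant hfin]
  linarith [secondDiff_le_curvMax_mul_sq (ENNReal.add_ne_top.1 hfin).1 hα, sq_nonneg α]

end IsConvexDomain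

/-! ### Almost orthogonality of exponential sums on unit intervals -/

lemma ennreal_add_sq_le (x y : ℝ≥0∞) : (x + y) ^ 2 ≤ 2 * (x ^ 2 + y ^ 2) := by
  have h := ENNReal.rpow_add_le_mul_rpow_add_rpow x y one_le_two
  norm_num at h
  exact h

lemma sq_lintegral_le {X : Type*} [MeasurableSpace X] {μ : Measure X} {f : X → ℝ≥0∞}
    (hf : AEMeasurable f μ) : (∫⁻ x, f x ∂μ) ^ 2 ≤ μ univ * ∫⁻ x, f x ^ 2 ∂μ := by
  have hHolder := ENNReal.lintegral_mul_le_Lp_mul_Lq μ Real.HolderConjugate.two_two hf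
    (aemeasurable_const (b := (1 : ℝ≥0∞)))
  have hsq := pow_le_pow_left' hHolder 2
  rw [mul_pow, ← ENNReal.rpow_mul_natCast, ← ENNReal.rpow_mul_natCast] at hsq
  simpa [mul_comm] using hsq

section Derivative

variable {E : Type*} [NormedAddCommGroup E] [NormedSpace ℝ E] [CompleteSpace E] {f : ℝ → E}
  {a b t : ℝ}

lemma enorm_sub_le_lintegral_deriv (hab : a ≤ b) (hf : ∀ τ ∈ Icc a b, DifferentiableAt ℝ f τ) :
    ‖f b - f a‖ₑ ≤ ∫⁻ τ in Ioc a b, ‖deriv f τ‖ₑ := by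
  rcases eq_or_ne (∫⁻ τ in Ioc a b, ‖deriv f τ‖ₑ) ∞ with htop | htop
  · simp [htop]
  have hint : IntervalIntegrable (deriv f) volume a b := by
    rw [intervalIntegrable_iff_integrableOn_Ioc_of_le hab]
    exact ⟨aestronglyMeasurable_deriv _ _, htop.lt_top⟩
  rw [← intervalIntegral.integral_eq_sub_of_hasDerivAt
    (fun τ hτ => (hf τ (uIcc_of_le hab ▸ hτ)).hasDerivAt) hint,
    intervalIntegral.integral_of_le hab]
  exact enorm_integral_le_lintegral_enorm _

lemma enorm_sq_le_add_lintegral_deriv (hf : ∀ τ ∈ Icc a b, DifferentiableAt ℝ f τ)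
    (ht : t ∈ Icc a b) :
    ‖f t‖ₑ ^ 2 ≤
      2 * (‖f a‖ₑ ^ 2 + ENNReal.ofReal (b - a) * ∫⁻ τ in Ioc a b, ‖deriv f τ‖ₑ ^ 2) := by
  have hinc : ‖f t - f a‖ₑ ≤ ∫⁻ τ in Ioc a b, ‖deriv f τ‖ₑ :=
    (enorm_sub_le_lintegral_deriv ht.1 fun τ hτ => hf τ ⟨hτ.1, hτ.2.trans ht.2⟩).trans
      (lintegral_mono_set (Ioc_subset_Ioc_right ht.2))
  have hCS := sq_lintegral_le (aestronglyMeasurable_deriv f (volume.restrict (Ioc a b))).enorm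
  rw [Measure.restrict_apply_univ, Real.volume_Ioc] at hCS
  calc ‖f t‖ₑ ^ 2 ≤ (‖f a‖ₑ + ‖f t - f a‖ₑ) ^ 2 := by
        gcongr
        simpa using enorm_add_le (f a) (f t - f a)
    _ ≤ 2 * (‖f a‖ₑ ^ 2 + ‖f t - f a‖ₑ ^ 2) := ennreal_add_sq_le _ _
    _ ≤ _ := by
        gcongr
        exact (pow_le_pow_left' hinc 2).trans hCS

end Derivative

lemma osc_two_pi_mul_int_one (m : ℤ) : osc (2 * Real.pi * m) 1 = 1 := by
  rw [osc, ← Complex.exp_int_mul_two_pi_mul_I m]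
  push_cast
  ring_nf

lemma integral_osc_two_pi_mul_int (m : ℤ) (T : ℝ) :
    ∫ t in T..(T + 1), osc (2 * Real.pi * m) t = if m = 0 then 1 else 0 := by
  split_ifs with hm
  · simp [hm, osc]
  · rw [integral_osc (mul_ne_zero Real.two_pi_pos.ne' (Int.cast_ne_zero.2 hm)), osc_add,
      osc_two_pi_mul_int_one]
    simp

section ExponentialSums

variable {ι κ : Type*} [DecidableEq κ]

/-- The number of elements of `S` on which `n` takes the same value as at `k`: the multiplicity of
the frequency `n k` in an exponential sum over `S`. -/
def fiberCard (S : Finset ι) (n : ι → κ) (k : ι) : ℕ := (S.filter fun l => n l = n k).card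

lemma norm_sum_sum_fiber_le (S : Finset ι) (n : ι → κ) (β : ι → ℂ) :
    ‖∑ k ∈ S, ∑ l ∈ S, if n l = n k then β k * starRingEnd ℂ (β l) else 0‖ ≤
      ∑ k ∈ S, fiberCard S n k * ‖β k‖ ^ 2 := by
  have hterm : ∀ k l, ‖if n l = n k then β k * starRingEnd ℂ (β l) else 0‖ ≤
      (if n l = n k then ‖β k‖ ^ 2 / 2 else 0) + if n k = n l then ‖β l‖ ^ 2 / 2 else 0 := by
    intro k l
    rcases eq_or_ne (n l) (n k) with h | h
    · rw [if_pos h, if_pos h, if_pos h.symm, norm_mul, RCLike.norm_conj]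
      linarith [two_mul_le_add_sq ‖β k‖ ‖β l‖]
    · simp [h, h.symm]
  have hcount : ∀ k, ∑ l ∈ S, (if n l = n k then ‖β k‖ ^ 2 / 2 else 0) =
      fiberCard S n k * (‖β k‖ ^ 2 / 2) := fun k => by
    rw [← Finset.sum_filter, Finset.sum_const, nsmul_eq_mul, fiberCard]
  calc _ ≤ ∑ k ∈ S, ∑ l ∈ S, ‖if n l = n k then β k * starRingEnd ℂ (β l) else 0‖ :=
        (norm_sum_le _ _).trans (Finset.sum_le_sum fun _ _ => norm_sum_le _ _)
    _ ≤ _ := Finset.sum_le_sum fun k _ => Finset.sum_le_sum fun l _ => hterm k l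
    _ = ∑ k ∈ S, fiberCard S n k * ‖β k‖ ^ 2 := by
        simp only [Finset.sum_add_distrib]
        rw [Finset.sum_comm (f := fun k l => if n k = n l then ‖β l‖ ^ 2 / 2 else 0)]
        simp only [hcount, ← Finset.sum_add_distrib]
        exact Finset.sum_congr rfl fun k _ => by ring

variable (S : Finset ι) (n : ι → ℤ)

lemma norm_sq_sum_osc_mul (β : ι → ℂ) (t : ℝ) :
    ((‖∑ k ∈ S, osc (-(2 * Real.pi * n k)) t * β k‖ ^ 2 : ℝ) : ℂ) =
      ∑ k ∈ S, ∑ l ∈ S, β k * starRingEnd ℂ (β l) * osc (2 * Real.pi * (n l - n k : ℤ)) t := by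
  push_cast
  rw [← Complex.mul_conj', map_sum, Finset.sum_mul_sum]
  refine Finset.sum_congr rfl fun k _ => Finset.sum_congr rfl fun l _ => ?_
  rw [map_mul, ← osc_neg_left, neg_neg,
    show 2 * Real.pi * ((n l : ℝ) - n k) = -(2 * Real.pi * n k) + 2 * Real.pi * n l by ring,
    osc_add_left]
  ring

lemma continuous_sum_osc_mul (ρ : ι → ℝ) (β : ι → ℂ) :
    Continuous fun t => ∑ k ∈ S, osc (ρ k) t * β k :=
  continuous_finsetSum _ fun _ _ => (continuous_osc _).mul_const _

lemma integral_norm_sq_sum_osc_mul (β : ι → ℂ) (T : ℝ) :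
    ((∫ t in T..(T + 1), ‖∑ k ∈ S, osc (-(2 * Real.pi * n k)) t * β k‖ ^ 2 : ℝ) : ℂ) =
      ∑ k ∈ S, ∑ l ∈ S, if n l = n k then β k * starRingEnd ℂ (β l) else 0 := by
  rw [← intervalIntegral.integral_ofReal]
  simp_rw [norm_sq_sum_osc_mul]
  have hcont : ∀ k l, Continuous fun t =>
      β k * starRingEnd ℂ (β l) * osc (2 * Real.pi * (n l - n k : ℤ)) t :=
    fun k l => (continuous_osc _).const_mul _
  rw [intervalIntegral.integral_finsetSum fun k _ =>
    (continuous_finsetSum _ fun l _ => hcont k l).intervalIntegrable _ _]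
  refine Finset.sum_congr rfl fun k _ => ?_
  rw [intervalIntegral.integral_finsetSum fun l _ => (hcont k l).intervalIntegrable _ _]
  refine Finset.sum_congr rfl fun l _ => ?_
  rw [intervalIntegral.integral_const_mul, integral_osc_two_pi_mul_int]
  simp [sub_eq_zero]

lemma lintegral_enorm_sq_sum_osc_mul_le (β : ι → ℂ) (T : ℝ) :
    ∫⁻ t in Ioc T (T + 1), ‖∑ k ∈ S, osc (-(2 * Real.pi * n k)) t * β k‖ₑ ^ 2 ≤
      ENNReal.ofReal (∑ k ∈ S, fiberCard S n k * ‖β k‖ ^ 2) := by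
  have hcont : Continuous fun t => ‖∑ k ∈ S, osc (-(2 * Real.pi * n k)) t * β k‖ ^ 2 :=
    (continuous_sum_osc_mul S _ β).norm.pow 2
  simp only [← ofReal_norm, ← ENNReal.ofReal_pow (norm_nonneg _)]
  rw [← ofReal_integral_eq_lintegral_ofReal
    (hcont.integrableOn_Icc.mono_set Ioc_subset_Icc_self) (ae_of_all _ fun t => by positivity),
    ← intervalIntegral.integral_of_le (by linarith)]
  refine ENNReal.ofReal_le_ofReal ((le_abs_self _).trans ?_)
  rw [← Real.norm_eq_abs, ← Complex.norm_real, integral_norm_sq_sum_osc_mul]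
  exact norm_sum_sum_fiber_le S n β

variable {S}

-- For each `t` the amplitudes are written as their values at `T` plus the integral of their
-- derivatives; orthogonality is exact once the variable of the amplitudes is frozen.
lemma lintegral_enorm_sq_sum_osc_int_mul_le {b : ι → ℝ → ℂ} {B B' : ι → ℝ} {T : ℝ}
    (hb : ∀ k ∈ S, ∀ t ∈ Icc T (T + 1), DifferentiableAt ℝ (b k) t)
    (hB : ∀ k ∈ S, ‖b k T‖ ^ 2 ≤ B k)
    (hB' : ∀ k ∈ S, ∀ t ∈ Icc T (T + 1), ‖deriv (b k) t‖ ^ 2 ≤ B' k) :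
    ∫⁻ t in Ioc T (T + 1), ‖∑ k ∈ S, osc (-(2 * Real.pi * n k)) t * b k t‖ₑ ^ 2 ≤
      2 * (ENNReal.ofReal (∑ k ∈ S, fiberCard S n k * B k) +
        ENNReal.ofReal (∑ k ∈ S, fiberCard S n k * B' k)) := by
  set e : ι → ℝ → ℂ := fun k => osc (-(2 * Real.pi * n k))
  have hmeas : Measurable fun p : ℝ × ℝ => ‖∑ k ∈ S, e k p.1 * deriv (b k) p.2‖ₑ ^ 2 :=
    (Finset.measurable_sum _ fun k _ => ((continuous_osc _).measurable.comp measurable_fst).mul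
      ((measurable_deriv (b k)).comp measurable_snd)).enorm.pow_const 2
  have hfreeze : ∀ t ∈ Ioc T (T + 1), ‖∑ k ∈ S, e k t * b k t‖ₑ ^ 2 ≤
      2 * (‖∑ k ∈ S, e k t * b k T‖ₑ ^ 2 +
        ∫⁻ τ in Ioc T (T + 1), ‖∑ k ∈ S, e k t * deriv (b k) τ‖ₑ ^ 2) := by
    intro t ht
    have hder : ∀ τ ∈ Icc T (T + 1), HasDerivAt (fun τ => ∑ k ∈ S, e k t * b k τ)
        (∑ k ∈ S, e k t * deriv (b k) τ) τ := fun τ hτ =>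
      HasDerivAt.fun_sum fun k hk => (hb k hk τ hτ).hasDerivAt.const_mul _
    refine (enorm_sq_le_add_lintegral_deriv (fun τ hτ => (hder τ hτ).differentiableAt)
      (Ioc_subset_Icc_self ht)).trans_eq ?_
    rw [add_sub_cancel_left, ENNReal.ofReal_one, one_mul]
    congr 2
    exact setLIntegral_congr_fun measurableSet_Ioc fun τ hτ => by
      rw [(hder τ (Ioc_subset_Icc_self hτ)).deriv]
  have hfrozen : ∀ {β : ι → ℂ} {B : ι → ℝ}, (∀ k ∈ S, ‖β k‖ ^ 2 ≤ B k) →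
      ∫⁻ t in Ioc T (T + 1), ‖∑ k ∈ S, e k t * β k‖ₑ ^ 2 ≤
        ENNReal.ofReal (∑ k ∈ S, fiberCard S n k * B k) := fun hβ =>
    (lintegral_enorm_sq_sum_osc_mul_le S n _ T).trans (ENNReal.ofReal_le_ofReal
      (Finset.sum_le_sum fun k hk => mul_le_mul_of_nonneg_left (hβ k hk) (Nat.cast_nonneg _)))
  refine (setLIntegral_mono' measurableSet_Ioc hfreeze).trans ?_
  rw [lintegral_const_mul' _ _ ENNReal.ofNat_ne_top, lintegral_add_left
    ((continuous_sum_osc_mul S _ _).enorm.measurable.pow_const 2),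
    lintegral_lintegral_swap hmeas.aemeasurable]
  gcongr
  · exact hfrozen hB
  · refine (setLIntegral_mono' measurableSet_Ioc fun τ hτ =>
      hfrozen fun k hk => hB' k hk τ (Ioc_subset_Icc_self hτ)).trans ?_
    simp

lemma norm_sq_deriv_osc_mul_le {ν t B : ℝ} {a : ℝ → ℂ} (hν : |ν| ≤ 1)
    (ha : DifferentiableAt ℝ a t) (hB : ‖a t‖ ^ 2 ≤ B) (hB' : ‖deriv a t‖ ^ 2 ≤ B) :
    ‖deriv (fun τ => osc (-(2 * Real.pi * ν)) τ * a τ) t‖ ^ 2 ≤ 64 * B := by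
  have hpi := Real.pi_gt_three
  have hle : ‖deriv (fun τ => osc (-(2 * Real.pi * ν)) τ * a τ) t‖ ≤
      2 * Real.pi * ‖a t‖ + ‖deriv a t‖ := by
    rw [((hasDerivAt_osc _ t).fun_mul ha.hasDerivAt).deriv]
    refine (norm_add_le _ _).trans ?_
    simp only [norm_mul, norm_osc, Complex.norm_I, Complex.norm_real, norm_neg, Real.norm_eq_abs,
      abs_of_pos Real.pi_pos, abs_two, one_mul, mul_one]
    gcongr ?_ * _ + _
    exact mul_le_of_le_one_right Real.two_pi_pos.le hν
  calc _ ≤ (2 * Real.pi * ‖a t‖ + ‖deriv a t‖) ^ 2 := by gcongr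
    _ ≤ (2 * Real.pi + 1) * (2 * Real.pi * ‖a t‖ ^ 2 + ‖deriv a t‖ ^ 2) := by
        linarith [mul_nonneg Real.two_pi_pos.le (sq_nonneg (‖a t‖ - ‖deriv a t‖))]
    _ ≤ (2 * Real.pi + 1) * (2 * Real.pi * B + B) := by gcongr
    _ = (2 * Real.pi + 1) ^ 2 * B := by ring
    _ ≤ 64 * B := mul_le_mul_of_nonneg_right (by nlinarith [Real.pi_lt_d2])
        ((sq_nonneg _).trans hB)

-- The fractional parts of the frequencies are absorbed into the amplitudes.
lemma lintegral_enorm_sq_sum_osc_real_mul_le {ρ : ι → ℝ} {a : ι → ℝ → ℂ} {B : ι → ℝ} {T : ℝ}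
    (ha : ∀ k ∈ S, ∀ t ∈ Icc T (T + 1), DifferentiableAt ℝ (a k) t)
    (hB : ∀ k ∈ S, ∀ t ∈ Icc T (T + 1), ‖a k t‖ ^ 2 ≤ B k)
    (hB' : ∀ k ∈ S, ∀ t ∈ Icc T (T + 1), ‖deriv (a k) t‖ ^ 2 ≤ B k) :
    ∫⁻ t in Ioc T (T + 1), ‖∑ k ∈ S, osc (-(2 * Real.pi * ρ k)) t * a k t‖ₑ ^ 2 ≤
      ENNReal.ofReal (130 * ∑ k ∈ S, fiberCard S (fun k => ⌊ρ k⌋) k * B k) := by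
  set b : ι → ℝ → ℂ := fun k τ => osc (-(2 * Real.pi * Int.fract (ρ k))) τ * a k τ
  have hsum : ∀ t, ∑ k ∈ S, osc (-(2 * Real.pi * ρ k)) t * a k t =
      ∑ k ∈ S, osc (-(2 * Real.pi * ⌊ρ k⌋)) t * b k t := fun t => by
    refine Finset.sum_congr rfl fun k _ => ?_
    rw [← mul_assoc, ← osc_add_left, ← neg_add, ← mul_add, Int.floor_add_fract]
  have hT : T ∈ Icc T (T + 1) := ⟨le_rfl, by linarith⟩
  have hnonneg : 0 ≤ ∑ k ∈ S, fiberCard S (fun k => ⌊ρ k⌋) k * B k :=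
    Finset.sum_nonneg fun k hk =>
      mul_nonneg (Nat.cast_nonneg _) ((sq_nonneg _).trans (hB k hk T hT))
  simp only [hsum]
  refine (lintegral_enorm_sq_sum_osc_int_mul_le (B := B) (B' := fun k => 64 * B k) _
    (fun k hk t ht => (hasDerivAt_osc _ t).differentiableAt.fun_mul (ha k hk t ht))
    (fun k hk => by simpa [b, norm_osc] using hB k hk T hT)
    fun k hk t ht => norm_sq_deriv_osc_mul_le
      (by rw [Int.abs_fract]; exact (Int.fract_lt_one _).le)
      (ha k hk t ht) (hB k hk t ht) (hB' k hk t ht)).trans_eq ?_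
  simp only [mul_left_comm _ (64 : ℝ), ← Finset.mul_sum]
  rw [← ENNReal.ofReal_add hnonneg (by positivity), ← ENNReal.ofReal_ofNat,
    ← ENNReal.ofReal_mul (by positivity)]
  congr 1
  ring

end ExponentialSums

/-! ### Lattice points in shells of the support function -/

/-- The support function of `D` rotated by `σ`, as a positively homogeneous function on `ℂ`. -/
def supportFn (D : Set E2) (σ : ℝ) (z : ℂ) : ℝ := ‖z‖ * height D (σ + z.arg)

/-- An integer vector as a complex number, so that its direction is `Complex.arg`. -/
def latticePt (k : Fin 2 → ℤ) : ℂ := ⟨k 0, k 1⟩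

/-- The frequency attached to the lattice vector `k`: the support function at `k`, rotated
by `σ`. -/
def freq (D : Set E2) (σ : ℝ) (k : Fin 2 → ℤ) : ℝ := supportFn D σ (latticePt k)

/-- The half-open unit square with lower left corner `k`. -/
def unitSquare (k : Fin 2 → ℤ) : Set ℂ := Ico (k 0 : ℝ) (k 0 + 1) ×ℂ Ico (k 1 : ℝ) (k 1 + 1)

lemma one_le_norm_latticePt {k : Fin 2 → ℤ} (hk : k ≠ 0) : 1 ≤ ‖latticePt k‖ := by
  obtain ⟨i, hi⟩ := Function.ne_iff.1 hk
  have hint : (1 : ℝ) ≤ |(k i : ℝ)| := mod_cast Int.one_le_abs hi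
  fin_cases i
  · exact hint.trans (Complex.abs_re_le_norm (latticePt k))
  · exact hint.trans (Complex.abs_im_le_norm (latticePt k))

lemma volume_real_unitSquare (k : Fin 2 → ℤ) : volume.real (unitSquare k) = 1 := by
  have h := Complex.volume_preserving_equiv_real_prod.measure_preimage
    ((measurableSet_Ico (a := (k 0 : ℝ)) (b := k 0 + 1)).prod
      (measurableSet_Ico (a := (k 1 : ℝ)) (b := k 1 + 1))).nullMeasurableSet
  rw [Measure.volume_eq_prod, Measure.prod_prod] at h
  exact (congrArg ENNReal.toReal h).trans (by simp)

lemma measurableSet_unitSquare (k : Fin 2 → ℤ) : MeasurableSet (unitSquare k) :=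
  (Complex.measurable_re measurableSet_Ico).inter (Complex.measurable_im measurableSet_Ico)

lemma disjoint_unitSquare {k l : Fin 2 → ℤ} (hkl : k ≠ l) :
    Disjoint (unitSquare k) (unitSquare l) := by
  obtain ⟨i, hi⟩ := Function.ne_iff.1 hkl
  refine Set.disjoint_left.2 fun z hk hl => hi ?_
  fin_cases i
  · exact (Int.floor_eq_iff.2 hk.1).symm.trans (Int.floor_eq_iff.2 hl.1)
  · exact (Int.floor_eq_iff.2 hk.2).symm.trans (Int.floor_eq_iff.2 hl.2)

lemma norm_sub_latticePt_le {k : Fin 2 → ℤ} {z : ℂ} (hz : z ∈ unitSquare k) :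
    ‖z - latticePt k‖ ≤ 2 := by
  obtain ⟨⟨hre, hre'⟩, him, him'⟩ := hz
  have hre1 : |(z - latticePt k).re| ≤ 1 :=
    abs_le.2 ⟨by simpa [latticePt] using by linarith, by simpa [latticePt] using by linarith⟩
  have him1 : |(z - latticePt k).im| ≤ 1 :=
    abs_le.2 ⟨by simpa [latticePt] using by linarith, by simpa [latticePt] using by linarith⟩
  linarith [Complex.norm_le_abs_re_add_abs_im (z - latticePt k)]

lemma volume_real_biUnion_unitSquare (F : Finset (Fin 2 → ℤ)) :
    volume.real (⋃ k ∈ F, unitSquare k) = F.card := by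
  rw [measureReal_biUnion_finset (fun _ _ _ _ h => disjoint_unitSquare h)
    (fun k _ => measurableSet_unitSquare k)
    fun k _ h => by simpa [measureReal_def, h] using volume_real_unitSquare k]
  simp [volume_real_unitSquare]

lemma supportFn_smul (D : Set E2) (σ : ℝ) {s : ℝ} (hs : 0 < s) (z : ℂ) :
    supportFn D σ (s • z) = s * supportFn D σ z := by
  rw [supportFn, supportFn, norm_smul, Real.norm_of_nonneg hs.le, Complex.real_smul,
    Complex.arg_real_mul _ hs, mul_assoc]

namespace IsConvexDomain

variable {D : Set E2} {r R σ : ℝ} (hD : IsConvexDomain D r R)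
include hD

lemma re_mul_add_im_mul_le_supportFn {p : ℝ × ℝ} (hp : p ∈ turned D σ) (z : ℂ) :
    z.re * p.1 + z.im * p.2 ≤ supportFn D σ z := by
  calc z.re * p.1 + z.im * p.2 = ‖z‖ * (Real.cos z.arg * p.1 + Real.sin z.arg * p.2) := by
        rw [mul_add, ← mul_assoc, ← mul_assoc, Complex.norm_mul_cos_arg, Complex.norm_mul_sin_arg]
    _ ≤ supportFn D σ z :=
        mul_le_mul_of_nonneg_left (hD.cos_mul_add_sin_mul_le_height hp z.arg) (norm_nonneg z)

lemma supportFn_le {c : ℝ} {z : ℂ} (h : ∀ p ∈ turned D σ, z.re * p.1 + z.im * p.2 ≤ c) :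
    supportFn D σ z ≤ c := by
  rcases eq_or_ne z 0 with rfl | hz
  · simpa [supportFn] using h 0 (hD.zero_mem_turned σ)
  rw [supportFn, ← le_div_iff₀' (norm_pos_iff.2 hz)]
  refine (hD.isLUB_height _).2 (forall_mem_image.2 fun q hq => ?_)
  rw [le_div_iff₀' (norm_pos_iff.2 hz)]
  rw [turned, mem_preimage, frame_eq_frame_add _ (-z.arg), add_neg_cancel_right, Real.cos_neg,
    Real.sin_neg] at hq
  refine le_trans (le_of_eq ?_) (h _ hq)
  rw [← Complex.norm_mul_cos_arg z, ← Complex.norm_mul_sin_arg z]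
  linear_combination (-‖z‖ * q.1) * Real.sin_sq_add_cos_sq z.arg

lemma mul_norm_le_supportFn (σ : ℝ) (z : ℂ) : r * ‖z‖ ≤ supportFn D σ z := by
  rw [mul_comm]
  exact mul_le_mul_of_nonneg_left (hD.le_height _) (norm_nonneg z)

lemma supportFn_nonneg (σ : ℝ) (z : ℂ) : 0 ≤ supportFn D σ z :=
  (mul_nonneg hD.pos.le (norm_nonneg z)).trans (hD.mul_norm_le_supportFn σ z)

lemma supportFn_le_mul_norm (σ : ℝ) (z : ℂ) : supportFn D σ z ≤ R * ‖z‖ := by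
  rw [mul_comm R]
  exact mul_le_mul_of_nonneg_left (hD.height_le _) (norm_nonneg z)

lemma supportFn_le_add (σ : ℝ) (z w : ℂ) :
    supportFn D σ z ≤ supportFn D σ w + R * ‖z - w‖ := by
  refine hD.supportFn_le fun p hp => ?_
  have hw := hD.re_mul_add_im_mul_le_supportFn hp w
  have hzw := (hD.re_mul_add_im_mul_le_supportFn hp (z - w)).trans
    (hD.supportFn_le_mul_norm σ (z - w))
  simp only [Complex.sub_re, Complex.sub_im] at hzw
  linarith

lemma continuous_supportFn (σ : ℝ) : Continuous (supportFn D σ) :=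
  LipschitzWith.continuous (K := ⟨R, hD.radius_pos.le⟩)
    (LipschitzWith.of_le_add_mul _ fun z w => by
      rw [dist_eq_norm]
      exact hD.supportFn_le_add σ z w)

lemma supportFn_lt_subset_ball (σ s : ℝ) :
    {z | supportFn D σ z < s} ⊆ Metric.ball 0 (s / r) := fun z hz => by
  rw [mem_ball_zero_iff, lt_div_iff₀' hD.pos]
  exact (hD.mul_norm_le_supportFn σ z).trans_lt hz

lemma volume_supportFn_lt_ne_top (σ s : ℝ) : volume {z | supportFn D σ z < s} ≠ ∞ :=
  ((measure_mono (hD.supportFn_lt_subset_ball σ s)).trans_lt measure_ball_lt_top).ne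

lemma volume_real_supportFn_lt_one_le (σ : ℝ) :
    volume.real {z | supportFn D σ z < 1} ≤ 4 / r ^ 2 := by
  refine (measureReal_mono (hD.supportFn_lt_subset_ball σ 1) measure_ball_lt_top.ne).trans ?_
  have hr := hD.pos
  have hball : volume.real (Metric.ball (0 : ℂ) (1 / r)) = (1 / r) ^ 2 * Real.pi := by
    rw [measureReal_def, Complex.volume_ball, ENNReal.toReal_mul, ENNReal.toReal_pow,
      ENNReal.toReal_ofReal (by positivity), ENNReal.coe_toReal, NNReal.coe_real_pi]
  rw [hball, one_div, inv_pow, inv_mul_eq_div]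
  gcongr
  exact Real.pi_le_four

lemma volume_real_supportFn_lt (σ : ℝ) {s : ℝ} (hs : 0 ≤ s) :
    volume.real {z | supportFn D σ z < s} = s ^ 2 * volume.real {z | supportFn D σ z < 1} := by
  rcases hs.eq_or_lt with rfl | hs
  · simp [(hD.supportFn_nonneg σ _).not_gt]
  have hscale : {z | supportFn D σ z < s} = s • {z | supportFn D σ z < 1} := by
    ext z
    rw [mem_smul_set_iff_inv_smul_mem₀ hs.ne', mem_ofPred_eq, mem_ofPred_eq,
      supportFn_smul D σ (inv_pos.2 hs), inv_mul_lt_iff₀ hs, mul_one]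
  rw [hscale, measureReal_def, Measure.addHaar_smul, Complex.finrank_real_complex,
    abs_of_nonneg (sq_nonneg s), ENNReal.toReal_mul, ENNReal.toReal_ofReal (sq_nonneg s),
    measureReal_def]

-- The unit squares at these points lie in a slightly thicker shell, whose area is known.
lemma card_le_of_freq_mem_Ico {m : ℝ} (hm : 0 ≤ m) {F : Finset (Fin 2 → ℤ)}
    (hF : ∀ l ∈ F, freq D σ l ∈ Ico m (m + 1)) :
    (F.card : ℝ) ≤ (1 + 4 * R) * (2 * m + 1 + 2 * R) * volume.real {z | supportFn D σ z < 1} := by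
  have hR := hD.radius_pos
  set low : ℝ := max (m - 2 * R) 0
  have hclose : ∀ l, ∀ z ∈ unitSquare l, R * ‖z - latticePt l‖ ≤ 2 * R := fun l z hz => by
    linarith [mul_le_mul_of_nonneg_left (norm_sub_latticePt_le hz) hR.le]
  have hupper : ⋃ l ∈ F, unitSquare l ⊆ {z | supportFn D σ z < m + 1 + 2 * R} :=
    iUnion₂_subset fun l hl z hz => by
      have hzl := hD.supportFn_le_add σ z (latticePt l)
      have hl2 := (hF l hl).2
      rw [freq] at hl2
      rw [mem_ofPred_eq]
      linarith [hclose l z hz]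
  have hlower : Disjoint (⋃ l ∈ F, unitSquare l) {z | supportFn D σ z < low} := by
    rw [disjoint_iUnion₂_left]
    refine fun l hl => Set.disjoint_left.2 fun z hz =>
      not_lt.2 (max_le ?_ (hD.supportFn_nonneg σ z))
    have hlz := hD.supportFn_le_add σ (latticePt l) z
    have hl1 := (hF l hl).1
    rw [norm_sub_rev] at hlz
    rw [freq] at hl1
    linarith [hclose l z hz]
  have hle : low ≤ m := max_le (by linarith) hm
  have hmono : {z | supportFn D σ z < low} ⊆ {z | supportFn D σ z < m + 1 + 2 * R} :=
    fun z (hz : supportFn D σ z < low) => hz.trans_le (by linarith)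
  have harea := measureReal_mono (union_subset hupper hmono) (hD.volume_supportFn_lt_ne_top σ _)
  rw [measureReal_union hlower
      (isOpen_lt (hD.continuous_supportFn σ) continuous_const).measurableSet
      (measure_ne_top_of_subset hupper (hD.volume_supportFn_lt_ne_top σ _))
      (hD.volume_supportFn_lt_ne_top σ _),
    volume_real_biUnion_unitSquare, hD.volume_real_supportFn_lt σ (le_max_right _ _),
    hD.volume_real_supportFn_lt σ (s := m + 1 + 2 * R) (by positivity), ← le_sub_iff_add_le,
    ← sub_mul, sq_sub_sq, mul_comm (_ + low)] at harea
  refine harea.trans (mul_le_mul_of_nonneg_right ?_ measureReal_nonneg)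
  have hlow : m - 2 * R ≤ low := le_max_left _ _
  exact mul_le_mul (by linarith) (by linarith)
    (add_nonneg (by positivity) (le_max_right _ _)) (by positivity)

lemma fiberCard_floor_freq_le (σ : ℝ) (S : Finset (Fin 2 → ℤ)) {k : Fin 2 → ℤ} (hk : k ≠ 0) :
    (fiberCard S (fun l => ⌊freq D σ l⌋) k : ℝ) ≤
      4 / r ^ 2 * (1 + 4 * R) ^ 2 * ‖latticePt k‖ := by
  have hR := hD.radius_pos
  have hfloor0 : (0 : ℝ) ≤ ⌊freq D σ k⌋ :=
    Int.cast_nonneg (Int.floor_nonneg.2 (hD.supportFn_nonneg σ _))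
  have hfloor : (⌊freq D σ k⌋ : ℝ) ≤ R * ‖latticePt k‖ :=
    (Int.floor_le _).trans (hD.supportFn_le_mul_norm σ _)
  have hcard := hD.card_le_of_freq_mem_Ico (σ := σ) hfloor0
    (F := S.filter fun l => ⌊freq D σ l⌋ = ⌊freq D σ k⌋) fun l hl => by
      rw [← (Finset.mem_filter.1 hl).2]
      exact ⟨Int.floor_le _, Int.lt_floor_add_one _⟩
  have hlin : 2 * (⌊freq D σ k⌋ : ℝ) + 1 + 2 * R ≤ (1 + 4 * R) * ‖latticePt k‖ := by
    nlinarith [one_le_norm_latticePt hk]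
  calc (fiberCard S (fun l => ⌊freq D σ l⌋) k : ℝ)
      ≤ (1 + 4 * R) * ((1 + 4 * R) * ‖latticePt k‖) * (4 / r ^ 2) := by
        refine hcard.trans ?_
        gcongr
        exact hD.volume_real_supportFn_lt_one_le σ
    _ = _ := by ring

end IsConvexDomain

/-! ### Fourier coefficients of dilated domains -/

/-- The character `x ↦ e^{-2πi k·x}` of the plane. -/
def planeChar (k : Fin 2 → ℤ) (x : Fin 2 → ℝ) : ℂ := osc (-(2 * Real.pi)) (k 0 * x 0 + k 1 * x 1)

/-- An integer vector as a real vector. -/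
def intVec (n : Fin 2 → ℤ) : Fin 2 → ℝ := fun i => n i

lemma continuous_planeChar (k : Fin 2 → ℤ) : Continuous (planeChar k) :=
  (continuous_osc _).comp (by fun_prop)

lemma planeChar_zero : planeChar 0 = 1 := by
  ext x
  simp [planeChar, osc]

lemma planeChar_add (k : Fin 2 → ℤ) (x y : Fin 2 → ℝ) :
    planeChar k (x + y) = planeChar k x * planeChar k y := by
  rw [planeChar, planeChar, planeChar, ← osc_add]
  congr 1
  simp only [Pi.add_apply]
  ring

lemma planeChar_intVec (k n : Fin 2 → ℤ) : planeChar k (intVec n) = 1 := by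
  rw [planeChar, osc, Complex.exp_eq_one_iff]
  refine ⟨-(k 0 * n 0 + k 1 * n 1), ?_⟩
  simp only [intVec]
  push_cast
  ring

lemma measurePreserving_frame (φ : ℝ) : MeasurePreserving (frame φ) volume volume := by
  set M : Matrix (Fin 2) (Fin 2) ℝ := !![Real.cos φ, -Real.sin φ; Real.sin φ, Real.cos φ] with hM
  have hdet : M.det = 1 := by
    rw [hM, Matrix.det_fin_two_of]
    linear_combination Real.sin_sq_add_cos_sq φ
  have hmul : MeasurePreserving (Matrix.toLin' M) volume volume := by
    refine ⟨(LinearMap.continuous_of_finiteDimensional _).measurable, ?_⟩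
    rw [Real.map_matrix_volume_pi_eq_smul_volume_pi (by rw [hdet]; exact one_ne_zero), hdet]
    simp
  have hcoord := ((PiLp.volume_preserving_toLp (Fin 2)).comp hmul).comp
    (volume_preserving_finTwoArrow ℝ).symm
  convert! hcoord using 1
  ext p i
  fin_cases i <;> simp [frame, hM, MeasurableEquiv.finTwoArrow, Matrix.toLin'_apply,
    sub_eq_add_neg] <;> ring

lemma frame_injective (φ : ℝ) : Function.Injective (frame φ) := by
  intro p q h
  have h0 := congrArg (fun x : E2 => x 0) h
  have h1 := congrArg (fun x : E2 => x 1) h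
  simp only [frame_zero, frame_one] at h0 h1
  have hs := Real.sin_sq_add_cos_sq φ
  ext
  · linear_combination (q.1 - p.1) * hs + Real.cos φ * h0 + Real.sin φ * h1
  · linear_combination (q.2 - p.2) * hs - Real.sin φ * h0 + Real.cos φ * h1

lemma measurableEmbedding_frame (φ : ℝ) : MeasurableEmbedding (frame φ) :=
  (continuous_frame φ).measurableEmbedding (frame_injective φ)

/-- A set of the Euclidean plane as a set of coordinate vectors. -/
def coordSet (B : Set E2) : Set (Fin 2 → ℝ) := WithLp.toLp 2 ⁻¹' B

lemma setIntegral_coordSet (B : Set E2) (f : (Fin 2 → ℝ) → ℂ) :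
    ∫ y in coordSet B, f y = ∫ x in B, f (WithLp.ofLp x) := by
  rw [← (PiLp.volume_preserving_toLp (Fin 2)).setIntegral_preimage_emb
    (MeasurableEquiv.toLp 2 (Fin 2 → ℝ)).measurableEmbedding]
  rfl

lemma planeChar_smul_frame_arg (k : Fin 2 → ℤ) (t : ℝ) (p : ℝ × ℝ) :
    planeChar k (WithLp.ofLp (t • frame (latticePt k).arg p)) =
      osc (-(2 * Real.pi * t * ‖latticePt k‖)) p.1 := by
  have hk0 : (k 0 : ℝ) = ‖latticePt k‖ * Real.cos (latticePt k).arg :=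
    (Complex.norm_mul_cos_arg (latticePt k)).symm
  have hk1 : (k 1 : ℝ) = ‖latticePt k‖ * Real.sin (latticePt k).arg :=
    (Complex.norm_mul_sin_arg (latticePt k)).symm
  rw [planeChar, osc, osc]
  congr 3
  simp only [PiLp.smul_apply, smul_eq_mul, frame_zero, frame_one]
  rw [hk0, hk1]
  linear_combination (-2 * Real.pi * t * ‖latticePt k‖ * p.1) *
    Real.sin_sq_add_cos_sq (latticePt k).arg

lemma setIntegral_planeChar_smul (D : Set E2) (k : Fin 2 → ℤ) {t : ℝ} (ht : 0 < t) :
    ∫ y in coordSet (t • D), planeChar k y =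
      t ^ 2 * ∫ p in turned D (latticePt k).arg, osc (-(2 * Real.pi * t * ‖latticePt k‖)) p.1 := by
  have hscale := Measure.setIntegral_comp_smul_of_pos (volume : Measure E2)
    (fun x => planeChar k (WithLp.ofLp x)) D ht
  rw [finrank_euclideanSpace_fin, eq_inv_smul_iff₀ (by positivity)] at hscale
  rw [setIntegral_coordSet, ← hscale,
    ← (measurePreserving_frame (latticePt k).arg).setIntegral_preimage_emb
      (measurableEmbedding_frame _), Complex.real_smul]
  simp only [planeChar_smul_frame_arg, Complex.ofReal_pow]
  rfl

/-! ### Parseval's identity on the unit square -/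

/-- The half-open square with lower left corner `a` and side `s`. -/
def square (a : Fin 2 → ℝ) (s : ℝ) : Set (Fin 2 → ℝ) := univ.pi fun i => Ioc (a i) (a i + s)

lemma measurableSet_square (a : Fin 2 → ℝ) (s : ℝ) : MeasurableSet (square a s) :=
  MeasurableSet.univ_pi fun _ => measurableSet_Ioc

lemma volume_square (a : Fin 2 → ℝ) {s : ℝ} (hs : 0 ≤ s) :
    volume (square a s) = ENNReal.ofReal (s ^ 2) := by
  simp [square, volume_pi_pi, pow_two, ENNReal.ofReal_mul hs]

section Torus

local instance : MeasureSpace UnitAddCircle := ⟨AddCircle.haarAddCircle⟩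
local instance : IsProbabilityMeasure (volume : Measure UnitAddCircle) :=
  inferInstanceAs (IsProbabilityMeasure AddCircle.haarAddCircle)

/-- The periodization of the restriction of `g` to the unit square. -/
def periodicLift (g : (Fin 2 → ℝ) → ℂ) (x : UnitAddTorus (Fin 2)) : ℂ :=
  g (UnitAddTorus.measurableEquivPiIoc (0 : Fin 2 → ℝ) x).1

lemma periodicLift_coe (g : (Fin 2 → ℝ) → ℂ) {x : Fin 2 → ℝ} (hx : x ∈ square 0 1) :
    periodicLift g (fun i => (x i : UnitAddCircle)) = g x := by
  have h := (UnitAddTorus.measurableEquivPiIoc (0 : Fin 2 → ℝ)).apply_symm_apply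
    ⟨x, fun i => hx i (mem_univ i)⟩
  rw [UnitAddTorus.coe_symm_measurableEquivPiIoc_apply] at h
  rw [periodicLift, h]

lemma measurable_periodicLift {g : (Fin 2 → ℝ) → ℂ} (hg : Measurable g) :
    Measurable (periodicLift g) :=
  hg.comp (measurable_subtype_coe.comp (MeasurableEquiv.measurable _))

lemma memLp_periodicLift {g : (Fin 2 → ℝ) → ℂ} (hg : Measurable g) {C : ℝ}
    (hC : ∀ x, ‖g x‖ ≤ C) : MemLp (periodicLift g) 2 volume :=
  MemLp.of_bound (measurable_periodicLift hg).aestronglyMeasurable C (.of_forall fun _ => hC _)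

lemma integral_unitAddTorus (f : UnitAddTorus (Fin 2) → ℂ) :
    ∫ x, f x = ∫ x in square 0 1, f (fun i => (x i : UnitAddCircle)) := by
  rw [UnitAddTorus.integral_preimage f 0]
  congr 2
  ext x
  simp [square]

lemma mFourier_neg_coe (k : Fin 2 → ℤ) (x : Fin 2 → ℝ) :
    UnitAddTorus.mFourier (-k) (fun i => (x i : UnitAddCircle)) = planeChar k x := by
  simp only [UnitAddTorus.mFourier, ContinuousMap.coe_mk, Fin.prod_univ_two, Pi.neg_apply,
    fourier_coe_apply]
  rw [← Complex.exp_add, planeChar, osc]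
  congr 1
  push_cast
  ring

lemma mFourierCoeff_periodicLift (g : (Fin 2 → ℝ) → ℂ) (k : Fin 2 → ℤ) :
    UnitAddTorus.mFourierCoeff (periodicLift g) k = ∫ x in square 0 1, planeChar k x * g x := by
  rw [UnitAddTorus.mFourierCoeff]
  refine (integral_unitAddTorus _).trans (setIntegral_congr_fun (measurableSet_square 0 1) ?_)
  intro x hx
  beta_reduce
  rw [mFourier_neg_coe, periodicLift_coe g hx, smul_eq_mul]

lemma hasSum_conj_planeChar_mul {g₁ g₂ : (Fin 2 → ℝ) → ℂ} (h₁ : Measurable g₁)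
    (h₂ : Measurable g₂) {C₁ C₂ : ℝ} (hC₁ : ∀ x, ‖g₁ x‖ ≤ C₁) (hC₂ : ∀ x, ‖g₂ x‖ ≤ C₂) :
    HasSum (fun k => (starRingEnd ℂ) (∫ x in square 0 1, planeChar k x * g₁ x) *
        ∫ x in square 0 1, planeChar k x * g₂ x)
      (∫ x in square 0 1, (starRingEnd ℂ) (g₁ x) * g₂ x) := by
  have hm₁ := memLp_periodicLift h₁ hC₁
  have hm₂ := memLp_periodicLift h₂ hC₂
  have hcoeff : ∀ (g : (Fin 2 → ℝ) → ℂ) (hg : MemLp (periodicLift g) 2 volume) k,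
      UnitAddTorus.mFourierCoeff hg.toLp k = ∫ x in square 0 1, planeChar k x * g x := by
    intro g hg k
    rw [← mFourierCoeff_periodicLift]
    refine integral_congr_ae ?_
    filter_upwards [hg.coeFn_toLp] with x hx
    rw [hx]
  have hsum := UnitAddTorus.hasSum_prod_mFourierCoeff hm₁.toLp hm₂.toLp
  simp only [hcoeff] at hsum
  convert! hsum using 1
  refine Eq.trans ?_ (integral_congr_ae
    (f := fun x => (starRingEnd ℂ) (periodicLift g₁ x) * periodicLift g₂ x) ?_)
  · rw [integral_unitAddTorus]
    refine setIntegral_congr_fun (measurableSet_square 0 1) fun x hx => ?_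
    rw [periodicLift_coe g₁ hx, periodicLift_coe g₂ hx]
  · filter_upwards [hm₁.coeFn_toLp, hm₂.coeFn_toLp] with x hx hy
    rw [hx, hy]

end Torus

/-! ### Smoothed lattice point counts -/

/-- The integer vectors with coordinates in `[-M, M]`. -/
def intBox (M : ℕ) : Finset (Fin 2 → ℤ) := Fintype.piFinset fun _ => Finset.Icc (-(M : ℤ)) M

lemma mem_intBox {M : ℕ} {n : Fin 2 → ℤ} : n ∈ intBox M ↔ ∀ i, |n i| ≤ M := by
  simp [intBox, Fintype.mem_piFinset, abs_le]

lemma tendsto_intBox : Filter.Tendsto intBox Filter.atTop Filter.atTop := by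
  refine Filter.tendsto_atTop_finset_of_monotone (fun a b hab n hn => ?_) fun n => ?_
  · rw [mem_intBox] at hn ⊢
    exact fun i => (hn i).trans (by exact_mod_cast hab)
  · refine ⟨∑ i, (n i).natAbs, mem_intBox.2 fun i => ?_⟩
    rw [Int.abs_eq_natAbs]
    exact_mod_cast Finset.single_le_sum (f := fun i => (n i).natAbs) (fun _ _ => Nat.zero_le _)
      (Finset.mem_univ i)

/-- The number of translates of `x` by the vectors of `intBox M` which lie in `B`. -/
def translateCount (M : ℕ) (B : Set (Fin 2 → ℝ)) (x : Fin 2 → ℝ) : ℝ :=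
  ∑ n ∈ intBox M, B.indicator 1 (x + intVec n)

lemma measurable_translateCount (M : ℕ) {B : Set (Fin 2 → ℝ)} (hB : MeasurableSet B) :
    Measurable (translateCount M B) :=
  Finset.measurable_sum _ fun _ _ =>
    (measurable_one.indicator hB).comp (measurable_id.add_const _)

lemma translateCount_nonneg (M : ℕ) (B : Set (Fin 2 → ℝ)) (x : Fin 2 → ℝ) :
    0 ≤ translateCount M B x :=
  Finset.sum_nonneg fun _ _ => indicator_nonneg (fun _ _ => zero_le_one) _

lemma norm_translateCount_le (M : ℕ) (B : Set (Fin 2 → ℝ)) (x : Fin 2 → ℝ) :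
    ‖translateCount M B x‖ ≤ (intBox M).card := by
  rw [Real.norm_of_nonneg (translateCount_nonneg M B x), translateCount]
  refine (Finset.sum_le_card_nsmul _ _ 1 fun n _ => ?_).trans (by simp)
  exact indicator_le_self' (fun _ _ => zero_le_one) _

lemma translateCount_le_translateCount {M : ℕ} {B B' : Set (Fin 2 → ℝ)} {x y : Fin 2 → ℝ}
    (h : ∀ n, x + intVec n ∈ B → y + intVec n ∈ B') :
    translateCount M B x ≤ translateCount M B' y := by
  refine Finset.sum_le_sum fun n _ => ?_
  by_cases hx : x + intVec n ∈ B
  · rw [indicator_of_mem hx, indicator_of_mem (h n hx)]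
    exact le_refl (1 : ℝ)
  · rw [indicator_of_notMem hx]
    exact indicator_nonneg (fun _ _ => zero_le_one) _

lemma latticeCount_eq_translateCount {S : Set E2} {M : ℕ} (hM : ∀ x ∈ S, ∀ i, |x i| ≤ M) :
    (latticeCount S : ℝ) = translateCount M (coordSet S) 0 := by
  classical
  have hset : {k : Fin 2 → ℤ | ek k ∈ S} = ↑((intBox M).filter fun k => ek k ∈ S) := by
    ext k
    simp only [mem_ofPred_eq, Finset.coe_filter, iff_and_self, mem_intBox]
    intro hk i
    have hki : |(k i : ℝ)| ≤ M := hM _ hk i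
    exact_mod_cast hki
  rw [latticeCount, hset, Nat.card_coe_set_eq, Set.ncard_coe_finset, Finset.card_filter,
    translateCount]
  push_cast
  refine Finset.sum_congr rfl fun k _ => ?_
  rw [indicator_apply, zero_add]
  rfl

lemma mem_square_intVec_iff {n : Fin 2 → ℤ} {x : Fin 2 → ℝ} :
    x ∈ square (intVec n) 1 ↔ ∀ i, n i = ⌈x i⌉ - 1 := by
  rw [square, mem_univ_pi]
  refine forall_congr' fun i => ?_
  rw [eq_sub_iff_add_eq, eq_comm, Int.ceil_eq_iff, mem_Ioc, intVec]
  push_cast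
  rw [add_sub_cancel_right]

lemma disjoint_square_intVec {n m : Fin 2 → ℤ} (h : n ≠ m) :
    Disjoint (square (intVec n) 1) (square (intVec m) 1) := by
  refine Set.disjoint_left.2 fun x hn hm => h (funext fun i => ?_)
  rw [mem_square_intVec_iff.1 hn i, mem_square_intVec_iff.1 hm i]

lemma subset_biUnion_square_intVec {M : ℕ} {B : Set (Fin 2 → ℝ)}
    (hBM : ∀ x ∈ B, ∀ i, |x i| + 1 ≤ M) : B ⊆ ⋃ n ∈ intBox M, square (intVec n) 1 := by
  refine fun x hx => mem_iUnion₂.2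
    ⟨fun i => ⌈x i⌉ - 1, mem_intBox.2 fun i => ?_, mem_square_intVec_iff.2 fun _ => rfl⟩
  have hxi : |x i| ≤ M - 1 := by linarith [hBM x hx i]
  obtain ⟨hlow, hupp⟩ := abs_le.1 hxi
  have hceil : |((⌈x i⌉ - 1 : ℤ) : ℝ)| ≤ M := by
    push_cast
    exact abs_le.2 ⟨by linarith [Int.le_ceil (x i)], by linarith [Int.ceil_lt_add_one (x i)]⟩
  exact_mod_cast hceil

lemma setIntegral_square_comp_add (a v : Fin 2 → ℝ) (s : ℝ) (f : (Fin 2 → ℝ) → ℂ) :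
    ∫ x in square a s, f (x + v) = ∫ y in square (a + v) s, f y := by
  have hpre : (fun x => x + v) ⁻¹' square (a + v) s = square a s := by
    ext x
    simp only [square, mem_preimage, mem_univ_pi, Pi.add_apply, add_right_comm _ (v _),
      mem_Ioc, add_lt_add_iff_right, add_le_add_iff_right]
  rw [← hpre]
  exact (measurePreserving_add_right volume v).setIntegral_preimage_emb
    (measurableEmbedding_addRight _) _ _

lemma integrable_indicator_planeChar {M : ℝ} {B : Set (Fin 2 → ℝ)} (hB : MeasurableSet B)
    (hBM : ∀ x ∈ B, ∀ i, |x i| ≤ M) (k : Fin 2 → ℤ) : Integrable (B.indicator (planeChar k)) := by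
  have hsub : B ⊆ univ.pi fun _ => Icc (-M) M := fun x hx i _ => abs_le.1 (hBM x hx i)
  have hcompact : IsCompact (univ.pi fun _ : Fin 2 => Icc (-M) M) :=
    isCompact_univ_pi fun _ => isCompact_Icc
  rw [integrable_indicator_iff hB]
  exact ((continuous_planeChar k).continuousOn.integrableOn_compact hcompact).mono_set hsub

lemma planeChar_mul_translateCount (M : ℕ) (B : Set (Fin 2 → ℝ)) (k : Fin 2 → ℤ)
    (x : Fin 2 → ℝ) :
    planeChar k x * (translateCount M B x : ℂ) =
      ∑ n ∈ intBox M, B.indicator (planeChar k) (x + intVec n) := by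
  rw [translateCount, Complex.ofReal_sum, Finset.mul_sum]
  refine Finset.sum_congr rfl fun n _ => ?_
  by_cases h : x + intVec n ∈ B
  · simp [h, planeChar_add, planeChar_intVec]
  · simp [h]

lemma setIntegral_planeChar_mul_translateCount {M : ℕ} {B : Set (Fin 2 → ℝ)}
    (hB : MeasurableSet B) (hBM : ∀ x ∈ B, ∀ i, |x i| + 1 ≤ M) (k : Fin 2 → ℤ) :
    ∫ x in square 0 1, planeChar k x * (translateCount M B x : ℂ) = ∫ y in B, planeChar k y := by
  have hint := integrable_indicator_planeChar hB (M := M)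
    (fun x hx i => by linarith [hBM x hx i]) k
  simp_rw [planeChar_mul_translateCount]
  rw [integral_finsetSum _ fun n _ => (hint.comp_add_right (intVec n)).integrableOn]
  simp_rw [setIntegral_square_comp_add, zero_add]
  rw [← integral_biUnion_finset _ (fun n _ => measurableSet_square _ _)
      (fun _ _ _ _ hab => disjoint_square_intVec hab) (fun n _ => hint.integrableOn),
    setIntegral_indicator hB, inter_eq_right.2 (subset_biUnion_square_intVec hBM)]

/-- The Fourier coefficients of the normalized indicator function of `(0, δ]²`. -/
def squareCoeff (δ : ℝ) (k : Fin 2 → ℤ) : ℂ := (δ ^ 2)⁻¹ * ∫ x in square 0 δ, planeChar k x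

lemma measureReal_square (a : Fin 2 → ℝ) {s : ℝ} (hs : 0 ≤ s) :
    volume.real (square a s) = s ^ 2 := by
  rw [measureReal_def, volume_square a hs, ENNReal.toReal_ofReal (by positivity)]

lemma squareCoeff_zero {δ : ℝ} (hδ : 0 < δ) : squareCoeff δ 0 = 1 := by
  have hδ' : (δ : ℂ) ≠ 0 := by exact_mod_cast hδ.ne'
  simp [squareCoeff, planeChar_zero, measureReal_square 0 hδ.le, hδ']

lemma setIntegral_square_planeChar (δ : ℝ) (k : Fin 2 → ℤ) :
    ∫ x in square 0 δ, planeChar k x =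
      ∏ i, ∫ u in Ioc 0 δ, osc (-(2 * Real.pi * k i)) u := by
  have hprod : ∀ x, planeChar k x = ∏ i, osc (-(2 * Real.pi * k i)) (x i) := fun x => by
    rw [planeChar, Fin.prod_univ_two, osc, osc, osc, ← Complex.exp_add]
    congr 1
    push_cast
    ring
  simp_rw [hprod]
  rw [square, volume_pi, Measure.restrict_pi_pi,
    integral_fintype_prod_eq_prod (𝕜 := ℂ) (fun i => osc (-(2 * Real.pi * k i)))]
  simp

lemma norm_setIntegral_Ioc_osc_le {δ : ℝ} (hδ : 0 ≤ δ) (l : ℝ) :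
    ‖∫ u in Ioc 0 δ, osc l u‖ ≤ δ := by
  refine (norm_setIntegral_le_of_norm_le_const (C := 1) (by simp)
    fun u _ => (norm_osc l u).le).trans ?_
  simp [hδ]

lemma norm_setIntegral_Ioc_osc_le_two_div {δ : ℝ} (hδ : 0 ≤ δ) {l : ℝ} (hl : l ≠ 0) :
    ‖∫ u in Ioc 0 δ, osc l u‖ ≤ 2 / |l| := by
  rw [← intervalIntegral.integral_of_le hδ, integral_osc hl, norm_div, norm_mul, Complex.norm_I,
    one_mul, Complex.norm_real, Real.norm_eq_abs]
  gcongr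
  exact (norm_sub_le _ _).trans_eq (by rw [norm_osc, norm_osc]; norm_num)

lemma norm_squareCoeff {δ : ℝ} (k : Fin 2 → ℤ) :
    ‖squareCoeff δ k‖ = (δ ^ 2)⁻¹ * ∏ i, ‖∫ u in Ioc 0 δ, osc (-(2 * Real.pi * k i)) u‖ := by
  rw [squareCoeff, setIntegral_square_planeChar, norm_mul, norm_prod, Complex.norm_real,
    Real.norm_of_nonneg (by positivity)]

lemma norm_squareCoeff_le {δ : ℝ} (hδ : 0 < δ) (k : Fin 2 → ℤ) : ‖squareCoeff δ k‖ ≤ 1 := by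
  rw [norm_squareCoeff, inv_mul_le_iff₀ (by positivity), mul_one, Fin.prod_univ_two, pow_two]
  gcongr <;> exact norm_setIntegral_Ioc_osc_le hδ.le _

lemma norm_squareCoeff_mul_le {δ : ℝ} (hδ : 0 < δ) (k : Fin 2 → ℤ) (i : Fin 2) :
    ‖squareCoeff δ k‖ * (δ * |(k i : ℝ)|) ≤ 1 := by
  rcases eq_or_ne (k i) 0 with h | h
  · simp [h]
  have hk : (0 : ℝ) < |(k i : ℝ)| := by simpa using h
  have hi : ‖∫ u in Ioc 0 δ, osc (-(2 * Real.pi * k i)) u‖ ≤ 1 / |(k i : ℝ)| := by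
    refine (norm_setIntegral_Ioc_osc_le_two_div hδ.le (by simp [h, Real.pi_ne_zero])).trans ?_
    rw [abs_neg, abs_mul, abs_of_pos Real.two_pi_pos, div_le_div_iff₀ (by positivity) hk]
    nlinarith [Real.pi_gt_three]
  have hprod : ∏ j, ‖∫ u in Ioc 0 δ, osc (-(2 * Real.pi * k j)) u‖ ≤ 1 / |(k i : ℝ)| * δ := by
    rw [← Finset.mul_prod_erase _ _ (Finset.mem_univ i)]
    gcongr
    refine (Finset.prod_le_prod (fun _ _ => norm_nonneg _)
      fun j _ => norm_setIntegral_Ioc_osc_le hδ.le _).trans_eq ?_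
    simp
  rw [norm_squareCoeff]
  calc ((δ ^ 2)⁻¹ * ∏ j, ‖∫ u in Ioc 0 δ, osc (-(2 * Real.pi * k j)) u‖) * (δ * |(k i : ℝ)|)
      ≤ (δ ^ 2)⁻¹ * (1 / |(k i : ℝ)| * δ) * (δ * |(k i : ℝ)|) := by gcongr
    _ = 1 := by field_simp

/-- The average over `x ∈ (0, δ]²` of the number of points of `x + ℤ²` in `B`, provided that
`M` is large in terms of `B`. -/
def meanCount (δ : ℝ) (M : ℕ) (B : Set (Fin 2 → ℝ)) : ℝ :=
  (δ ^ 2)⁻¹ * ∫ x in square 0 δ, translateCount M B x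

section MeanCount

variable {δ : ℝ} {M : ℕ} {B : Set (Fin 2 → ℝ)}

lemma integrableOn_translateCount (hδ : 0 ≤ δ) (hB : MeasurableSet B) :
    IntegrableOn (translateCount M B) (square 0 δ) := by
  refine Measure.integrableOn_of_bounded (M := (intBox M).card) ?_
    (measurable_translateCount M hB).aestronglyMeasurable
    (.of_forall (norm_translateCount_le M B))
  rw [volume_square 0 hδ]
  finiteness

lemma meanCount_le (hδ : 0 < δ) (hB : MeasurableSet B) {c : ℝ}
    (h : ∀ x ∈ square 0 δ, translateCount M B x ≤ c) : meanCount δ M B ≤ c := by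
  have hconst : IntegrableOn (fun _ => c) (square 0 δ) :=
    integrableOn_const (by rw [volume_square 0 hδ.le]; finiteness)
  have hmono := setIntegral_mono_on (integrableOn_translateCount hδ.le hB) hconst
    (measurableSet_square 0 δ) h
  rwa [setIntegral_const, measureReal_square 0 hδ.le, smul_eq_mul,
    ← inv_mul_le_iff₀ (by positivity)] at hmono

lemma le_meanCount (hδ : 0 < δ) (hB : MeasurableSet B) {c : ℝ}
    (h : ∀ x ∈ square 0 δ, c ≤ translateCount M B x) : c ≤ meanCount δ M B := by
  have hconst : IntegrableOn (fun _ => c) (square 0 δ) :=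
    integrableOn_const (by rw [volume_square 0 hδ.le]; finiteness)
  have hmono := setIntegral_mono_on hconst (integrableOn_translateCount hδ.le hB)
    (measurableSet_square 0 δ) h
  rwa [setIntegral_const, measureReal_square 0 hδ.le, smul_eq_mul,
    ← le_inv_mul_iff₀ (by positivity)] at hmono

/-- Poisson summation for the smoothed count. -/
lemma hasSum_conj_squareCoeff_mul (hδ1 : δ ≤ 1) (hB : MeasurableSet B)
    (hBM : ∀ x ∈ B, ∀ i, |x i| + 1 ≤ M) :
    HasSum (fun k => (starRingEnd ℂ) (squareCoeff δ k) * ∫ y in B, planeChar k y)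
      (meanCount δ M B : ℂ) := by
  have hsub : square 0 δ ⊆ square 0 1 :=
    pi_mono fun i _ => Ioc_subset_Ioc_right (by simpa using hδ1)
  have hsum := hasSum_conj_planeChar_mul
    (g₁ := (square 0 δ).indicator fun _ => ((δ ^ 2)⁻¹ : ℂ))
    (g₂ := fun x => (translateCount M B x : ℂ))
    (measurable_const.indicator (measurableSet_square 0 δ))
    (Complex.measurable_ofReal.comp (measurable_translateCount M hB))
    (fun x => norm_indicator_le_norm_self _ _)
    (fun x => (Complex.norm_real _).trans_le (norm_translateCount_le M B x))
  have hcoeff : ∀ k, ∫ x in square 0 1,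
      planeChar k x * (square 0 δ).indicator (fun _ => ((δ ^ 2)⁻¹ : ℂ)) x =
        squareCoeff δ k := fun k => by
    simp_rw [← indicator_mul_right]
    rw [setIntegral_indicator (measurableSet_square 0 δ), inter_eq_right.2 hsub,
      integral_mul_const, mul_comm, squareCoeff]
    push_cast
    rfl
  have hval : ∫ x in square 0 1, (starRingEnd ℂ)
      ((square 0 δ).indicator (fun _ => ((δ ^ 2)⁻¹ : ℂ)) x) * (translateCount M B x : ℂ) =
        meanCount δ M B := by
    have hconj : ∀ x, (starRingEnd ℂ) ((square 0 δ).indicator (fun _ => ((δ ^ 2)⁻¹ : ℂ)) x) *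
        (translateCount M B x : ℂ) =
          (square 0 δ).indicator (fun x => (((δ ^ 2)⁻¹ * translateCount M B x : ℝ) : ℂ)) x := by
      intro x
      by_cases hx : x ∈ square 0 δ <;> simp [hx]
    simp_rw [hconj]
    rw [setIntegral_indicator (measurableSet_square 0 δ), inter_eq_right.2 hsub,
      integral_complex_ofReal, integral_const_mul, meanCount]
  simpa only [hcoeff, hval, setIntegral_planeChar_mul_translateCount hB hBM] using hsum

end MeanCount

lemma add_add_sq_le (a b c : ℝ) : (a + b + c) ^ 2 ≤ 3 * (a ^ 2 + b ^ 2 + c ^ 2) := by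
  linarith [sq_nonneg (a - b), sq_nonneg (a - c), sq_nonneg (b - c)]

/-- The partial sums of the Fourier series of the smoothed lattice rest. -/
def restPartialSum (D : Set E2) (δ : ℝ) (j : ℕ) (t : ℝ) : ℂ :=
  ∑ k ∈ (intBox j).erase 0,
    (starRingEnd ℂ) (squareCoeff δ k) * ∫ y in coordSet (t • D), planeChar k y

namespace IsConvexDomain
variable {D : Set E2} {r R : ℝ} (hD : IsConvexDomain D r R)
include hD

lemma measurableSet_coordSet_smul {t : ℝ} (ht : t ≠ 0) : MeasurableSet (coordSet (t • D)) :=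
  (hD.isOpen.smul₀ ht).measurableSet.preimage (MeasurableEquiv.toLp 2 (Fin 2 → ℝ)).measurable

lemma abs_apply_le_of_mem_smul {t : ℝ} (ht : 0 ≤ t) {x : E2} (hx : x ∈ t • D) (i : Fin 2) :
    |x i| ≤ t * R := by
  obtain ⟨y, hy, rfl⟩ := hx
  calc |(t • y) i| ≤ ‖t • y‖ := PiLp.norm_apply_le (t • y) i
    _ = t * ‖y‖ := by rw [norm_smul, Real.norm_of_nonneg ht]
    _ ≤ t * R := mul_le_mul_of_nonneg_left (hD.norm_le y hy) ht

lemma volume_toReal_le : (volume D).toReal ≤ 4 * R ^ 2 := by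
  have hR := hD.radius_pos
  have hsub : D ⊆ Metric.closedBall 0 R := fun x hx => mem_closedBall_zero_iff.2 (hD.norm_le x hx)
  have hvol := measure_mono (μ := volume) hsub
  rw [EuclideanSpace.volume_closedBall_fin_two _ _] at hvol
  refine ENNReal.toReal_le_of_le_ofReal (by positivity) (hvol.trans ?_)
  rw [← ENNReal.ofReal_pow hR.le, ← ENNReal.ofReal_mul (by positivity), mul_comm]
  exact ENNReal.ofReal_le_ofReal (by gcongr; exact Real.pi_le_four)

lemma tendsto_restPartialSum {δ : ℝ} (hδ : 0 < δ) (hδ1 : δ ≤ 1) {t : ℝ} (ht : 0 < t) {M : ℕ}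
    (hM : t * R + 1 ≤ M) :
    Filter.Tendsto (fun j => restPartialSum D δ j t) Filter.atTop
      (nhds ((meanCount δ M (coordSet (t • D)) - t ^ 2 * (volume D).toReal : ℝ) : ℂ)) := by
  have hsum := hasSum_conj_squareCoeff_mul hδ1 (hD.measurableSet_coordSet_smul ht.ne') (M := M)
    (fun x hx i => (add_le_add_left (hD.abs_apply_le_of_mem_smul ht.le hx i) 1).trans hM)
  have hzero : (starRingEnd ℂ) (squareCoeff δ 0) * ∫ y in coordSet (t • D), planeChar 0 y =
      ((t ^ 2 * (volume D).toReal : ℝ) : ℂ) := by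
    rw [squareCoeff_zero hδ, planeChar_zero, setIntegral_coordSet]
    simp [measureReal_def, Measure.addHaar_smul, sq_nonneg]
  rw [Complex.ofReal_sub]
  refine ((hsum.comp tendsto_intBox).sub_const _).congr fun j => ?_
  rw [restPartialSum, Function.comp_apply,
    ← Finset.add_sum_erase _ _ (mem_intBox.2 (by simp) : (0 : Fin 2 → ℤ) ∈ intBox j), hzero,
    add_sub_cancel_left]

lemma add_mem_smul {s η : ℝ} (hs : 0 ≤ s) (hη : 0 < η) {x y : E2} (hx : x ∈ s • D)
    (hy : ‖y‖ < η * r) : x + y ∈ (s + η) • D := by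
  have hy' : η⁻¹ • y ∈ D := by
    apply hD.ball_subset
    rwa [mem_ball_zero_iff, norm_smul, norm_inv, Real.norm_of_nonneg hη.le, inv_mul_lt_iff₀ hη]
  rw [hD.convex.add_smul hs hη.le]
  exact Set.add_mem_add hx ⟨_, hy', smul_inv_smul₀ hη.ne' y⟩

section Sandwich

variable {δ η t : ℝ} {M : ℕ} (hδ : 0 < δ) (hη : 0 < η) (hδη : 2 * δ ≤ η * r)
include hδ hη hδη

omit hD hη in
lemma norm_toLp_lt_of_mem_square {x : Fin 2 → ℝ} (hx : x ∈ square 0 δ) :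
    ‖WithLp.toLp 2 x‖ < η * r := by
  have hi : ∀ i, |x i| ≤ δ := fun i => by
    have hxi : x i ∈ Ioc 0 δ := by simpa using hx i (mem_univ i)
    exact abs_le.2 ⟨by linarith [hxi.1], hxi.2⟩
  refine lt_of_lt_of_le ?_ hδη
  refine lt_of_pow_lt_pow_left₀ 2 (by positivity) ?_
  rw [EuclideanSpace.real_norm_sq_eq, Fin.sum_univ_two]
  nlinarith [sq_le_sq' (abs_le.1 (hi 0)).1 (abs_le.1 (hi 0)).2,
    sq_le_sq' (abs_le.1 (hi 1)).1 (abs_le.1 (hi 1)).2]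

lemma latticeCount_smul_le_meanCount (ht : 0 ≤ t) (hM : t * R ≤ M) :
    (latticeCount (t • D) : ℝ) ≤ meanCount δ M (coordSet ((t + η) • D)) := by
  refine le_meanCount hδ (hD.measurableSet_coordSet_smul (by linarith)) fun x hx => ?_
  rw [latticeCount_eq_translateCount
    fun y hy i => (hD.abs_apply_le_of_mem_smul ht hy i).trans hM]
  refine translateCount_le_translateCount fun n hn => ?_
  rw [zero_add] at hn
  have hmem := hD.add_mem_smul ht hη (x := WithLp.toLp 2 (intVec n)) hn
    (norm_toLp_lt_of_mem_square hδ hδη hx)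
  rwa [← WithLp.toLp_add, add_comm (intVec n)] at hmem

lemma meanCount_le_latticeCount_smul (hηt : η < t) (hM : t * R ≤ M) :
    meanCount δ M (coordSet ((t - η) • D)) ≤ latticeCount (t • D) := by
  have ht : 0 ≤ t := by linarith
  refine meanCount_le hδ (hD.measurableSet_coordSet_smul (by linarith)) fun x hx => ?_
  rw [latticeCount_eq_translateCount
    fun y hy i => (hD.abs_apply_le_of_mem_smul ht hy i).trans hM]
  refine translateCount_le_translateCount fun n hn => ?_
  have hmem := hD.add_mem_smul (s := t - η) (by linarith) hη (x := WithLp.toLp 2 (x + intVec n))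
    hn (y := WithLp.toLp 2 (-x))
    (by rw [WithLp.toLp_neg, norm_neg]; exact norm_toLp_lt_of_mem_square hδ hδη hx)
  rwa [← WithLp.toLp_add, sub_add_cancel, add_neg_cancel_comm, ← zero_add (intVec n)] at hmem

lemma abs_latticeRest_le_of_sandwich (hηt : η < t) (hM : t * R ≤ M) :
    |latticeRest D t| ≤
      |meanCount δ M (coordSet ((t + η) • D)) - (t + η) ^ 2 * (volume D).toReal| +
        |meanCount δ M (coordSet ((t - η) • D)) - (t - η) ^ 2 * (volume D).toReal| +
        (2 * t * η + η ^ 2) * (4 * R ^ 2) := by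
  have ht : 0 < t := hη.trans hηt
  have hupper := hD.latticeCount_smul_le_meanCount hδ hη hδη ht.le hM
  have hlower := hD.meanCount_le_latticeCount_smul hδ hη hδη hηt hM
  have harea : (2 * t * η + η ^ 2) * (volume D).toReal ≤ (2 * t * η + η ^ 2) * (4 * R ^ 2) :=
    mul_le_mul_of_nonneg_left hD.volume_toReal_le (by positivity)
  have hsq : 0 ≤ η ^ 2 * (volume D).toReal := by positivity
  set v := (volume D).toReal
  set a₁ := meanCount δ M (coordSet ((t + η) • D)) - (t + η) ^ 2 * v
  set a₂ := meanCount δ M (coordSet ((t - η) • D)) - (t - η) ^ 2 * v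
  rw [latticeRest, abs_le]
  constructor
  · linarith [neg_abs_le a₂, abs_nonneg a₁]
  · linarith [le_abs_self a₁, abs_nonneg a₂]

lemma exists_tendsto_restPartialSum_and_sq_latticeRest_le (hδ1 : δ ≤ 1) (hηt : η < t) :
    ∃ p₁ p₂ : ℂ,
      Filter.Tendsto (fun j => restPartialSum D δ j (t + η)) Filter.atTop (nhds p₁) ∧
      Filter.Tendsto (fun j => restPartialSum D δ j (t - η)) Filter.atTop (nhds p₂) ∧
      latticeRest D t ^ 2 ≤
        3 * (‖p₁‖ ^ 2 + ‖p₂‖ ^ 2 + ((2 * t * η + η ^ 2) * (4 * R ^ 2)) ^ 2) := by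
  have hR := hD.radius_pos
  obtain ⟨M, hM⟩ := exists_nat_ge ((t + η) * R + 1)
  have hM₂ : (t - η) * R + 1 ≤ M := le_trans (by gcongr; linarith) hM
  refine ⟨_, _, hD.tendsto_restPartialSum hδ hδ1 (by linarith) hM,
    hD.tendsto_restPartialSum hδ hδ1 (by linarith) hM₂, ?_⟩
  have hrest := hD.abs_latticeRest_le_of_sandwich hδ hη hδη hηt (M := M)
    (by linarith [mul_pos hη hR])
  rw [Complex.norm_real, Complex.norm_real, Real.norm_eq_abs, Real.norm_eq_abs,
    ← sq_abs (latticeRest D t)]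
  refine (pow_le_pow_left₀ (abs_nonneg _) hrest 2).trans ?_
  exact add_add_sq_le _ _ _

end Sandwich

end IsConvexDomain

/-! ### Mean squares of the partial sums over unit windows -/

/-- The amplitude of the frequency `freq D σ k` in the Fourier series with coefficients `c`. -/
def wave (D : Set E2) (σ : ℝ) (c : (Fin 2 → ℤ) → ℂ) (k : Fin 2 → ℤ) (t : ℝ) : ℂ :=
  c k * ((t : ℂ) ^ 2 * capAmp D (σ + (latticePt k).arg) (2 * Real.pi * t * ‖latticePt k‖))

/-- Half of the Fourier series: the contribution of the boundary points with outer normal `k`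
rotated by `σ`. -/
def halfSum (D : Set E2) (σ : ℝ) (c : (Fin 2 → ℤ) → ℂ) (S : Finset (Fin 2 → ℤ)) (t : ℝ) : ℂ :=
  ∑ k ∈ S, osc (-(2 * Real.pi * freq D σ k)) t * wave D σ c k t

/-- The constant in the mean square bound for `halfSum`: the product of the large sieve constant,
the amplitude constant and the constant in the multiplicity bound. -/
def windowConst (r R : ℝ) : ℝ := 130 * (128 * (1 + R ^ 2) * (4 / r ^ 2 * (1 + 4 * R) ^ 2))

lemma windowConst_pos {r R : ℝ} (hr : 0 < r) (hR : 0 < R) : 0 < windowConst r R := by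
  rw [windowConst]; positivity

namespace IsConvexDomain
variable {D : Set E2} {r R : ℝ} (hD : IsConvexDomain D r R)
include hD

lemma restPartialSum_eq_halfSum_add (δ : ℝ) (j : ℕ) {t : ℝ} (ht : 0 < t) :
    restPartialSum D δ j t =
      halfSum D 0 (fun k => starRingEnd ℂ (squareCoeff δ k)) ((intBox j).erase 0) t +
      starRingEnd ℂ (halfSum D Real.pi (squareCoeff δ) ((intBox j).erase 0) t) := by
  rw [restPartialSum, halfSum, halfSum, map_sum, ← Finset.sum_add_distrib]
  refine Finset.sum_congr rfl fun k hk => ?_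
  have hk1 := one_le_norm_latticePt (Finset.ne_of_mem_erase hk)
  have hl : 2 * Real.pi * t * ‖latticePt k‖ ≠ 0 := by have := Real.pi_pos; positivity
  have hosc (H : ℝ) : osc (-(2 * Real.pi * t * ‖latticePt k‖)) H =
      osc (-(2 * Real.pi * (‖latticePt k‖ * H))) t := by
    rw [osc, osc]; congr 3; ring
  rw [setIntegral_planeChar_smul D k ht, hD.integral_turned_osc _ hl, wave, wave, freq, freq,
    supportFn, supportFn, zero_add, add_comm Real.pi, hosc, hosc]
  simp only [map_mul, map_pow, Complex.conj_ofReal]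
  ring

lemma sq_mul_norm_capAmp_sq_le {φ N T t x : ℝ} (hN : 1 ≤ N)
    (h : ∀ α ∈ Ioc 0 1, secondDiff (height D) φ α + R * α ^ 2 ≤ N * α ^ 2) (hT : 1 ≤ T)
    (ht : t ∈ Icc T (T + 1)) (hx : 1 ≤ x) :
    (t ^ 2 * ‖capAmp D φ (2 * Real.pi * t * x)‖) ^ 2 ≤ 15 * (T * N / x ^ 3) := by
  have ht1 : 1 ≤ t := hT.trans ht.1
  have ht2 : t ≤ 2 * T := by linarith [ht.2]
  have hpi : (27 : ℝ) ≤ Real.pi ^ 3 :=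
    (by norm_num : (27 : ℝ) = 3 ^ 3).trans_le
      (pow_le_pow_left₀ (by norm_num) Real.pi_gt_three.le 3)
  have hl : 2 * Real.pi ≤ 2 * Real.pi * t * x := by
    rw [mul_assoc (2 * Real.pi)]
    exact le_mul_of_one_le_right Real.two_pi_pos.le (one_le_mul_of_one_le_of_one_le ht1 hx)
  have hamp := hD.norm_capAmp_sq_le hN h hl
  have := Real.pi_pos
  calc (t ^ 2 * ‖capAmp D φ (2 * Real.pi * t * x)‖) ^ 2
      = (t ^ 2) ^ 2 * ‖capAmp D φ (2 * Real.pi * t * x)‖ ^ 2 := mul_pow _ _ _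
    _ ≤ (t ^ 2) ^ 2 * (1600 * N / (2 * Real.pi * t * x) ^ 3) := by gcongr
    _ = (200 / Real.pi ^ 3) * (t * N / x ^ 3) := by field_simp; ring
    _ ≤ (15 / 2) * (2 * T * N / x ^ 3) := by
      have : 200 / Real.pi ^ 3 ≤ 15 / 2 := by rw [div_le_iff₀ (by positivity)]; linarith
      gcongr
    _ = 15 * (T * N / x ^ 3) := by ring

lemma hasDerivAt_wave (σ : ℝ) (c : (Fin 2 → ℤ) → ℂ) {k : Fin 2 → ℤ} (hk : k ≠ 0) {t : ℝ}
    (ht : 0 < t) : HasDerivAt (wave D σ c k)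
      (c k * (2 * t * capAmp D (σ + (latticePt k).arg) (2 * Real.pi * t * ‖latticePt k‖) +
        (t : ℂ) ^ 2 * ((2 * Real.pi * ‖latticePt k‖) •
          capAmpDeriv D (σ + (latticePt k).arg) (2 * Real.pi * t * ‖latticePt k‖)))) t := by
  have hk1 := one_le_norm_latticePt hk
  have hl : 2 * Real.pi * t * ‖latticePt k‖ ≠ 0 := by have := Real.pi_pos; positivity
  have hlin : HasDerivAt (fun t : ℝ => 2 * Real.pi * t * ‖latticePt k‖)
      (2 * Real.pi * ‖latticePt k‖) t := by
    simpa using ((hasDerivAt_id t).const_mul (2 * Real.pi)).mul_const ‖latticePt k‖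
  have hsq : HasDerivAt (fun t : ℝ => (t : ℂ) ^ 2) (2 * t) t :=
    ((hasDerivAt_id t).ofReal_comp.pow 2).congr_deriv (by simp)
  exact (hsq.mul ((hD.hasDerivAt_capAmp _ hl).scomp t hlin)).const_mul (c k)

lemma norm_sq_mul_capAmpDeriv_le (φ : ℝ) {t x : ℝ} (ht : 0 < t) (hx : 0 < x) :
    ‖(t : ℂ) ^ 2 * ((2 * Real.pi * x) • capAmpDeriv D φ (2 * Real.pi * t * x))‖ ≤ 8 * R / x := by
  have hpi := Real.pi_gt_three
  have hR := hD.radius_pos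
  have hbound := hD.norm_capAmpDeriv_le φ (l := 2 * Real.pi * t * x) (by positivity)
  rw [norm_mul, norm_smul, norm_pow, Complex.norm_real, Real.norm_of_nonneg ht.le,
    Real.norm_of_nonneg (by positivity)]
  calc t ^ 2 * (2 * Real.pi * x * ‖capAmpDeriv D φ (2 * Real.pi * t * x)‖)
      ≤ t ^ 2 * (2 * Real.pi * x * (48 * R / (2 * Real.pi * t * x) ^ 2)) := by gcongr
    _ = 24 / Real.pi * R / x := by field_simp; ring
    _ ≤ 8 * R / x := by
      gcongr
      rw [div_le_iff₀ (by positivity)]; linarith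

lemma continuousOn_halfSum (σ : ℝ) (c : (Fin 2 → ℤ) → ℂ) {S : Finset (Fin 2 → ℤ)}
    (hS : ∀ k ∈ S, k ≠ 0) : ContinuousOn (halfSum D σ c S) (Ioi 0) :=
  continuousOn_finsetSum _ fun k hk _ ht => ((continuous_osc _).continuousAt.mul
    (hD.hasDerivAt_wave σ c (hS k hk) ht).continuousAt).continuousWithinAt

lemma continuousOn_restPartialSum (δ : ℝ) (j : ℕ) :
    ContinuousOn (restPartialSum D δ j) (Ioi 0) :=
  ((hD.continuousOn_halfSum _ _ fun _ => Finset.ne_of_mem_erase).add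
    (Complex.continuous_conj.comp_continuousOn
      (hD.continuousOn_halfSum _ _ fun _ => Finset.ne_of_mem_erase))).congr
    fun _ ht => hD.restPartialSum_eq_halfSum_add δ j ht

section Window
variable {σ T t N : ℝ} (c : (Fin 2 → ℤ) → ℂ) {k : Fin 2 → ℤ} (hk : k ≠ 0) (hN : 1 ≤ N)
  (h : ∀ α ∈ Ioc 0 1,
    secondDiff (height D) (σ + (latticePt k).arg) α + R * α ^ 2 ≤ N * α ^ 2)
  (hT : 1 ≤ T) (ht : t ∈ Icc T (T + 1))
include hk hN h hT ht

lemma norm_sq_wave_le : ‖wave D σ c k t‖ ^ 2 ≤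
    ‖c k‖ ^ 2 * (128 * (T * N / ‖latticePt k‖ ^ 3 + R ^ 2 / ‖latticePt k‖ ^ 2)) := by
  have hamp := hD.sq_mul_norm_capAmp_sq_le hN h hT ht (one_le_norm_latticePt hk)
  have hmain : 0 ≤ T * N / ‖latticePt k‖ ^ 3 := by positivity
  have htail : 0 ≤ R ^ 2 / ‖latticePt k‖ ^ 2 := by positivity
  rw [wave, norm_mul, norm_mul, norm_pow, Complex.norm_real, Real.norm_eq_abs, sq_abs, mul_pow]
  gcongr
  linarith

lemma norm_sq_deriv_wave_le : ‖deriv (wave D σ c k) t‖ ^ 2 ≤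
    ‖c k‖ ^ 2 * (128 * (T * N / ‖latticePt k‖ ^ 3 + R ^ 2 / ‖latticePt k‖ ^ 2)) := by
  have ht1 : 1 ≤ t := hT.trans ht.1
  have hx := one_le_norm_latticePt hk
  have hamp := hD.sq_mul_norm_capAmp_sq_le hN h hT ht hx
  have hmain : 0 ≤ T * N / ‖latticePt k‖ ^ 3 := by positivity
  rw [(hD.hasDerivAt_wave σ c hk (by linarith)).deriv, norm_mul, mul_pow]
  set A := capAmp D (σ + (latticePt k).arg) (2 * Real.pi * t * ‖latticePt k‖)
  have hfirst : ‖2 * (t : ℂ) * A‖ ≤ 2 * (t ^ 2 * ‖A‖) := by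
    rw [norm_mul, norm_mul, Complex.norm_real, Real.norm_of_nonneg (by linarith),
      Complex.norm_two, mul_assoc]
    gcongr
    exact le_self_pow₀ ht1 two_ne_zero
  have hsum := pow_le_pow_left₀ (norm_nonneg _) ((norm_add_le _ _).trans
    (add_le_add hfirst (hD.norm_sq_mul_capAmpDeriv_le (σ + (latticePt k).arg)
      (t := t) (x := ‖latticePt k‖) (by linarith) (by linarith)))) 2
  have htail : (8 * R / ‖latticePt k‖) ^ 2 = 64 * (R ^ 2 / ‖latticePt k‖ ^ 2) := by
    rw [div_pow]; ring
  gcongr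
  linarith [add_sq_le (a := 2 * (t ^ 2 * ‖A‖)) (b := 8 * R / ‖latticePt k‖)]

end Window

/-- The squared amplitudes `T N / |k|³` are multiplied by the number `O(|k|)` of lattice vectors
sharing the frequency of `k`. -/
lemma lintegral_enorm_sq_halfSum_le (σ : ℝ) (c : (Fin 2 → ℤ) → ℂ) {S : Finset (Fin 2 → ℤ)}
    (hS : ∀ k ∈ S, k ≠ 0) {T : ℝ} (hT : 1 ≤ T)
    (hfin : ∀ k ∈ S, curvMajorant D R (σ + (latticePt k).arg) ≠ ∞) :
    ∫⁻ t in Ioc T (T + 1), ‖halfSum D σ c S t‖ₑ ^ 2 ≤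
      ENNReal.ofReal (windowConst r R * ∑ k ∈ S,
        ‖c k‖ ^ 2 * ((curvMajorant D R (σ + (latticePt k).arg)).toReal * T / ‖latticePt k‖ ^ 2 +
          1 / ‖latticePt k‖)) := by
  set N : (Fin 2 → ℤ) → ℝ := fun k => (curvMajorant D R (σ + (latticePt k).arg)).toReal
  have hN (k) (hk : k ∈ S) : 1 ≤ N k := hD.one_le_toReal_curvMajorant (hfin k hk)
  have hcurv (k) (hk : k ∈ S) (α : ℝ) (hα : α ∈ Ioc 0 1) :=
    hD.secondDiff_height_add_le (hfin k hk) hα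
  refine (lintegral_enorm_sq_sum_osc_real_mul_le
    (fun k hk t ht => (hD.hasDerivAt_wave σ c (hS k hk)
      (by linarith [ht.1])).differentiableAt)
    (fun k hk t ht => hD.norm_sq_wave_le c (hS k hk) (hN k hk) (hcurv k hk) hT ht)
    (fun k hk t ht => hD.norm_sq_deriv_wave_le c (hS k hk) (hN k hk) (hcurv k hk) hT ht)).trans
    (ENNReal.ofReal_le_ofReal ?_)
  rw [windowConst, mul_assoc 130]
  refine mul_le_mul_of_nonneg_left ?_ (by norm_num)
  rw [Finset.mul_sum]
  refine Finset.sum_le_sum fun k hk => ?_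
  have : 0 ≤ N k := by linarith [hN k hk]
  have hx := one_le_norm_latticePt (hS k hk)
  set x := ‖latticePt k‖
  calc _ ≤ 4 / r ^ 2 * (1 + 4 * R) ^ 2 * x *
        (‖c k‖ ^ 2 * (128 * (T * N k / x ^ 3 + R ^ 2 / x ^ 2))) :=
        mul_le_mul_of_nonneg_right (hD.fiberCard_floor_freq_le σ S (hS k hk)) (by positivity)
    _ = 128 * (4 / r ^ 2 * (1 + 4 * R) ^ 2) * ‖c k‖ ^ 2 *
        (1 * (N k * T / x ^ 2) + R ^ 2 * (1 / x)) := by field_simp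
    _ ≤ 128 * (4 / r ^ 2 * (1 + 4 * R) ^ 2) * ‖c k‖ ^ 2 *
        ((1 + R ^ 2) * (N k * T / x ^ 2) + (1 + R ^ 2) * (1 / x)) := by
        gcongr
        · exact le_add_of_nonneg_right (sq_nonneg R)
        · exact le_add_of_nonneg_left zero_le_one
    _ = _ := by ring

end IsConvexDomain

/-! ### Dyadic weights -/

/-- The maximum norm of an integer vector. -/
def supNorm (k : Fin 2 → ℤ) : ℕ := max (k 0).natAbs (k 1).natAbs

/-- The exponent `m` of the dyadic shell `2 ^ m ≤ supNorm k < 2 ^ (m + 1)` containing `k`. -/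
def dyadicLevel (k : Fin 2 → ℤ) : ℕ := Nat.log 2 (supNorm k)

/-- The weight of `k` in the curvature sum: a vector of dyadic level `m` has weight
`4^{-m} (m+1)^{-p}`, so that a shell has total weight `O((m+1)^{-p})`. -/
def dyadicWeight (p : ℝ) (k : Fin 2 → ℤ) : ℝ :=
  ((4 : ℝ) ^ dyadicLevel k * ((dyadicLevel k : ℝ) + 1) ^ p)⁻¹

lemma dyadicWeight_pos (p : ℝ) (k : Fin 2 → ℤ) : 0 < dyadicWeight p k := by
  unfold dyadicWeight; positivity

lemma exists_supNorm_eq (k : Fin 2 → ℤ) : ∃ i, (supNorm k : ℝ) = |(k i : ℝ)| := by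
  rcases max_choice (k 0).natAbs (k 1).natAbs with h | h
  · exact ⟨0, by rw [supNorm, h, Nat.cast_natAbs, Int.cast_abs]⟩
  · exact ⟨1, by rw [supNorm, h, Nat.cast_natAbs, Int.cast_abs]⟩

lemma supNorm_le_norm_latticePt (k : Fin 2 → ℤ) : (supNorm k : ℝ) ≤ ‖latticePt k‖ := by
  obtain ⟨i, hi⟩ := exists_supNorm_eq k
  rw [hi]
  fin_cases i
  · exact Complex.abs_re_le_norm (latticePt k)
  · exact Complex.abs_im_le_norm (latticePt k)

lemma supNorm_ne_zero {k : Fin 2 → ℤ} (hk : k ≠ 0) : supNorm k ≠ 0 := by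
  obtain ⟨i, hi⟩ := Function.ne_iff.1 hk
  have hi0 : (k i).natAbs ≠ 0 := Int.natAbs_ne_zero.2 hi
  rw [supNorm]
  fin_cases i <;> simp only [Fin.zero_eta, Fin.mk_one] at hi0 <;> omega

lemma exists_add_one_rpow_le_mul_two_pow (p : ℝ) :
    ∃ C : ℝ, 0 ≤ C ∧ ∀ m : ℕ, ((m : ℝ) + 1) ^ p ≤ C * 2 ^ m := by
  obtain ⟨q, hq⟩ := exists_nat_ge p
  obtain ⟨B, hB⟩ :=
    (tendsto_pow_const_div_const_pow_of_one_lt q (one_lt_two (α := ℝ))).bddAbove_range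
  have hquot (m : ℕ) : ((m + 1 : ℕ) : ℝ) ^ q / 2 ^ (m + 1) ≤ B := hB ⟨m + 1, rfl⟩
  have hB0 : 0 ≤ B := le_trans (by positivity) (hquot 0)
  refine ⟨B * 2, by positivity, fun m => ?_⟩
  calc ((m : ℝ) + 1) ^ p ≤ ((m : ℝ) + 1) ^ (q : ℝ) :=
        Real.rpow_le_rpow_of_exponent_le (by linarith [Nat.cast_nonneg (α := ℝ) m]) hq
    _ = ((m + 1 : ℕ) : ℝ) ^ q := by rw [Real.rpow_natCast]; push_cast; rfl
    _ ≤ B * 2 ^ (m + 1) := (div_le_iff₀ (by positivity)).1 (hquot m)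
    _ = B * 2 * 2 ^ m := by ring

lemma one_le_two_mul_log {R : ℝ} (hR : 2 ≤ R) : 1 ≤ 2 * Real.log R := by
  have h2 := Real.log_two_gt_d9
  linarith [Real.log_le_log two_pos hR]

lemma one_le_two_rpow_mul_log_rpow {p R : ℝ} (hp : 0 ≤ p) (hR : 2 ≤ R) :
    1 ≤ 2 ^ p * Real.log R ^ p := by
  rw [← Real.mul_rpow zero_le_two (Real.log_nonneg (by linarith))]
  exact Real.one_le_rpow (one_le_two_mul_log hR) hp

/-! ### Bounds for a single term of the mean square

In the next lemmas `x` is the modulus of a Fourier coefficient of the smoothing kernel and `n` the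
maximum norm of the frequency. For `n ≤ R` the bound `x ≤ 1` suffices, as the logarithm of `n` is at
most that of `R`; for `n > R` the decay of `x` is used. -/

section Coefficient
variable {p r R n N x : ℝ} {m : ℕ}

lemma sq_mul_le_of_le (hp : 0 ≤ p) (hR : 2 ≤ R) (hN : 0 ≤ N) (hx0 : 0 ≤ x) (hx : x ≤ 1)
    (hmn : 2 ^ m ≤ n) (hnR : n ≤ R) :
    x ^ 2 * (N * (4 * R / n ^ 2 + 1 / n)) ≤
      5 * 3 ^ p * (R * Real.log R ^ p) * ((4 ^ m * ((m : ℝ) + 1) ^ p)⁻¹ * N) := by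
  have hn : 0 < n := lt_of_lt_of_le (by positivity) hmn
  have hlevel : ((m : ℝ) + 1) ^ p ≤ 3 ^ p * Real.log R ^ p := by
    rw [← Real.mul_rpow (by norm_num) (Real.log_nonneg (by linarith))]
    refine Real.rpow_le_rpow (by positivity) ?_ hp
    have hlog : (m : ℝ) * Real.log 2 ≤ Real.log R := by
      rw [← Real.log_pow]
      exact Real.log_le_log (by positivity) (hmn.trans hnR)
    nlinarith [Real.log_two_gt_d9, Real.log_le_log two_pos hR]
  have hinv : 1 / n ≤ R / n ^ 2 := by
    rw [div_le_div_iff₀ hn (by positivity)]; nlinarith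
  have hfour : (4 : ℝ) ^ m ≤ n ^ 2 := by
    calc (4 : ℝ) ^ m = (2 ^ m) ^ 2 := by rw [← pow_mul, mul_comm, pow_mul]; norm_num
      _ ≤ n ^ 2 := by gcongr
  calc x ^ 2 * (N * (4 * R / n ^ 2 + 1 / n)) ≤ 1 * (N * (4 * R / n ^ 2 + R / n ^ 2)) := by
        gcongr
        exact pow_le_one₀ hx0 hx
    _ = 5 * R * N / n ^ 2 := by ring
    _ ≤ 5 * R * N / 4 ^ m := by gcongr
    _ = 5 * (R * ((m : ℝ) + 1) ^ p) * ((4 ^ m * ((m : ℝ) + 1) ^ p)⁻¹ * N) := by field_simp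
    _ ≤ 5 * (R * (3 ^ p * Real.log R ^ p)) * ((4 ^ m * ((m : ℝ) + 1) ^ p)⁻¹ * N) := by gcongr
    _ = 5 * 3 ^ p * (R * Real.log R ^ p) * ((4 ^ m * ((m : ℝ) + 1) ^ p)⁻¹ * N) := by ring

lemma sq_mul_le_of_lt {B : ℝ} (hp : 0 ≤ p) (hr : 0 < r) (hR : 2 ≤ R) (hN : 0 ≤ N) (hx0 : 0 ≤ x)
    (hx : x * (r / (2 * √R) * n) ≤ 1) (hB : ((m : ℝ) + 1) ^ p ≤ B * 2 ^ m)
    (hmn : 2 ^ m ≤ n) (hRn : R < n) :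
    x ^ 2 * (N * (4 * R / n ^ 2 + 1 / n)) ≤
      20 * B * 2 ^ p / r ^ 2 * (R * Real.log R ^ p) * ((4 ^ m * ((m : ℝ) + 1) ^ p)⁻¹ * N) := by
  have hn : 0 < n := by linarith
  have hB0 : 0 ≤ B := nonneg_of_mul_nonneg_left (le_trans (by positivity) hB) (by positivity)
  have hdecay : x ^ 2 ≤ 4 * R / (r ^ 2 * n ^ 2) := by
    have : 0 < √R := Real.sqrt_pos.2 (by linarith)
    calc x ^ 2 = (x * (r / (2 * √R) * n)) ^ 2 * (4 * √R ^ 2 / (r ^ 2 * n ^ 2)) := by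
          field_simp; ring
      _ ≤ 1 * (4 * √R ^ 2 / (r ^ 2 * n ^ 2)) := by
          gcongr
          exact pow_le_one₀ (by positivity) hx
      _ = 4 * R / (r ^ 2 * n ^ 2) := by rw [one_mul, Real.sq_sqrt (by linarith)]
  have hinv : 4 * R / n ^ 2 ≤ 4 / n := by
    rw [div_le_div_iff₀ (by positivity) hn]; nlinarith
  have hcube : (4 : ℝ) ^ m * 2 ^ m ≤ n ^ 3 := by
    calc (4 : ℝ) ^ m * 2 ^ m = (2 ^ m) ^ 3 := by
          rw [← mul_pow, ← pow_mul, mul_comm m, pow_mul]; norm_num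
      _ ≤ n ^ 3 := by gcongr
  set q : ℝ := ((m : ℝ) + 1) ^ p
  have hq : 0 < q := by positivity
  calc x ^ 2 * (N * (4 * R / n ^ 2 + 1 / n))
      ≤ 4 * R / (r ^ 2 * n ^ 2) * (N * (4 / n + 1 / n)) := by gcongr
    _ = 20 * R * N / r ^ 2 / n ^ 3 := by field_simp; ring
    _ ≤ 20 * R * N / r ^ 2 / (4 ^ m * 2 ^ m) := by gcongr
    _ = 20 * R / r ^ 2 * (q / 2 ^ m) * ((4 ^ m * q)⁻¹ * N) := by field_simp
    _ ≤ 20 * R / r ^ 2 * B * ((4 ^ m * q)⁻¹ * N) := by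
      gcongr
      exact (div_le_iff₀ (by positivity)).2 hB
    _ ≤ 20 * R / r ^ 2 * B * ((4 ^ m * q)⁻¹ * N) * (2 ^ p * Real.log R ^ p) :=
      le_mul_of_one_le_right (by positivity) (one_le_two_rpow_mul_log_rpow hp hR)
    _ = 20 * B * 2 ^ p / r ^ 2 * (R * Real.log R ^ p) * ((4 ^ m * q)⁻¹ * N) := by ring

lemma exists_sq_mul_le_dyadicWeight_mul (hp : 0 ≤ p) (hr : 0 < r) : ∃ C : ℝ, 0 < C ∧
    ∀ (R T N x : ℝ) (k : Fin 2 → ℤ), 2 ≤ R → T ≤ 4 * R → 1 ≤ N → 0 ≤ x → x ≤ 1 → k ≠ 0 →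
      (∀ i, x * (r / (2 * √R) * |(k i : ℝ)|) ≤ 1) →
      x ^ 2 * (N * T / ‖latticePt k‖ ^ 2 + 1 / ‖latticePt k‖) ≤
        C * (R * Real.log R ^ p) * (dyadicWeight p k * N) := by
  obtain ⟨B, hB0, hB⟩ := exists_add_one_rpow_le_mul_two_pow p
  refine ⟨5 * 3 ^ p + 20 * B * 2 ^ p / r ^ 2, by positivity, ?_⟩
  intro R T N x k hR hTR hN hx hx1 hk hxk
  have hnk := supNorm_le_norm_latticePt k
  have hmn : (2 : ℝ) ^ dyadicLevel k ≤ supNorm k :=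
    mod_cast Nat.pow_log_le_self 2 (supNorm_ne_zero hk)
  obtain ⟨i, hi⟩ := exists_supNorm_eq k
  have hxi := hi ▸ hxk i
  set n : ℝ := (supNorm k : ℝ)
  have hn : 0 < n := lt_of_lt_of_le (by positivity) hmn
  have hlog : 0 ≤ Real.log R := Real.log_nonneg (by linarith)
  have hw := (dyadicWeight_pos p k).le
  calc x ^ 2 * (N * T / ‖latticePt k‖ ^ 2 + 1 / ‖latticePt k‖)
      ≤ x ^ 2 * (N * (4 * R / n ^ 2 + 1 / n)) := by
        rw [mul_add N, ← mul_div_assoc]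
        gcongr
        exact (one_div_le_one_div_of_le hn hnk).trans
          (le_mul_of_one_le_left (by positivity) hN)
    _ ≤ 5 * 3 ^ p * (R * Real.log R ^ p) * (dyadicWeight p k * N) +
        20 * B * 2 ^ p / r ^ 2 * (R * Real.log R ^ p) * (dyadicWeight p k * N) := by
        rcases le_or_gt n R with hnR | hnR
        · exact (sq_mul_le_of_le hp hR (by linarith) hx hx1 hmn hnR).trans
            (le_add_of_nonneg_right (by positivity))
        · exact (sq_mul_le_of_lt hp hr hR (by linarith) hx hxi (hB _) hmn hnR).trans
            (le_add_of_nonneg_left (by positivity))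
    _ = _ := by ring

end Coefficient

/-! ### The mean square discrepancy of one domain -/

/-- The curvature sum controlling the mean square discrepancy of `D`. The term `k = 0`, where the
argument is `0` by convention, only enlarges the sum and keeps it at least `1`. -/
def curvSum (p : ℝ) (D : Set E2) (R : ℝ) : ℝ≥0∞ :=
  ∑' k, ENNReal.ofReal (dyadicWeight p k) *
    (curvMajorant D R (latticePt k).arg + curvMajorant D R (Real.pi + (latticePt k).arg))

lemma one_le_curvSum (p : ℝ) (D : Set E2) {R : ℝ} (hR : 0 ≤ R) : 1 ≤ curvSum p D R := by
  have hw : dyadicWeight p 0 = 1 := by simp [dyadicWeight, dyadicLevel, supNorm]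
  have hmaj (φ : ℝ) : 1 ≤ curvMajorant D R φ :=
    (ENNReal.one_le_ofReal.2 (by linarith)).trans le_add_self
  refine le_trans ?_ (ENNReal.le_tsum 0)
  rw [hw, ENNReal.ofReal_one, one_mul]
  exact (hmaj _).trans le_self_add

lemma IsConvexDomain.lintegral_enorm_sq_restPartialSum_le_halfSum {D : Set E2} {r R : ℝ}
    (hD : IsConvexDomain D r R) (δ : ℝ) (j : ℕ) {a b : ℝ} (ha : 0 ≤ a) :
    ∫⁻ t in Ioc a b, ‖restPartialSum D δ j t‖ₑ ^ 2 ≤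
      2 * ((∫⁻ t in Ioc a b, ‖halfSum D 0 (fun k => starRingEnd ℂ (squareCoeff δ k))
          ((intBox j).erase 0) t‖ₑ ^ 2) +
        ∫⁻ t in Ioc a b, ‖halfSum D Real.pi (squareCoeff δ) ((intBox j).erase 0) t‖ₑ ^ 2) := by
  have hpos (t) (ht : t ∈ Ioc a b) : 0 < t := ha.trans_lt ht.1
  have hcont := hD.continuousOn_halfSum 0 (fun k => starRingEnd ℂ (squareCoeff δ k))
    (S := (intBox j).erase 0) fun _ hk => Finset.ne_of_mem_erase hk
  rw [← lintegral_add_left' (((hcont.mono hpos).aemeasurable measurableSet_Ioc).enorm.pow_const 2),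
    ← lintegral_const_mul' _ _ ENNReal.ofNat_ne_top]
  refine setLIntegral_mono' measurableSet_Ioc fun t ht => ?_
  rw [hD.restPartialSum_eq_halfSum_add δ j (hpos t ht)]
  refine (pow_le_pow_left₀ zero_le (enorm_add_le _ _) 2).trans ?_
  rw [RCLike.enorm_conj]
  exact ennreal_add_sq_le _ _

section Constants
variable {p r R₀ : ℝ} (hp : 0 ≤ p) (hr : 0 < r) (hR₀ : 0 < R₀)
include hp hr hR₀

lemma exists_lintegral_enorm_sq_halfSum_le : ∃ C : ℝ, 0 < C ∧
    ∀ D : Set E2, IsConvexDomain D r R₀ → ∀ R T : ℝ, 2 ≤ R → 1 ≤ T → T ≤ 4 * R →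
    ∀ (σ : ℝ) (c : (Fin 2 → ℤ) → ℂ), (∀ k, ‖c k‖ ≤ 1) →
      (∀ k i, ‖c k‖ * (r / (2 * √R) * |(k i : ℝ)|) ≤ 1) →
    ∀ S : Finset (Fin 2 → ℤ), (∀ k ∈ S, k ≠ 0) →
      ∫⁻ t in Ioc T (T + 1), ‖halfSum D σ c S t‖ₑ ^ 2 ≤
        ENNReal.ofReal (C * (R * Real.log R ^ p)) * ∑ k ∈ S,
          ENNReal.ofReal (dyadicWeight p k) * curvMajorant D R₀ (σ + (latticePt k).arg) := by
  obtain ⟨C, hC0, hC⟩ := exists_sq_mul_le_dyadicWeight_mul hp hr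
  have hK := windowConst_pos hr hR₀
  refine ⟨windowConst r R₀ * C, by positivity, fun D hD R T hR hT hTR σ c hc hcδ S hS => ?_⟩
  have hRL : 0 < R * Real.log R ^ p := by
    have : 0 < Real.log R := Real.log_pos (by linarith)
    positivity
  have hw (k) : 0 < ENNReal.ofReal (dyadicWeight p k) :=
    ENNReal.ofReal_pos.2 (dyadicWeight_pos p k)
  by_cases hfin : ∀ k ∈ S, curvMajorant D R₀ (σ + (latticePt k).arg) ≠ ∞
  · refine (hD.lintegral_enorm_sq_halfSum_le σ c hS hT hfin).trans ?_
    have hsum : ∑ k ∈ S, ENNReal.ofReal (dyadicWeight p k) *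
        curvMajorant D R₀ (σ + (latticePt k).arg) = ENNReal.ofReal (∑ k ∈ S,
          dyadicWeight p k * (curvMajorant D R₀ (σ + (latticePt k).arg)).toReal) := by
      rw [ENNReal.ofReal_sum_of_nonneg
        fun k _ => mul_nonneg (dyadicWeight_pos p k).le ENNReal.toReal_nonneg]
      refine Finset.sum_congr rfl fun k hk => ?_
      rw [ENNReal.ofReal_mul (dyadicWeight_pos p k).le, ENNReal.ofReal_toReal (hfin k hk)]
    rw [hsum, ← ENNReal.ofReal_mul (by positivity), mul_assoc (windowConst r R₀),
      mul_assoc (windowConst r R₀)]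
    refine ENNReal.ofReal_le_ofReal (mul_le_mul_of_nonneg_left ?_ hK.le)
    rw [Finset.mul_sum]
    exact Finset.sum_le_sum fun k hk => hC R T _ ‖c k‖ k hR hTR
      (hD.one_le_toReal_curvMajorant (hfin k hk)) (norm_nonneg _) (hc k) (hS k hk) (hcδ k)
  · push Not at hfin
    obtain ⟨k, hk, htop⟩ := hfin
    rw [ENNReal.sum_eq_top.2 ⟨k, hk, by rw [htop, ENNReal.mul_top (hw k).ne']⟩,
      ENNReal.mul_top (ENNReal.ofReal_pos.2 (by positivity)).ne']
    exact le_top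

lemma exists_lintegral_unitWindow_restPartialSum_le : ∃ C : ℝ, 0 < C ∧
    ∀ D : Set E2, IsConvexDomain D r R₀ → ∀ R T : ℝ, 2 ≤ R → 1 ≤ T → T ≤ 4 * R → ∀ j : ℕ,
      ∫⁻ t in Ioc T (T + 1), ‖restPartialSum D (r / (2 * √R)) j t‖ₑ ^ 2 ≤
        ENNReal.ofReal (C * (R * Real.log R ^ p)) * curvSum p D R₀ := by
  obtain ⟨C, hC0, hC⟩ := exists_lintegral_enorm_sq_halfSum_le hp hr hR₀
  refine ⟨2 * C, by positivity, fun D hD R T hR hT hTR j => ?_⟩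
  have hδ : 0 < r / (2 * √R) := div_pos hr (mul_pos two_pos (Real.sqrt_pos.2 (by linarith)))
  set δ := r / (2 * √R)
  set S := (intBox j).erase 0
  set c := fun k => starRingEnd ℂ (squareCoeff δ k)
  set E := ENNReal.ofReal (C * (R * Real.log R ^ p))
  have hS (k) (hk : k ∈ S) : k ≠ 0 := Finset.ne_of_mem_erase hk
  calc ∫⁻ t in Ioc T (T + 1), ‖restPartialSum D δ j t‖ₑ ^ 2
      ≤ 2 * ((∫⁻ t in Ioc T (T + 1), ‖halfSum D 0 c S t‖ₑ ^ 2) +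
          ∫⁻ t in Ioc T (T + 1), ‖halfSum D Real.pi (squareCoeff δ) S t‖ₑ ^ 2) :=
        hD.lintegral_enorm_sq_restPartialSum_le_halfSum δ j (by linarith)
    _ ≤ 2 * (E * ∑ k ∈ S, ENNReal.ofReal (dyadicWeight p k) *
            curvMajorant D R₀ (0 + (latticePt k).arg) +
          E * ∑ k ∈ S, ENNReal.ofReal (dyadicWeight p k) *
            curvMajorant D R₀ (Real.pi + (latticePt k).arg)) := by
        gcongr
        · exact hC D hD R T hR hT hTR 0 c
            (fun k => (RCLike.norm_conj _).trans_le (norm_squareCoeff_le hδ k))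
            (fun k i => (RCLike.norm_conj (squareCoeff δ k)).symm ▸
              norm_squareCoeff_mul_le hδ k i) S hS
        · exact hC D hD R T hR hT hTR Real.pi _ (norm_squareCoeff_le hδ)
            (norm_squareCoeff_mul_le hδ) S hS
    _ = 2 * E * ∑ k ∈ S, ENNReal.ofReal (dyadicWeight p k) *
          (curvMajorant D R₀ (latticePt k).arg +
            curvMajorant D R₀ (Real.pi + (latticePt k).arg)) := by
        simp only [zero_add, mul_add, Finset.sum_add_distrib, mul_assoc]
    _ ≤ ENNReal.ofReal (2 * C * (R * Real.log R ^ p)) * curvSum p D R₀ := by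
        rw [mul_assoc 2 C, ENNReal.ofReal_mul zero_le_two, ENNReal.ofReal_ofNat]
        gcongr
        exact ENNReal.sum_le_tsum S

end Constants

lemma lintegral_Ioc_le_natCeil_mul {f : ℝ → ℝ≥0∞} {T h : ℝ} {A : ℝ≥0∞}
    (hA : ∀ a ∈ Ico T (T + h), ∫⁻ t in Ioc a (a + 1), f t ≤ A) :
    ∫⁻ t in Ioc T (T + h), f t ≤ ⌈h⌉₊ * A := by
  have hcover : Ioc T (T + h) ⊆ ⋃ i : Fin ⌈h⌉₊, Ioc (T + (i : ℕ)) (T + (i : ℕ) + 1) := by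
    intro t ht
    have hpos : 0 < ⌈t - T⌉₊ := Nat.ceil_pos.2 (by linarith [ht.1])
    obtain ⟨i, hi⟩ := Nat.exists_eq_add_one.2 hpos
    have hle := Nat.le_ceil (t - T)
    have hlt := Nat.ceil_lt_add_one (a := t - T) (by linarith [ht.1])
    have hceil : ⌈t - T⌉₊ ≤ ⌈h⌉₊ := Nat.ceil_le_ceil (by linarith [ht.2])
    rw [hi, Nat.cast_succ] at hle hlt
    refine mem_iUnion.2 ⟨⟨i, by omega⟩, ?_, ?_⟩ <;> dsimp only <;> linarith
  calc ∫⁻ t in Ioc T (T + h), f t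
      ≤ ∫⁻ t in ⋃ i : Fin ⌈h⌉₊, Ioc (T + (i : ℕ)) (T + (i : ℕ) + 1), f t :=
        lintegral_mono_set hcover
    _ ≤ ∑ i : Fin ⌈h⌉₊, ∫⁻ t in Ioc (T + (i : ℕ)) (T + (i : ℕ) + 1), f t := by
        rw [← tsum_fintype (L := .unconditional _)]
        exact lintegral_iUnion_le _ _
    _ ≤ ∑ _i : Fin ⌈h⌉₊, A := by
        refine Finset.sum_le_sum fun i _ => hA _ ⟨?_, ?_⟩
        · exact le_add_of_nonneg_right (Nat.cast_nonneg _)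
        · exact add_lt_add_right (Nat.lt_ceil.1 i.2) T
    _ = ⌈h⌉₊ * A := by
        rw [Finset.sum_const, Finset.card_univ, Fintype.card_fin, nsmul_eq_mul]

lemma exists_lintegral_restPartialSum_le {p r R₀ : ℝ} (hp : 0 ≤ p) (hr : 0 < r) (hR₀ : 0 < R₀) :
    ∃ C : ℝ, 0 < C ∧ ∀ D : Set E2, IsConvexDomain D r R₀ → ∀ R T h : ℝ, 2 ≤ R → 1 ≤ T → 1 ≤ h →
      T + h ≤ 4 * R → ∀ j : ℕ,
      ∫⁻ t in Ioc T (T + h), ‖restPartialSum D (r / (2 * √R)) j t‖ₑ ^ 2 ≤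
        ENNReal.ofReal (h * (C * (R * Real.log R ^ p))) * curvSum p D R₀ := by
  obtain ⟨C, hC0, hC⟩ := exists_lintegral_unitWindow_restPartialSum_le hp hr hR₀
  refine ⟨2 * C, by positivity, fun D hD R T h hR hT hh hTh j => ?_⟩
  have hlog : 0 ≤ Real.log R := Real.log_nonneg (by linarith)
  have hceil : (⌈h⌉₊ : ℝ) ≤ 2 * h := by
    linarith [Nat.ceil_lt_add_one (a := h) (by linarith)]
  refine (lintegral_Ioc_le_natCeil_mul fun a ha =>
    hC D hD R a hR (hT.trans ha.1) (by linarith [ha.2]) j).trans ?_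
  rw [← mul_assoc, ← ENNReal.ofReal_natCast, ← ENNReal.ofReal_mul (Nat.cast_nonneg _)]
  refine mul_le_mul_left (ENNReal.ofReal_le_ofReal ?_) _
  calc (⌈h⌉₊ : ℝ) * (C * (R * Real.log R ^ p)) ≤ 2 * h * (C * (R * Real.log R ^ p)) := by gcongr
    _ = h * (2 * C * (R * Real.log R ^ p)) := by ring

lemma setLIntegral_Ioc_comp_add_right (f : ℝ → ℝ≥0∞) (a b c : ℝ) :
    ∫⁻ t in Ioc a b, f (t + c) = ∫⁻ t in Ioc (a + c) (b + c), f t := by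
  have h := (measurePreserving_add_right volume c).setLIntegral_comp_preimage_emb
    (measurableEmbedding_addRight c) f (Ioc (a + c) (b + c))
  rw [← h, preimage_add_const_Ioc, add_sub_cancel_right, add_sub_cancel_right]

section Smoothing
variable {D : Set E2} {r R₀ δ η : ℝ} (hD : IsConvexDomain D r R₀)
  (hδ : 0 < δ) (hη : 0 < η) (hδη : 2 * δ ≤ η * r) (hδ1 : δ ≤ 1)
include hD hδ hη hδη hδ1

namespace IsConvexDomain

lemma enorm_sq_latticeRest_le_liminf {t : ℝ} (hηt : η < t) :
    ‖latticeRest D t‖ₑ ^ 2 ≤ Filter.liminf (fun j =>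
      3 * (‖restPartialSum D δ j (t + η)‖ₑ ^ 2 + ‖restPartialSum D δ j (t - η)‖ₑ ^ 2 +
        ENNReal.ofReal (((2 * t * η + η ^ 2) * (4 * R₀ ^ 2)) ^ 2))) Filter.atTop := by
  obtain ⟨p₁, p₂, hp₁, hp₂, hle⟩ :=
    hD.exists_tendsto_restPartialSum_and_sq_latticeRest_le hδ hη hδη hδ1 hηt
  have hlim {u : ℝ} {z : ℂ}
      (hz : Filter.Tendsto (fun j => restPartialSum D δ j u) Filter.atTop (nhds z)) :
      Filter.Tendsto (fun j => ‖restPartialSum D δ j u‖ₑ ^ 2) Filter.atTop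
        (nhds (ENNReal.ofReal (‖z‖ ^ 2))) := by
    rw [ENNReal.ofReal_pow (norm_nonneg _), ofReal_norm]
    exact ((ENNReal.continuous_pow 2).tendsto _).comp hz.enorm
  rw [(ENNReal.Tendsto.const_mul (((hlim hp₁).add (hlim hp₂)).add tendsto_const_nhds)
    (Or.inr ENNReal.ofNat_ne_top)).liminf_eq,
    ← ENNReal.ofReal_add (by positivity) (by positivity),
    ← ENNReal.ofReal_add (by positivity) (by positivity), ← ENNReal.ofReal_ofNat 3,
    ← ENNReal.ofReal_mul (by norm_num), ← enorm_pow, Real.enorm_of_nonneg (sq_nonneg _)]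
  exact ENNReal.ofReal_le_ofReal hle

lemma lintegral_enorm_sq_latticeRest_le {a h E : ℝ} {X : ℝ≥0∞} (hηa : η ≤ a)
    (hE : ∀ t ∈ Ioc a (a + h), ((2 * t * η + η ^ 2) * (4 * R₀ ^ 2)) ^ 2 ≤ E)
    (hX₁ : ∀ j, ∫⁻ t in Ioc (a + η) (a + η + h), ‖restPartialSum D δ j t‖ₑ ^ 2 ≤ X)
    (hX₂ : ∀ j, ∫⁻ t in Ioc (a - η) (a - η + h), ‖restPartialSum D δ j t‖ₑ ^ 2 ≤ X) :
    ∫⁻ t in Ioc a (a + h), ‖latticeRest D t‖ₑ ^ 2 ≤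
      3 * (X + X + ENNReal.ofReal E * ENNReal.ofReal h) := by
  set P : ℕ → ℝ → ℝ≥0∞ := fun j t => ‖restPartialSum D δ j t‖ₑ ^ 2 with hP
  have hmeas (j : ℕ) {c : ℝ} (hc : -a ≤ c) :
      AEMeasurable (fun t => P j (t + c)) (volume.restrict (Ioc a (a + h))) :=
    (((hD.continuousOn_restPartialSum δ j).comp (by fun_prop) fun t ht =>
      show 0 < t + c by linarith [ht.1]).aemeasurable measurableSet_Ioc).enorm.pow_const 2
  have hmeas₁ (j : ℕ) := hmeas j (c := η) (by linarith)
  have hmeas₂ (j : ℕ) := hmeas j (c := -η) (by linarith)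
  have hpt (t : ℝ) (ht : t ∈ Ioc a (a + h)) : ‖latticeRest D t‖ₑ ^ 2 ≤ Filter.liminf
      (fun j => 3 * (P j (t + η) + P j (t + -η) + ENNReal.ofReal E)) Filter.atTop := by
    refine (hD.enorm_sq_latticeRest_le_liminf hδ hη hδη hδ1 (hηa.trans_lt ht.1)).trans
      (Filter.liminf_le_liminf (Filter.Eventually.of_forall fun j => ?_))
    simp only [hP, ← sub_eq_add_neg]
    gcongr
    exact hE t ht
  have hint (j : ℕ) : ∫⁻ t in Ioc a (a + h), 3 * (P j (t + η) + P j (t + -η) + ENNReal.ofReal E) ≤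
      3 * (X + X + ENNReal.ofReal E * ENNReal.ofReal h) := by
    rw [lintegral_const_mul' _ _ ENNReal.ofNat_ne_top,
      lintegral_add_right _ measurable_const, lintegral_add_left' (hmeas₁ j),
      setLIntegral_Ioc_comp_add_right (P j) _ _ η, setLIntegral_Ioc_comp_add_right (P j) _ _ (-η),
      setLIntegral_const, Real.volume_Ioc, add_sub_cancel_left, add_right_comm a h η,
      add_right_comm a h (-η), ← sub_eq_add_neg]
    gcongr
    exacts [hX₁ j, hX₂ j]
  calc ∫⁻ t in Ioc a (a + h), ‖latticeRest D t‖ₑ ^ 2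
      ≤ ∫⁻ t in Ioc a (a + h), Filter.liminf
          (fun j => 3 * (P j (t + η) + P j (t + -η) + ENNReal.ofReal E)) Filter.atTop :=
        setLIntegral_mono' measurableSet_Ioc hpt
    _ ≤ Filter.liminf (fun j => ∫⁻ t in Ioc a (a + h),
          3 * (P j (t + η) + P j (t + -η) + ENNReal.ofReal E)) Filter.atTop :=
        lintegral_liminf_le' fun j =>
          (((hmeas₁ j).add (hmeas₂ j)).add aemeasurable_const).const_mul 3
    _ ≤ 3 * (X + X + ENNReal.ofReal E * ENNReal.ofReal h) :=
        (Filter.liminf_le_liminf (Filter.Eventually.of_forall hint)).trans_eq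
          (Filter.liminf_const _)

end IsConvexDomain
end Smoothing

lemma ofReal_sq_meanSquare_le (D : Set E2) (R : ℝ) {h : ℝ} (hh : 0 < h) :
    ENNReal.ofReal (meanSquare D R h ^ 2) ≤
      ENNReal.ofReal (1 / h) * ∫⁻ t in Ioc R (R + h), ‖latticeRest D t‖ₑ ^ 2 := by
  have hnonneg : 0 ≤ ∫ t in R..(R + h), latticeRest D t ^ 2 :=
    intervalIntegral.integral_nonneg (by linarith) fun t _ => sq_nonneg _
  rw [meanSquare, Real.sq_sqrt (mul_nonneg (by positivity) hnonneg),
    ENNReal.ofReal_mul (by positivity), ← Real.enorm_of_nonneg hnonneg,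
    intervalIntegral.integral_of_le (by linarith)]
  gcongr
  refine (enorm_integral_le_lintegral_enorm _).trans_eq ?_
  simp only [enorm_pow]

lemma smoothing_remainder_le {R₀ R t : ℝ} (hR : 1 ≤ R) (ht : t ∈ Icc 0 (2 * R)) :
    ((2 * t * (1 / √R) + (1 / √R) ^ 2) * (4 * R₀ ^ 2)) ^ 2 ≤ 400 * R₀ ^ 4 * R := by
  have hs : 1 ≤ √R := Real.one_le_sqrt.2 hR
  have hsR : √R ^ 2 = R := Real.sq_sqrt (by linarith)
  have ht0 := ht.1
  have hlin : 2 * t * (1 / √R) + (1 / √R) ^ 2 ≤ 5 * √R := by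
    calc 2 * t * (1 / √R) + (1 / √R) ^ 2 ≤ 2 * (2 * √R ^ 2) * (1 / √R) + 1 := by
          rw [hsR]
          gcongr
          · exact ht.2
          · exact pow_le_one₀ (by positivity) (by rwa [div_le_one (by positivity)])
      _ = 4 * √R + 1 := by field_simp; ring
      _ ≤ 5 * √R := by linarith
  calc ((2 * t * (1 / √R) + (1 / √R) ^ 2) * (4 * R₀ ^ 2)) ^ 2
      ≤ (5 * √R * (4 * R₀ ^ 2)) ^ 2 := by gcongr
    _ = 400 * R₀ ^ 4 * √R ^ 2 := by ring
    _ = 400 * R₀ ^ 4 * R := by rw [hsR]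

/-- The count is smoothed at scale `R^{-1/2}`: the smoothing then costs `O(R)` in mean square. -/
lemma exists_sq_meanSquare_le {p r R₀ : ℝ} (hp : 0 ≤ p) (hr : 0 < r) (hr1 : r ≤ 1)
    (hR₀ : 0 < R₀) :
    ∃ C : ℝ, 0 < C ∧ ∀ D : Set E2, IsConvexDomain D r R₀ → ∀ R h : ℝ, 2 ≤ R → 1 ≤ h → h ≤ R →
      ENNReal.ofReal (meanSquare D R h ^ 2) ≤
        ENNReal.ofReal (C * (R * Real.log R ^ p)) * curvSum p D R₀ := by
  obtain ⟨C, hC0, hC⟩ := exists_lintegral_restPartialSum_le hp hr hR₀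
  refine ⟨3 * (C + C + 400 * R₀ ^ 4 * 2 ^ p), by positivity, fun D hD R h hR hh hhR => ?_⟩
  have hL := one_le_two_rpow_mul_log_rpow hp hR
  have hlog : 0 ≤ Real.log R := Real.log_nonneg (by linarith)
  have hs : 1 < √R := Real.lt_sqrt zero_le_one |>.2 (by linarith)
  have hη1 : 1 / √R < 1 := (div_lt_one (by positivity)).2 hs
  have hδη : 2 * (r / (2 * √R)) = 1 / √R * r := by field_simp
  have hη0 : 0 < 1 / √R := by positivity
  set η := 1 / √R
  have hsmooth := hD.lintegral_enorm_sq_latticeRest_le (by positivity) hη0 hδη.le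
    (by nlinarith) (a := R) (h := h) (by linarith)
    (fun t ht => smoothing_remainder_le (by linarith) ⟨by linarith [ht.1], by linarith [ht.2]⟩)
    (hC D hD R (R + η) h hR (by linarith) hh (by linarith))
    (hC D hD R (R - η) h hR (by linarith) hh (by linarith))
  have hrem : ENNReal.ofReal (400 * R₀ ^ 4 * R) * ENNReal.ofReal h ≤
      ENNReal.ofReal (h * (400 * R₀ ^ 4 * 2 ^ p * (R * Real.log R ^ p))) * curvSum p D R₀ := by
    rw [← ENNReal.ofReal_mul (by positivity)]
    refine (ENNReal.ofReal_le_ofReal ?_).trans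
      (le_mul_of_one_le_right zero_le (one_le_curvSum p D hR₀.le))
    calc 400 * R₀ ^ 4 * R * h ≤ 400 * R₀ ^ 4 * R * h * (2 ^ p * Real.log R ^ p) :=
          le_mul_of_one_le_right (by positivity) hL
      _ = h * (400 * R₀ ^ 4 * 2 ^ p * (R * Real.log R ^ p)) := by ring
  calc ENNReal.ofReal (meanSquare D R h ^ 2)
      ≤ ENNReal.ofReal (1 / h) * (3 * (_ + _ + _)) :=
        (ofReal_sq_meanSquare_le D R (by linarith)).trans
          (mul_le_mul_right (hsmooth.trans (mul_le_mul_right (add_le_add_right hrem _) _)) _)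
    _ = ENNReal.ofReal (3 * (C + C + 400 * R₀ ^ 4 * 2 ^ p) * (R * Real.log R ^ p)) *
          curvSum p D R₀ := by
        rw [← add_mul, ← add_mul, ← ENNReal.ofReal_ofNat 3,
          ← ENNReal.ofReal_add (by positivity) (by positivity),
          ← ENNReal.ofReal_add (by positivity) (by positivity), ← mul_assoc, ← mul_assoc,
          ← ENNReal.ofReal_mul (by positivity), ← ENNReal.ofReal_mul (by positivity)]
        congr 2
        field_simp

/-! ### Rotations -/

section Rotation

variable (ϑ φ : ℝ) (Ω : Set E2)

lemma rot_eq_frame (x : E2) : rot ϑ x = frame ϑ (x 0, x 1) := rfl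

lemma rot_frame (p : ℝ × ℝ) : rot ϑ (frame φ p) = frame (φ + ϑ) p := by
  rw [rot_eq_frame]
  ext i
  fin_cases i
  · simp only [Fin.zero_eta, frame_zero, frame_one, Real.cos_add, Real.sin_add]
    ring
  · simp only [Fin.mk_one, frame_zero, frame_one, Real.cos_add, Real.sin_add]
    ring

lemma rot_neg_rot (x : E2) : rot (-ϑ) (rot ϑ x) = x := by
  rw [rot_eq_frame ϑ, rot_frame, add_neg_cancel]
  ext i
  fin_cases i
  · simp only [Fin.zero_eta, frame_zero, Real.cos_zero, Real.sin_zero]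
    ring
  · simp only [Fin.mk_one, frame_one, Real.cos_zero, Real.sin_zero]
    ring

lemma norm_rot (x : E2) : ‖rot ϑ x‖ = ‖x‖ := by
  rw [← sq_eq_sq₀ (norm_nonneg _) (norm_nonneg _), rot_eq_frame, norm_frame_sq,
    EuclideanSpace.norm_sq_eq, Fin.sum_univ_two, Real.norm_eq_abs, Real.norm_eq_abs, sq_abs, sq_abs]

lemma rot_image : rot ϑ '' Ω = rot (-ϑ) ⁻¹' Ω :=
  congr_fun (image_eq_preimage_of_inverse (rot_neg_rot ϑ)
    fun x => by simpa only [neg_neg] using rot_neg_rot (-ϑ) x) Ω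

lemma isLinearMap_rot : IsLinearMap ℝ (rot ϑ) where
  map_add x y := by
    have h := frame_smul_add_smul ϑ 1 1 (x 0, x 1) (y 0, y 1)
    rwa [one_smul, one_smul, one_smul, one_smul] at h
  map_smul c x := by
    have h := frame_smul_add_smul ϑ c 0 (x 0, x 1) 0
    rwa [zero_smul, zero_smul, add_zero, add_zero] at h

lemma continuous_rot : Continuous (rot ϑ) :=
  ((isLinearMap_rot ϑ).mk' _).continuous_of_finiteDimensional

lemma IsConvexDomain.rot_image {Ω : Set E2} {r R : ℝ} (hΩ : IsConvexDomain Ω r R) :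
    IsConvexDomain (rot ϑ '' Ω) r R where
  convex := hΩ.convex.is_linear_image (isLinearMap_rot ϑ)
  isOpen := by
    rw [_root_.rot_image]
    exact hΩ.isOpen.preimage (continuous_rot _)
  pos := hΩ.pos
  ball_subset := fun x hx => by
    rw [_root_.rot_image]
    refine hΩ.ball_subset ?_
    rwa [mem_ball_zero_iff, norm_rot, ← mem_ball_zero_iff]
  norm_le := forall_mem_image.2 fun x hx => (norm_rot ϑ x).trans_le (hΩ.norm_le x hx)

lemma turned_rot_image : turned (rot ϑ '' Ω) φ = turned Ω (φ - ϑ) := by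
  ext p
  rw [turned, rot_image, mem_preimage, mem_preimage, rot_frame, ← sub_eq_add_neg]
  rfl

lemma height_rot_image : height (rot ϑ '' Ω) φ = height Ω (φ - ϑ) := by
  rw [height, height, turned_rot_image]

lemma secondDiff_height_rot_image (α : ℝ) :
    secondDiff (height (rot ϑ '' Ω)) φ α = secondDiff (height Ω) (φ - ϑ) α := by
  simp only [secondDiff, height_rot_image, sub_add_eq_add_sub, sub_right_comm]

lemma curvMajorant_rot_image (R : ℝ) :
    curvMajorant (rot ϑ '' Ω) R φ = curvMajorant Ω R (φ - ϑ) := by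
  simp only [curvMajorant, curvMax, secondDiff_height_rot_image]

lemma curvSum_rot_image (p R : ℝ) : curvSum p (rot ϑ '' Ω) R =
    (∑' k, ENNReal.ofReal (dyadicWeight p k) * curvMajorant Ω R ((latticePt k).arg - ϑ)) +
      ∑' k, ENNReal.ofReal (dyadicWeight p k) *
        curvMajorant Ω R (Real.pi + (latticePt k).arg - ϑ) := by
  simp only [curvSum, curvMajorant_rot_image, mul_add, ENNReal.tsum_add]

end Rotation

lemma exists_isConvexDomain {Ω : Set E2} (hconv : Convex ℝ Ω) (hopen : IsOpen Ω)
    (hbdd : Bornology.IsBounded Ω) (h0 : (0 : E2) ∈ Ω) :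
    ∃ r R : ℝ, 0 < r ∧ r ≤ 1 ∧ 0 < R ∧ IsConvexDomain Ω r R := by
  obtain ⟨r, hr, hball⟩ := Metric.isOpen_iff.1 hopen 0 h0
  obtain ⟨R, hR, hnorm⟩ := hbdd.exists_pos_norm_le
  exact ⟨min r 1, R, lt_min hr one_pos, min_le_right _ _, hR, hconv, hopen, lt_min hr one_pos,
    (Metric.ball_subset_ball (min_le_left _ _)).trans hball, hnorm⟩

/-! ### The curvature sums of the rotated domains -/

lemma supNorm_le_iff_mem_intBox {k : Fin 2 → ℤ} {M : ℕ} : supNorm k ≤ M ↔ k ∈ intBox M := by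
  simp only [supNorm, mem_intBox, Fin.forall_fin_two, max_le_iff, Int.abs_eq_natAbs, Nat.cast_le]

lemma card_intBox (M : ℕ) : (intBox M).card = (2 * M + 1) ^ 2 := by
  rw [intBox, Fintype.card_piFinset_const, Int.card_Icc]
  congr 1
  omega

lemma tsum_comp_dyadicLevel_le (F : ℕ → ℝ≥0∞) :
    ∑' k, F (dyadicLevel k) ≤ ∑' m, 25 * 4 ^ m * F m := by
  have hsplit (k) : F (dyadicLevel k) = ∑' m, if m = dyadicLevel k then F m else 0 := by
    rw [tsum_ite_eq]
  simp only [hsplit]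
  rw [ENNReal.tsum_comm]
  refine ENNReal.tsum_le_tsum fun m => ?_
  have hshell (k) (hk : k ∉ intBox (2 ^ (m + 1))) : (if m = dyadicLevel k then F m else 0) = 0 :=
    if_neg fun hm => hk <| supNorm_le_iff_mem_intBox.1 <| by
      rw [hm]
      exact (Nat.lt_pow_succ_log_self Nat.one_lt_two _).le
  have hcard : (2 * 2 ^ (m + 1) + 1) ^ 2 ≤ 25 * 4 ^ m := calc
    (2 * 2 ^ (m + 1) + 1) ^ 2 ≤ (5 * 2 ^ m) ^ 2 :=
      Nat.pow_le_pow_left (by linarith [pow_succ 2 m, Nat.one_le_two_pow (n := m)]) 2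
    _ = 25 * 4 ^ m := by rw [mul_pow, ← pow_mul, mul_comm m, pow_mul]; norm_num
  calc ∑' k, (if m = dyadicLevel k then F m else 0)
      = ∑ k ∈ intBox (2 ^ (m + 1)), if m = dyadicLevel k then F m else 0 := tsum_eq_sum hshell
    _ ≤ (intBox (2 ^ (m + 1))).card • F m := Finset.sum_le_card_nsmul _ _ _ fun k _ => by
        split_ifs <;> simp
    _ ≤ ((25 * 4 ^ m : ℕ) : ℝ≥0∞) * F m := by
        rw [nsmul_eq_mul, card_intBox]
        gcongr
    _ = 25 * 4 ^ m * F m := by push_cast; rfl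

section Weights

variable {p : ℝ}

lemma tsum_dyadicWeight_mul_dyadicLevel_ne_top (hp : 2 < p) :
    ∑' k, ENNReal.ofReal (dyadicWeight p k) * (dyadicLevel k + 1) ≠ ∞ := by
  have hsum : Summable fun m : ℕ => 25 * ((m + 1 : ℕ) : ℝ) ^ (1 - p) :=
    ((summable_nat_add_iff 1).2 (Real.summable_nat_rpow.2 (by linarith))).mul_left 25
  refine ne_top_of_le_ne_top hsum.tsum_ofReal_ne_top ((tsum_comp_dyadicLevel_le fun m =>
    ENNReal.ofReal ((4 ^ m * ((m : ℝ) + 1) ^ p)⁻¹) * (m + 1)).trans_eq ?_)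
  congr 1 with m
  have hm : (0 : ℝ) < (m : ℝ) + 1 := by positivity
  have hcast : (25 * 4 ^ m : ℝ≥0∞) = ENNReal.ofReal (25 * 4 ^ m) := by
    rw [ENNReal.ofReal_mul (by norm_num), ENNReal.ofReal_pow (by norm_num), ENNReal.ofReal_ofNat,
      ENNReal.ofReal_ofNat]
  have hcast_add : (m + 1 : ℝ≥0∞) = ENNReal.ofReal (m + 1) := by
    rw [ENNReal.ofReal_add (by positivity) one_pos.le, ENNReal.ofReal_natCast, ENNReal.ofReal_one]
  rw [hcast, hcast_add, ← ENNReal.ofReal_mul (by positivity), ← ENNReal.ofReal_mul (by positivity)]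
  congr 1
  push_cast
  rw [Real.rpow_sub hm, Real.rpow_one]
  have := Real.rpow_pos_of_pos hm p
  field_simp

lemma exists_le_two_pow_mul_dyadicWeight (p : ℝ) {S : ℝ≥0∞} (hS : S ≠ ∞) :
    ∃ n : ℕ, ∀ k, S ≤ 2 ^ (n + 3 * dyadicLevel k) * ENNReal.ofReal (dyadicWeight p k) := by
  obtain ⟨C, -, hC⟩ := exists_add_one_rpow_le_mul_two_pow p
  obtain ⟨n, hn⟩ := pow_unbounded_of_one_lt (S.toReal * C) (one_lt_two (α := ℝ))
  refine ⟨n, fun k => ?_⟩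
  have hreal : S.toReal ≤ 2 ^ (n + 3 * dyadicLevel k) * dyadicWeight p k := by
    rw [dyadicWeight, ← div_eq_mul_inv, le_div_iff₀ (by positivity)]
    calc S.toReal * (4 ^ dyadicLevel k * ((dyadicLevel k : ℝ) + 1) ^ p)
        ≤ S.toReal * (4 ^ dyadicLevel k * (C * 2 ^ dyadicLevel k)) := by gcongr; exact hC _
      _ = S.toReal * C * 8 ^ dyadicLevel k := by
          rw [show (8 : ℝ) = 4 * 2 by norm_num, mul_pow]; ring
      _ ≤ 2 ^ n * 8 ^ dyadicLevel k := by gcongr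
      _ = 2 ^ (n + 3 * dyadicLevel k) := by rw [pow_add, pow_mul]; norm_num
  rw [← ENNReal.ofReal_toReal hS]
  refine (ENNReal.ofReal_le_ofReal hreal).trans_eq ?_
  rw [ENNReal.ofReal_mul (by positivity), ENNReal.ofReal_pow zero_le_two, ENNReal.ofReal_ofNat]

lemma exists_weakL1Bound_tsum_dyadicWeight (hp : 2 < p) {V : ℝ≥0∞} (hV : V ≠ ∞) :
    ∃ B ≠ ∞, ∀ {X : Type*} [MeasurableSpace X] {μ : Measure X} {F : (Fin 2 → ℤ) → X → ℝ≥0∞},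
      (∀ k, Measurable (F k)) → (∀ k, WeakL1Bound μ (F k) V) →
        WeakL1Bound μ (fun x => ∑' k, ENNReal.ofReal (dyadicWeight p k) * F k x) B := by
  set w := fun k => ENNReal.ofReal (dyadicWeight p k)
  have hentropy : ∑' k, w k * (dyadicLevel k + 1) ≠ ∞ :=
    tsum_dyadicWeight_mul_dyadicLevel_ne_top hp
  have hw : ∑' k, w k ≠ ∞ := ne_top_of_le_ne_top hentropy <|
    ENNReal.tsum_le_tsum fun k => le_mul_of_one_le_right' le_add_self
  have hw2 : 2 * ∑' k, w k ≠ ∞ := ENNReal.mul_ne_top ENNReal.ofNat_ne_top hw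
  obtain ⟨n, hn⟩ := exists_le_two_pow_mul_dyadicWeight p hw2
  have hwn : ∑' k, w k * (n + 3 * dyadicLevel k : ℕ) ≠ ∞ := by
    refine ne_top_of_le_ne_top
      (ENNReal.mul_ne_top (ENNReal.natCast_ne_top (n + 3)) hentropy) ?_
    rw [← ENNReal.tsum_mul_left]
    refine ENNReal.tsum_le_tsum fun k => ?_
    rw [mul_left_comm]
    gcongr
    norm_cast
    nlinarith
  exact ⟨_, ENNReal.add_ne_top.2 ⟨ENNReal.mul_ne_top hV hw,
    ENNReal.mul_ne_top ENNReal.ofNat_ne_top (ENNReal.mul_ne_top hV hwn)⟩,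
    fun hFm hF => WeakL1Bound.tsum hF hFm hw hn⟩

end Weights

lemma map_const_sub_restrict_Icc_le {a b c u v : ℝ} (hu : u ≤ c - b) (hv : c - a ≤ v) :
    (volume.restrict (Icc a b)).map (fun ϑ => c - ϑ) ≤ volume.restrict (Icc u v) := by
  have hpre : Icc a b ⊆ (fun ϑ => c - ϑ) ⁻¹' Icc u v := fun ϑ hϑ =>
    ⟨by linarith [hϑ.2], by linarith [hϑ.1]⟩
  refine (Measure.map_mono (Measure.restrict_mono hpre le_rfl) (by fun_prop)).trans_eq ?_
  exact ((Measure.measurePreserving_sub_left volume c).restrict_preimage measurableSet_Icc).map_eq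

namespace IsConvexDomain

variable {Ω : Set E2} {r R p : ℝ} (hΩ : IsConvexDomain Ω r R)
include hΩ

lemma measurable_curvMajorant_const_sub (c : ℝ) :
    Measurable fun ϑ => curvMajorant Ω R (c - ϑ) :=
  hΩ.measurable_curvMajorant.comp (measurable_const.sub measurable_id)

lemma measurable_curvSum_rot_image (p : ℝ) : Measurable fun ϑ => curvSum p (rot ϑ '' Ω) R := by
  simp only [curvSum_rot_image]
  exact (Measurable.tsum fun k => (hΩ.measurable_curvMajorant_const_sub _).const_mul _).add
    (Measurable.tsum fun k => (hΩ.measurable_curvMajorant_const_sub _).const_mul _)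

lemma exists_weakL1Bound_curvSum_rot_image (hp : 2 < p) :
    ∃ B ≠ ∞, WeakL1Bound (volume.restrict (Icc (-Real.pi) Real.pi))
      (fun ϑ => curvSum p (rot ϑ '' Ω) R) B := by
  obtain ⟨V, hV, hcurv⟩ := hΩ.exists_weakL1Bound_curvMajorant
    (S := Icc (-(2 * Real.pi)) (3 * Real.pi)) measurableSet_Icc (Metric.isBounded_Icc _ _)
  obtain ⟨B, hB, htsum⟩ := exists_weakL1Bound_tsum_dyadicWeight hp hV
  have hshift {c : ℝ} (hc : c ∈ Icc (-Real.pi) (2 * Real.pi)) :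
      WeakL1Bound (volume.restrict (Icc (-Real.pi) Real.pi))
        (fun ϑ => curvMajorant Ω R (c - ϑ)) V :=
    hcurv.comp (measurable_const.sub measurable_id)
      (map_const_sub_restrict_Icc_le (by linarith [hc.1]) (by linarith [hc.2]))
  have harg (k) : (latticePt k).arg ∈ Ioc (-Real.pi) Real.pi := Complex.arg_mem_Ioc _
  have hpi := Real.pi_pos
  refine ⟨2 * (B + B), ENNReal.mul_ne_top ENNReal.ofNat_ne_top (ENNReal.add_ne_top.2 ⟨hB, hB⟩), ?_⟩
  simp only [curvSum_rot_image]
  exact (htsum (fun k => hΩ.measurable_curvMajorant_const_sub _) fun k =>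
      hshift ⟨(harg k).1.le, by linarith [(harg k).2]⟩).add
    (htsum (fun k => hΩ.measurable_curvMajorant_const_sub _) fun k =>
      hshift ⟨by linarith [(harg k).1], by linarith [(harg k).2]⟩)

end IsConvexDomain

lemma sq_rpow_one_half (x : ℝ≥0∞) : (x ^ (1 / 2 : ℝ)) ^ 2 = x := by
  rw [← ENNReal.rpow_natCast, ← ENNReal.rpow_mul]
  norm_num

lemma WeakL1Bound.sq_mul_measure_rpow_one_half_le {X : Type*} [MeasurableSpace X] {μ : Measure X}
    {S : Set X} (hS : MeasurableSet S) {f : X → ℝ≥0∞} {V c : ℝ≥0∞}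
    (hf : WeakL1Bound (μ.restrict S) f V) (hc0 : c ≠ 0) (hc : c ≠ ∞) (s : ℝ≥0∞) :
    s ^ 2 * μ {x ∈ S | s < (c * f x) ^ (1 / 2 : ℝ)} ≤ c * V := by
  have hsub : {x ∈ S | s < (c * f x) ^ (1 / 2 : ℝ)} ⊆ {x | s ^ 2 / c < f x} ∩ S :=
    fun x hx => by
      refine ⟨ENNReal.div_lt_of_lt_mul' ?_, hx.1⟩
      rw [← sq_rpow_one_half (c * f x)]
      exact (ENNReal.pow_lt_pow_left_iff two_ne_zero).2 hx.2
  calc s ^ 2 * μ {x ∈ S | s < (c * f x) ^ (1 / 2 : ℝ)}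
      ≤ c * (s ^ 2 / c * μ.restrict S {x | s ^ 2 / c < f x}) := by
        rw [← mul_assoc, ENNReal.mul_div_cancel hc0 hc, Measure.restrict_apply' hS]
        gcongr
    _ ≤ c * V := by gcongr; exact hf _

lemma sq_sqrt_mul_log_rpow {R ε : ℝ} (hR : 1 ≤ R) :
    (√R * Real.log R ^ (1 + ε)) ^ 2 = R * Real.log R ^ (2 + 2 * ε) := by
  rw [mul_pow, Real.sq_sqrt (by linarith), ← Real.rpow_natCast,
    ← Real.rpow_mul (Real.log_nonneg hR)]
  congr 2
  push_cast
  ring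

/-- Theorem 1.4: for an arbitrary bounded open convex planar domain `Ω`
containing the origin and any `ε > 0` there is a measurable function
`𝒞 : [−π,π] → [0,∞]` of weak type `L²` (so finite a.e.) such that
`𝒢_{A_ϑΩ}(R,h) ≤ 𝒞(ϑ) √R (log R)^{1+ε}` for all `ϑ`, all `R ≥ 2` and all `1 ≤ h ≤ R`. -/
theorem statement3 (Ω : Set E2) (hconv : Convex ℝ Ω) (hopen : IsOpen Ω)
    (hbdd : Bornology.IsBounded Ω) (h0 : (0 : E2) ∈ Ω) (ε : ℝ) (hε : 0 < ε) :
    ∃ 𝒞 : ℝ → ℝ≥0∞, Measurable 𝒞 ∧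
      (∃ B : ℝ, ∀ s : ℝ, 0 < s →
        ENNReal.ofReal (s ^ 2) *
            volume {ϑ ∈ Set.Icc (-Real.pi) Real.pi | ENNReal.ofReal s < 𝒞 ϑ} ≤
          ENNReal.ofReal B) ∧
      ∀ ϑ ∈ Set.Icc (-Real.pi) Real.pi, ∀ R h : ℝ, 2 ≤ R → 1 ≤ h → h ≤ R →
        ENNReal.ofReal (meanSquare (rot ϑ '' Ω) R h) ≤
          𝒞 ϑ * ENNReal.ofReal (Real.sqrt R * Real.log R ^ ((1 : ℝ) + ε)) := by
  obtain ⟨r, R₀, hr, hr1, hR₀, hΩ⟩ := exists_isConvexDomain hconv hopen hbdd h0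
  obtain ⟨C, hC0, hmean⟩ := exists_sq_meanSquare_le (p := 2 + 2 * ε) (by linarith) hr hr1 hR₀
  obtain ⟨B, hB, hweak⟩ := hΩ.exists_weakL1Bound_curvSum_rot_image (p := 2 + 2 * ε) (by linarith)
  refine ⟨fun ϑ => (ENNReal.ofReal C * curvSum (2 + 2 * ε) (rot ϑ '' Ω) R₀) ^ (1 / 2 : ℝ),
    ((hΩ.measurable_curvSum_rot_image _).const_mul _).pow_const _,
    ⟨(ENNReal.ofReal C * B).toReal, fun s hs => ?_⟩, fun ϑ _ R h hR hh hhR => ?_⟩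
  · rw [ENNReal.ofReal_toReal (ENNReal.mul_ne_top ENNReal.ofReal_ne_top hB),
      ENNReal.ofReal_pow hs.le]
    exact hweak.sq_mul_measure_rpow_one_half_le measurableSet_Icc
      (ENNReal.ofReal_pos.2 hC0).ne' ENNReal.ofReal_ne_top _
  · have hlog : 0 < Real.log R := Real.log_pos (by linarith)
    have hms : 0 ≤ meanSquare (rot ϑ '' Ω) R h := Real.sqrt_nonneg _
    rw [← ENNReal.pow_le_pow_left_iff two_ne_zero, mul_pow, sq_rpow_one_half,
      ← ENNReal.ofReal_pow hms, ← ENNReal.ofReal_pow (by positivity),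
      sq_sqrt_mul_log_rpow (by linarith), mul_right_comm, ← ENNReal.ofReal_mul hC0.le]
    exact hmean _ (hΩ.rot_image ϑ) R h hR hh hhR

end
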